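/- arXiv:2104.14063 — 3 statements merged into one kernel-verified Lean document; each statement's English description precedes it below -/
import Mathlib

section
/- For every t1 ∈ [0,1] there exists a constant C_{t1,p} > 0 depending only on t1 and p such that, whenever N_n ≤ 1, for all t2 ≥ 0 with t2 ≤ 1 and t1 + t2 ≤ 1, and all x ≤ 0, P( S_n ≤ x · √( t1·⟨S⟩_n + t2·[S]_n + (1 − t1 − t2) ) ) − Φ(x) ≥ −C_{t1,p} · N_n^{1/(2p+1)} / (1 + |x|^{2p}). -/
open MeasureTheory Filter Finset

/-- The standard normal distribution function
`Φ(x) = (2π)^{-1/2} ∫_{-∞}^x e^{-u²/2} du`. -/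
noncomputable def stdNormalCDF (x : ℝ) : ℝ :=
  ∫ u in Set.Iic x, (Real.sqrt (2 * Real.pi))⁻¹ * Real.exp (-u ^ 2 / 2)


/-- Gaussian profile. -/
noncomputable def gaussE (z : ℝ) : ℝ := Real.exp (-z ^ 2 / 2)

/-- Polynomially decaying profile. -/
noncomputable def chiP (m : ℕ) (z : ℝ) : ℝ := ((1 + z ^ 2) ^ m)⁻¹

lemma chiP_pos (m : ℕ) (z : ℝ) : 0 < chiP m z := by unfold chiP; positivity

lemma chiP_le_one (m : ℕ) (z : ℝ) : chiP m z ≤ 1 := by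
  unfold chiP
  apply inv_le_one_of_one_le₀
  exact one_le_pow₀ (by nlinarith [sq_nonneg z])

lemma gaussE_pos (z : ℝ) : 0 < gaussE z := Real.exp_pos _

lemma gaussE_le_one (z : ℝ) : gaussE z ≤ 1 := by
  unfold gaussE; rw [Real.exp_le_one_iff]; nlinarith [sq_nonneg z]

lemma chiP_comp {m : ℕ} {z w K : ℝ} (hK : 0 < K) (h : 1 + z ^ 2 ≤ K * (1 + w ^ 2)) :
    chiP m w ≤ K ^ m * chiP m z := by
  unfold chiP
  have h1 : (1 + z ^ 2) ^ m ≤ K ^ m * (1 + w ^ 2) ^ m := by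
    rw [← mul_pow]; exact pow_le_pow_left₀ (by positivity) h m
  rw [inv_le_iff_one_le_mul₀ (by positivity)]
  rw [show K ^ m * ((1 + z ^ 2) ^ m)⁻¹ * (1 + w ^ 2) ^ m
    = (K ^ m * (1 + w ^ 2) ^ m) / (1 + z ^ 2) ^ m by field_simp]
  rw [le_div_iff₀ (by positivity)]
  linarith

lemma gaussE_decay (m j : ℕ) : ∃ B : ℝ, 0 < B ∧ ∀ z, (1 + z ^ 2) ^ j * gaussE z ≤ B * chiP m z := by
  refine ⟨2 ^ (j + m) * (j + m).factorial * Real.exp (1 / 2), by positivity, fun z => ?_⟩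
  unfold chiP gaussE
  rw [← div_eq_mul_inv, le_div_iff₀ (by positivity)]
  have h := Real.pow_div_factorial_le_exp ((1 + z ^ 2) / 2) (by positivity) (j + m)
  rw [div_le_iff₀ (by positivity), div_pow, div_le_iff₀ (by positivity)] at h
  have e : Real.exp ((1 + z ^ 2) / 2) * Real.exp (-z ^ 2 / 2) = Real.exp (1 / 2) := by
    rw [← Real.exp_add]; congr 1; ring
  calc (1 + z ^ 2) ^ j * Real.exp (-z ^ 2 / 2) * (1 + z ^ 2) ^ m
      = (1 + z ^ 2) ^ (j + m) * Real.exp (-z ^ 2 / 2) := by rw [pow_add]; ring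
    _ ≤ (Real.exp ((1 + z ^ 2) / 2) * (j + m).factorial * 2 ^ (j + m)) * Real.exp (-z ^ 2 / 2) := by
        gcongr
    _ = _ := by rw [← e]; ring

/-- A profile function with derivatives controlled by `chiP m`. -/
structure GoodH (m : ℕ) (h h1 h2 h3 : ℝ → ℝ) (B : ℝ) : Prop where
  d0 : ∀ z, HasDerivAt h (h1 z) z
  d1 : ∀ z, HasDerivAt h1 (h2 z) z
  d2 : ∀ z, HasDerivAt h2 (h3 z) z
  b0 : ∀ z, |h z| ≤ B
  b1 : ∀ z, (1 + |z|) * |h1 z| ≤ B * chiP m z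
  b2 : ∀ z, (1 + z ^ 2) * |h2 z| ≤ B * chiP m z
  b3 : ∀ z, |h3 z| ≤ B * chiP m z

lemma GoodH.Bnn {m : ℕ} {h h1 h2 h3 : ℝ → ℝ} {B : ℝ} (H : GoodH m h h1 h2 h3 B) : 0 ≤ B :=
  (abs_nonneg _).trans (H.b0 0)

lemma GoodH.c1 {m : ℕ} {h h1 h2 h3 : ℝ → ℝ} {B : ℝ} (H : GoodH m h h1 h2 h3 B) (z : ℝ) :
    |h1 z| ≤ B * chiP m z :=
  le_trans (by nlinarith [mul_nonneg (abs_nonneg z) (abs_nonneg (h1 z))]) (H.b1 z)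

lemma GoodH.c2 {m : ℕ} {h h1 h2 h3 : ℝ → ℝ} {B : ℝ} (H : GoodH m h h1 h2 h3 B) (z : ℝ) :
    |h2 z| ≤ B * chiP m z :=
  le_trans (by nlinarith [abs_nonneg (h2 z), sq_nonneg z, mul_nonneg (sq_nonneg z) (abs_nonneg (h2 z))]) (H.b2 z)

lemma GoodH.e1 {m : ℕ} {h h1 h2 h3 : ℝ → ℝ} {B : ℝ} (H : GoodH m h h1 h2 h3 B) (z : ℝ) :
    |h1 z| ≤ B := (H.c1 z).trans (mul_le_of_le_one_right H.Bnn (chiP_le_one m z))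

lemma GoodH.e2 {m : ℕ} {h h1 h2 h3 : ℝ → ℝ} {B : ℝ} (H : GoodH m h h1 h2 h3 B) (z : ℝ) :
    |h2 z| ≤ B := (H.c2 z).trans (mul_le_of_le_one_right H.Bnn (chiP_le_one m z))

/-- mean value bound along a segment -/
lemma mvt_bound {f f' : ℝ → ℝ} {z Y M : ℝ} 
    (hf : ∀ t ∈ Set.uIcc z (z + Y), HasDerivAt f (f' t) t)
    (hb : ∀ t ∈ Set.uIcc z (z + Y), |f' t| ≤ M) :
    ∀ t ∈ Set.uIcc z (z + Y), |f t - f z| ≤ M * |t - z| := by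
  intro t ht
  have := (convex_uIcc z (z + Y)).norm_image_sub_le_of_norm_hasDerivWithin_le
    (f := f) (f' := f') (C := M) (fun x hx => (hf x hx).hasDerivWithinAt) (fun x hx => hb x hx)
    (Set.left_mem_uIcc) ht
  simpa [Real.norm_eq_abs] using this

lemma uIcc_abs {z Y t : ℝ} (ht : t ∈ Set.uIcc z (z + Y)) : |t - z| ≤ |Y| := by
  have := Set.abs_sub_left_of_mem_uIcc ht
  simpa using this

lemma taylor2 {f f1 f2 : ℝ → ℝ} {z Y M : ℝ} (hM : 0 ≤ M)
    (h0 : ∀ t ∈ Set.uIcc z (z + Y), HasDerivAt f (f1 t) t)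
    (h1 : ∀ t ∈ Set.uIcc z (z + Y), HasDerivAt f1 (f2 t) t)
    (hb : ∀ t ∈ Set.uIcc z (z + Y), |f2 t| ≤ M) :
    ∀ t ∈ Set.uIcc z (z + Y), |f t - f z - f1 z * (t - z)| ≤ M * |Y| * |t - z| := by
  have a1 := mvt_bound h1 hb
  have a2 := mvt_bound (f := fun t => f t - f1 z * (t - z)) (f' := fun t => f1 t - f1 z) (z := z) (Y := Y)
    (M := M * |Y|)
    (fun t ht => by
      have := (h0 t ht).sub (((hasDerivAt_id t).sub_const z).const_mul (f1 z))
      exact HasDerivAt.congr_deriv (f := fun t => f t - f1 z * (t - z)) this (by simp))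
    (fun t ht => (a1 t ht).trans (mul_le_mul_of_nonneg_left (uIcc_abs ht) hM))
  intro t ht
  have := a2 t ht
  simp only [sub_self, mul_zero, sub_zero] at this
  rwa [show f t - f z - f1 z * (t - z) = f t - f1 z * (t - z) - f z by ring]

lemma taylor3 {f f1 f2 f3 : ℝ → ℝ} {z Y M : ℝ} (hM : 0 ≤ M)
    (h0 : ∀ t ∈ Set.uIcc z (z + Y), HasDerivAt f (f1 t) t)
    (h1 : ∀ t ∈ Set.uIcc z (z + Y), HasDerivAt f1 (f2 t) t)
    (h2 : ∀ t ∈ Set.uIcc z (z + Y), HasDerivAt f2 (f3 t) t)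
    (hb : ∀ t ∈ Set.uIcc z (z + Y), |f3 t| ≤ M) :
    |f (z + Y) - f z - f1 z * Y - f2 z / 2 * Y ^ 2| ≤ M * |Y| ^ 3 := by
  have a1 := taylor2 hM h1 h2 hb
  have a2 := mvt_bound (f := fun t => f t - f1 z * (t - z) - f2 z / 2 * (t - z) ^ 2)
    (f' := fun t => f1 t - f1 z - f2 z * (t - z)) (z := z) (Y := Y)
    (M := M * |Y| * |Y|)
    (fun t ht => by
      have := ((h0 t ht).sub (((hasDerivAt_id t).sub_const z).const_mul (f1 z))).sub
        ((((hasDerivAt_id t).sub_const z).pow 2).const_mul (f2 z / 2))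
      exact HasDerivAt.congr_deriv (f := fun t => f t - f1 z * (t - z) - f2 z / 2 * (t - z) ^ 2) this
        (by simp; ring))
    (fun t ht => (a1 t ht).trans (mul_le_mul_of_nonneg_left (uIcc_abs ht) (by positivity)))
  have := a2 (z + Y) Set.right_mem_uIcc
  simp only [sub_self, mul_zero, sub_zero, add_sub_cancel_left] at this
  calc _ = |f (z + Y) - f1 z * Y - f2 z / 2 * Y ^ 2 - (f z - f2 z / 2 * 0 ^ 2)| := by
        congr 1; ring
    _ ≤ _ := this
    _ = _ := by ring

/-- interpolation for the space remainder -/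
lemma interp_space {p μ c y : ℝ} (hp : 1 < p) (hμ : 0 < μ) (hμ1 : μ ≤ 1) (hc : 0 ≤ c) (hc1 : c ≤ 1)
    (hy : 0 ≤ y) :
    (y ≤ 1 → y ^ 3 * c ≤ μ * y ^ 2 * c + μ ^ (-(2 * p - 2)) * y ^ (2 * p)) ∧
    (1 ≤ y → y ^ 2 ≤ μ ^ (-(2 * p - 2)) * y ^ (2 * p)) := by
  have key : μ < y → y ^ 2 ≤ μ ^ (-(2 * p - 2)) * y ^ (2 * p) := by
    intro h
    have hy0 : 0 < y := hμ.trans h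
    have : y ^ (2 * p) = y ^ (2 * p - 2) * y ^ 2 := by
      rw [← Real.rpow_natCast y 2, ← Real.rpow_add hy0]; congr 1; push_cast; ring
    rw [this, Real.rpow_neg hμ.le, ← mul_assoc]
    have h2 : 1 ≤ (μ ^ (2 * p - 2))⁻¹ * y ^ (2 * p - 2) := by
      rw [inv_mul_eq_div, one_le_div (Real.rpow_pos_of_pos hμ _)]
      exact Real.rpow_le_rpow hμ.le h.le (by linarith)
    nlinarith [sq_nonneg y]
  have pos : 0 ≤ μ ^ (-(2 * p - 2)) * y ^ (2 * p) :=
    mul_nonneg (Real.rpow_nonneg hμ.le _) (Real.rpow_nonneg hy _)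
  constructor
  · intro h1
    rcases le_or_gt y μ with h | h
    · have : y ^ 3 * c ≤ μ * y ^ 2 * c := by
        have : y ^ 3 ≤ μ * y ^ 2 := by nlinarith [sq_nonneg y]
        exact mul_le_mul_of_nonneg_right this hc
      linarith
    · have k := key h
      have : y ^ 3 * c ≤ y ^ 2 := by
        have a : y ^ 3 ≤ y ^ 2 := by nlinarith [sq_nonneg y]
        nlinarith [pow_nonneg hy 3]
      have : 0 ≤ μ * y ^ 2 * c := by positivity
      linarith
  · intro h1
    rcases lt_or_eq_of_le (hμ1.trans h1) with h | h
    · exact key h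
    · have hy1 : y = 1 := le_antisymm (h ▸ hμ1) h1
      have : μ = 1 := by linarith
      subst this; subst hy1; simp

lemma interp_time {p μ c y : ℝ} (hp : 1 < p) (hμ : 0 < μ) (hμ1 : μ ≤ 1) (hc : 0 ≤ c) (hc1 : c ≤ 1)
    (hy : 0 ≤ y) :
    (y ≤ 1 → y ^ 2 * c ≤ μ * y * c + μ ^ (-(p - 1)) * y ^ p) ∧
    (1 ≤ y → y ≤ μ ^ (-(p - 1)) * y ^ p) := by
  have key : μ ≤ y → y ≤ μ ^ (-(p - 1)) * y ^ p := by
    intro h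
    have hy0 : 0 < y := hμ.trans_le h
    have : y ^ p = y ^ (p - 1) * y := by
      conv_rhs => rw [← Real.rpow_one y, ← Real.rpow_mul hy0.le, ← Real.rpow_add hy0]
      congr 1; ring
    rw [this, Real.rpow_neg hμ.le, ← mul_assoc]
    have h2 : 1 ≤ (μ ^ (p - 1))⁻¹ * y ^ (p - 1) := by
      rw [inv_mul_eq_div, one_le_div (Real.rpow_pos_of_pos hμ _)]
      exact Real.rpow_le_rpow hμ.le h (by linarith)
    nlinarith
  have pos : 0 ≤ μ ^ (-(p - 1)) * y ^ p :=
    mul_nonneg (Real.rpow_nonneg hμ.le _) (Real.rpow_nonneg hy _)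
  refine ⟨fun h1 => ?_, fun h1 => key (hμ1.trans h1)⟩
  rcases le_or_gt y μ with h | h
  · have : y ^ 2 * c ≤ μ * y * c := by
      have : y ^ 2 ≤ μ * y := by nlinarith
      exact mul_le_mul_of_nonneg_right this hc
    linarith
  · have k := key h.le
    have : y ^ 2 * c ≤ y := by
      have a : y ^ 2 ≤ y := by nlinarith
      nlinarith [pow_nonneg hy 2]
    have : 0 ≤ μ * y * c := by positivity
    linarith

lemma space_lemma {m : ℕ} {h h1 h2 h3 : ℝ → ℝ} {B p : ℝ} (hp : 1 < p) (H : GoodH m h h1 h2 h3 B) :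
    ∃ C : ℝ, 0 < C ∧ ∀ z Y μ : ℝ, 0 < μ → μ ≤ 1 →
      |h (z + Y) - h z - h1 z * Y - h2 z / 2 * Y ^ 2| ≤
        C * (μ * Y ^ 2 * chiP m z + μ ^ (-(2 * p - 2)) * |Y| ^ (2 * p)) := by
  have hB := H.Bnn
  refine ⟨B * 3 ^ m + 4 * B + 1, by positivity, fun z Y μ hμ hμ1 => ?_⟩
  have I := interp_space (y := |Y|) hp hμ hμ1 (chiP_pos m z).le (chiP_le_one m z) (abs_nonneg Y)
  rw [sq_abs] at I
  have pos1 : 0 ≤ μ * Y ^ 2 * chiP m z := by have := chiP_pos m z; positivity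
  have pos2 : 0 ≤ μ ^ (-(2 * p - 2)) * |Y| ^ (2 * p) := by positivity
  rcases le_total |Y| 1 with hY | hY
  · have t := taylor3 (f := h) (f1 := h1) (f2 := h2) (f3 := h3) (z := z) (Y := Y)
      (M := B * 3 ^ m * chiP m z) (by have := chiP_pos m z; positivity)
      (fun t _ => H.d0 t) (fun t _ => H.d1 t) (fun t _ => H.d2 t) (fun t ht => by
        have ha := (uIcc_abs ht).trans hY
        have : chiP m t ≤ 3 ^ m * chiP m z := by
          apply chiP_comp (by norm_num)
          have := abs_le.1 ha
          nlinarith [sq_nonneg (t + (t - z)), sq_nonneg (2 * t - z), sq_nonneg (t - z)]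
        calc |h3 t| ≤ B * chiP m t := H.b3 t
          _ ≤ B * (3 ^ m * chiP m z) := by gcongr
          _ = _ := by ring)
    have I1 := I.1 hY
    calc _ ≤ B * 3 ^ m * (|Y| ^ 3 * chiP m z) := by rw [mul_comm (|Y| ^ 3), ← mul_assoc]; exact t
      _ ≤ B * 3 ^ m * (μ * Y ^ 2 * chiP m z + μ ^ (-(2 * p - 2)) * |Y| ^ (2 * p)) := by gcongr
      _ ≤ _ := by
        gcongr; linarith
  · have I2 := I.2 hY
    have a0 := H.b0 (z + Y); have a1 := H.b0 z; have a2 := H.e1 z; have a3 := H.e2 z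
    have hYY : |Y| ≤ Y ^ 2 := by rw [← sq_abs]; nlinarith
    have hY1 : 1 ≤ Y ^ 2 := hY.trans hYY
    have : |h (z + Y) - h z - h1 z * Y - h2 z / 2 * Y ^ 2| ≤ B + B + B * |Y| + B / 2 * Y ^ 2 := by
      refine (abs_sub _ _).trans (add_le_add ((abs_sub _ _).trans (add_le_add ((abs_sub _ _).trans (add_le_add a0 a1)) ?_)) ?_)
      · rw [abs_mul]; gcongr
      · rw [abs_mul, abs_div, abs_two, abs_of_nonneg (sq_nonneg Y)]; gcongr
    calc _ ≤ _ := this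
      _ ≤ 4 * B * Y ^ 2 := by nlinarith [mul_le_mul_of_nonneg_left hYY hB, mul_le_mul_of_nonneg_left hY1 hB]
      _ ≤ 4 * B * (μ * Y ^ 2 * chiP m z + μ ^ (-(2 * p - 2)) * |Y| ^ (2 * p)) := by gcongr; linarith
      _ ≤ _ := by
        gcongr
        have : 0 ≤ B * 3 ^ m := by positivity
        linarith

lemma deriv_selfsim {h h1 : ℝ → ℝ} (d0 : ∀ z, HasDerivAt h (h1 z) z) (α z t : ℝ) (ht : 0 < t) :
    HasDerivAt (fun t => t ^ (-α) * h (z / √t))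
      (t ^ (-(α + 1)) * (-α * h (z / √t) - (z / √t) / 2 * h1 (z / √t))) t := by
  have hs : HasDerivAt (fun t => z / √t) (-(z / √t) / (2 * t)) t := by
    have := (hasDerivAt_const t z).div (Real.hasDerivAt_sqrt ht.ne') (Real.sqrt_ne_zero'.2 ht)
    refine HasDerivAt.congr_deriv (f := fun t => z / √t) this ?_
    have h2 : √t ^ 2 = t := Real.sq_sqrt ht.le
    have h3 : √t ≠ 0 := Real.sqrt_ne_zero'.2 ht
    rw [h2]
    field_simp
    ring
  have := (Real.hasDerivAt_rpow_const (x := t) (p := -α) (Or.inl ht.ne')).mul ((d0 (z / √t)).comp t hs)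
  refine HasDerivAt.congr_deriv (f := fun t => t ^ (-α) * h (z / √t)) this ?_
  have e1 : t ^ (-α) = t ^ (-(α + 1)) * t := by
    conv_rhs => rw [← Real.rpow_one t, ← Real.rpow_mul ht.le, ← Real.rpow_add ht]
    congr 1; ring
  rw [show -α - 1 = -(α + 1) by ring, e1]
  simp only [Function.comp]
  field_simp
  ring

lemma time_lemma {m : ℕ} {h h1 h2 h3 : ℝ → ℝ} {B p α : ℝ} (hp : 1 < p) (hα : 0 ≤ α)
    (H : GoodH m h h1 h2 h3 B) (hc : ∀ z, α * |h z| ≤ B * chiP m z) :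
    ∃ C : ℝ, 0 < C ∧ ∀ z ρ μ : ℝ, 0 ≤ ρ → 0 < μ → μ ≤ 1 →
      |h z - (1 + ρ) ^ (-α) * h (z / √(1 + ρ)) - ρ * (α * h z + z / 2 * h1 z)| ≤
        C * (μ * ρ * chiP m z + μ ^ (-(p - 1)) * ρ ^ p) := by
  have hB := H.Bnn
  set K := (α + 3) * B * 2 ^ m * 4 with hK
  have hK0 : 0 ≤ K := by positivity
  refine ⟨K + 6 * B + 1, by positivity, fun z ρ μ hρ hμ hμ1 => ?_⟩
  have I := interp_time (y := ρ) hp hμ hμ1 (chiP_pos m z).le (chiP_le_one m z) hρ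
  have cp := chiP_pos m z
  have pos1 : 0 ≤ μ * ρ * chiP m z := by positivity
  have pos2 : 0 ≤ μ ^ (-(p - 1)) * ρ ^ p := by positivity
  have zh1 : ∀ w, |w| * |h1 w| ≤ B * chiP m w := fun w =>
    le_trans (mul_le_mul_of_nonneg_right (by linarith) (abs_nonneg _)) (H.b1 w)
  have zh2 : ∀ w, w ^ 2 * |h2 w| ≤ B * chiP m w := fun w =>
    le_trans (mul_le_mul_of_nonneg_right (by linarith) (abs_nonneg _)) (H.b2 w)
  have cB : ∀ w, B * chiP m w ≤ B := fun w => mul_le_of_le_one_right hB (chiP_le_one m w)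
  rcases le_total ρ 1 with h1ρ | h1ρ
  · -- second order Taylor
    have dd : ∀ w, HasDerivAt (fun w => -α * h w - w / 2 * h1 w) (-α * h1 w - (1 / 2 * h1 w + w / 2 * h2 w)) w := by
      intro w
      exact ((H.d0 w).const_mul (-α)).sub (((hasDerivAt_id w).div_const 2).mul (H.d1 w))
    have t := taylor2 (z := 1) (Y := ρ) (M := K * chiP m z)
      (f := fun t => t ^ (-α) * h (z / √t))
      (f1 := fun t => t ^ (-(α + 1)) * (-α * h (z / √t) - (z / √t) / 2 * h1 (z / √t)))
      (f2 := fun t => t ^ (-(α + 1 + 1)) * (-(α + 1) * (-α * h (z / √t) - (z / √t) / 2 * h1 (z / √t))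
        - (z / √t) / 2 * (-α * h1 (z / √t) - (1 / 2 * h1 (z / √t) + (z / √t) / 2 * h2 (z / √t)))))
      (by positivity)
      (fun t ht => by
        rw [Set.uIcc_of_le (by linarith)] at ht
        exact deriv_selfsim H.d0 α z t (by linarith [ht.1]))
      (fun t ht => by
        rw [Set.uIcc_of_le (by linarith)] at ht
        exact deriv_selfsim dd (α + 1) z t (by linarith [ht.1]))
      (fun t ht => by
        rw [Set.uIcc_of_le (by linarith)] at ht
        have ht0 : 0 < t := by linarith [ht.1]
        have c2 : chiP m (z / √t) ≤ 2 ^ m * chiP m z := by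
          apply chiP_comp (by norm_num)
          rw [div_pow, Real.sq_sqrt ht0.le]
          have : z ^ 2 / t ≥ z ^ 2 / 2 := by
            apply div_le_div_of_nonneg_left (sq_nonneg z) ht0 (by linarith [ht.2])
          linarith
        set w := z / √t with hw
        have a0 := hc w
        have a1 := zh1 w
        have a2 := zh2 w
        have a3 : |t ^ (-(α + 1 + 1))| ≤ 1 := by
          rw [abs_of_nonneg (by positivity)]
          exact Real.rpow_le_one_of_one_le_of_nonpos ht.1 (by linarith)
        have bw : 0 ≤ B * chiP m w := mul_nonneg hB (chiP_pos m w).le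
        rw [abs_mul]
        refine le_trans (mul_le_of_le_one_left (abs_nonneg _) a3) ?_
        have e : (-(α + 1) * (-α * h w - w / 2 * h1 w) - w / 2 * (-α * h1 w - (1 / 2 * h1 w + w / 2 * h2 w)))
          = (α + 1) * (α * h w) + (α + 3 / 4) * (w * h1 w) + 1 / 4 * (w ^ 2 * h2 w) := by ring
        rw [e]
        have : |(α + 1) * (α * h w) + (α + 3 / 4) * (w * h1 w) + 1 / 4 * (w ^ 2 * h2 w)|
          ≤ (α + 1) * (B * chiP m w) + (α + 3 / 4) * (B * chiP m w) + 1 / 4 * (B * chiP m w) := by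
          refine (abs_add_le _ _).trans (add_le_add ((abs_add_le _ _).trans (add_le_add ?_ ?_)) ?_)
          · rw [abs_mul, abs_mul, abs_of_nonneg hα, abs_of_nonneg (by linarith : 0 ≤ α + 1)]; gcongr
          · rw [abs_mul, abs_mul, abs_of_nonneg (by linarith : 0 ≤ α + 3 / 4)]; gcongr
          · rw [abs_mul, abs_mul, abs_of_nonneg (by norm_num : (0:ℝ) ≤ 1 / 4), abs_of_nonneg (sq_nonneg w)]; gcongr
        refine this.trans ?_
        calc _ ≤ (α + 3) * 4 * (B * chiP m w) := by nlinarith [mul_nonneg hα bw]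
          _ ≤ (α + 3) * 4 * (B * (2 ^ m * chiP m z)) := by gcongr
          _ = _ := by rw [hK]; ring)
      (1 + ρ) Set.right_mem_uIcc
    simp only [Real.one_rpow, Real.sqrt_one, div_one, add_sub_cancel_left, one_mul] at t
    rw [abs_sub_comm, abs_of_nonneg hρ] at t
    have I1 := I.1 h1ρ
    calc _ ≤ K * (ρ ^ 2 * chiP m z) := by
          refine le_trans (le_of_eq ?_) (t.trans (le_of_eq ?_))
          · congr 1; ring
          · ring
      _ ≤ K * (μ * ρ * chiP m z + μ ^ (-(p - 1)) * ρ ^ p) := by gcongr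
      _ ≤ _ := by gcongr; linarith
  · have I2 := I.2 h1ρ
    have b1 : |(1 + ρ) ^ (-α) * h (z / √(1 + ρ))| ≤ B := by
      rw [abs_mul, abs_of_nonneg (by positivity)]
      have : (1 + ρ) ^ (-α) ≤ 1 := Real.rpow_le_one_of_one_le_of_nonpos (by linarith) (by linarith)
      exact (mul_le_of_le_one_left (abs_nonneg _) this).trans (H.b0 _)
    have b2 : |ρ * (α * h z + z / 2 * h1 z)| ≤ ρ * (B + B) := by
      rw [abs_mul, abs_of_nonneg hρ]
      gcongr
      refine (abs_add_le _ _).trans (add_le_add ?_ ?_)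
      · rw [abs_mul, abs_of_nonneg hα]; exact (hc z).trans (cB z)
      · rw [abs_mul, abs_div, abs_two]
        have := (zh1 z).trans (cB z)
        have : 0 ≤ |z| * |h1 z| := by positivity
        linarith
    calc _ ≤ B + B + ρ * (B + B) := (abs_sub _ _).trans (add_le_add ((abs_sub _ _).trans (add_le_add (H.b0 z) b1)) b2)
      _ ≤ 6 * B * ρ := by nlinarith [mul_le_mul_of_nonneg_left h1ρ hB]
      _ ≤ 6 * B * (μ * ρ * chiP m z + μ ^ (-(p - 1)) * ρ ^ p) := by gcongr; linarith
      _ ≤ _ := by gcongr; linarith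


lemma chiP_succ (m : ℕ) (z : ℝ) : (1 + z ^ 2) * chiP (m + 1) z = chiP m z := by
  unfold chiP; rw [pow_succ]; field_simp; ring

lemma hasDerivAt_chiP (m : ℕ) (z : ℝ) : HasDerivAt (chiP m) (-2 * m * z * chiP (m + 1) z) z := by
  have h1 : HasDerivAt (fun z : ℝ => (1 + z ^ 2) ^ m) (m * (1 + z ^ 2) ^ (m - 1) * (2 * z)) z := by
    have := (((hasDerivAt_id z).pow 2).const_add 1).pow m
    exact HasDerivAt.congr_deriv (f := fun z : ℝ => (1 + z ^ 2) ^ m) this (by simp)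
  have h2 := h1.inv (by positivity)
  refine HasDerivAt.congr_deriv (f := chiP m) h2 ?_
  unfold chiP
  rcases m with _ | k
  · simp
  · simp only [Nat.add_sub_cancel]
    field_simp
    ring

lemma hasDerivAt_gaussE (z : ℝ) : HasDerivAt gaussE (-z * gaussE z) z := by
  have h1 : HasDerivAt (fun z : ℝ => -z ^ 2 / 2) (-z) z := by
    have := ((hasDerivAt_id z).pow 2).neg.div_const 2
    exact HasDerivAt.congr_deriv (f := fun z : ℝ => -z ^ 2 / 2) this (by simp; ring)
  exact HasDerivAt.congr_deriv (f := gaussE) h1.exp (by unfold gaussE; ring)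

lemma integrable_gaussE : Integrable gaussE := by
  have := integrable_exp_neg_mul_sq (b := 1 / 2) (by norm_num)
  refine this.congr (Filter.Eventually.of_forall fun x => ?_)
  simp only [gaussE]; congr 1; ring

lemma continuous_gaussE : Continuous gaussE := by unfold gaussE; fun_prop

lemma stdNormalCDF_eq (x : ℝ) :
    stdNormalCDF x = (√(2 * Real.pi))⁻¹ * ∫ u in Set.Iic x, gaussE u := by
  unfold stdNormalCDF gaussE; rw [integral_const_mul]

lemma integral_gaussE : ∫ u, gaussE u = √(2 * Real.pi) := by
  have := integral_gaussian (1 / 2)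
  rw [show Real.pi / (1 / 2) = 2 * Real.pi by ring] at this
  rw [← this]; congr 1; ext x; simp only [gaussE]; congr 1; ring

lemma c0_pos : 0 < (√(2 * Real.pi))⁻¹ := by positivity

lemma c0_le_one : (√(2 * Real.pi))⁻¹ ≤ 1 := by
  apply inv_le_one_of_one_le₀
  rw [Real.one_le_sqrt]; nlinarith [Real.pi_gt_three]

lemma stdNormalCDF_nonneg (x : ℝ) : 0 ≤ stdNormalCDF x := by
  rw [stdNormalCDF_eq]
  exact mul_nonneg c0_pos.le (integral_nonneg fun u => (gaussE_pos u).le)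

lemma stdNormalCDF_le_one (x : ℝ) : stdNormalCDF x ≤ 1 := by
  rw [stdNormalCDF_eq]
  have : ∫ u in Set.Iic x, gaussE u ≤ ∫ u, gaussE u :=
    setIntegral_le_integral integrable_gaussE (Filter.Eventually.of_forall fun u => (gaussE_pos u).le)
  rw [integral_gaussE] at this
  have h0 : 0 < √(2 * Real.pi) := by positivity
  rw [inv_mul_le_iff₀ h0]; linarith

lemma hasDerivAt_stdNormalCDF (x : ℝ) :
    HasDerivAt stdNormalCDF ((√(2 * Real.pi))⁻¹ * gaussE x) x := by
  have e : stdNormalCDF = fun x => (√(2 * Real.pi))⁻¹ * ((∫ u in Set.Iic (0:ℝ), gaussE u) + ∫ u in (0:ℝ)..x, gaussE u) := by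
    ext x
    rw [stdNormalCDF_eq, ← intervalIntegral.integral_Iic_sub_Iic integrable_gaussE.integrableOn integrable_gaussE.integrableOn]
    ring
  rw [e]
  refine HasDerivAt.const_mul _ (HasDerivAt.const_add _ ?_)
  exact intervalIntegral.integral_hasDerivAt_right integrable_gaussE.intervalIntegrable
    (continuous_gaussE.stronglyMeasurableAtFilter _ _) continuous_gaussE.continuousAt

lemma stdNormalCDF_mono : Monotone stdNormalCDF := by
  apply monotone_of_hasDerivAt_nonneg hasDerivAt_stdNormalCDF
  intro x; exact mul_nonneg c0_pos.le (gaussE_pos x).le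

lemma stdNormalCDF_tail (x : ℝ) (hx : x ≤ 0) : stdNormalCDF x ≤ √2 * Real.exp (-x ^ 2 / 4) := by
  rw [stdNormalCDF_eq]
  have i4 : Integrable (fun u : ℝ => Real.exp (-(1 / 4) * u ^ 2)) :=
    integrable_exp_neg_mul_sq (b := 1 / 4) (by norm_num)
  have h1 : ∫ u in Set.Iic x, gaussE u ≤ ∫ u in Set.Iic x, Real.exp (-x ^ 2 / 4) * Real.exp (-(1 / 4) * u ^ 2) := by
    apply setIntegral_mono_on integrable_gaussE.integrableOn (i4.const_mul _).integrableOn measurableSet_Iic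
    intro u hu
    have hu' : u ≤ x := hu
    rw [gaussE, ← Real.exp_add]
    apply Real.exp_le_exp.2
    nlinarith
  have h2 : ∫ u in Set.Iic x, Real.exp (-x ^ 2 / 4) * Real.exp (-(1 / 4) * u ^ 2)
      ≤ ∫ u, Real.exp (-x ^ 2 / 4) * Real.exp (-(1 / 4) * u ^ 2) :=
    setIntegral_le_integral (μ := volume) (i4.const_mul _) (Filter.Eventually.of_forall fun u => by positivity)
  rw [integral_const_mul (μ := volume), integral_gaussian] at h2
  have h3 := h1.trans h2
  have h0 : 0 < √(2 * Real.pi) := by positivity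
  rw [inv_mul_le_iff₀ h0]
  refine h3.trans (le_of_eq ?_)
  have : √(Real.pi / (1 / 4)) = √(2 * Real.pi) * √2 := by
    rw [← Real.sqrt_mul (by positivity)]; congr 1; ring
  rw [this]; ring

lemma stdNormalCDF_decay (m : ℕ) : ∃ B : ℝ, 0 < B ∧ ∀ z ≤ 0, stdNormalCDF z ≤ B * chiP m z := by
  obtain ⟨B, hB, h⟩ := gaussE_decay m 0
  refine ⟨√2 * B * 2 ^ m, by positivity, fun z hz => ?_⟩
  have h2 := h (z / √2)
  have e : gaussE (z / √2) = Real.exp (-z ^ 2 / 4) := by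
    unfold gaussE; rw [div_pow, Real.sq_sqrt (by norm_num)]; congr 1; ring
  rw [pow_zero, one_mul, e] at h2
  have h3 : chiP m (z / √2) ≤ 2 ^ m * chiP m z := by
    apply chiP_comp (by norm_num)
    rw [div_pow, Real.sq_sqrt (by norm_num)]; linarith
  calc _ ≤ √2 * Real.exp (-z ^ 2 / 4) := stdNormalCDF_tail z hz
    _ ≤ √2 * (B * (2 ^ m * chiP m z)) := by gcongr; exact h2.trans (by gcongr)
    _ = _ := by ring

lemma abs_le_one_add_sq (z : ℝ) : |z| ≤ 1 + z ^ 2 := by nlinarith [sq_abs z, sq_nonneg (|z| - 1)]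

lemma one_add_abs_le (z : ℝ) : 1 + |z| ≤ 2 * (1 + z ^ 2) := by nlinarith [sq_abs z, sq_nonneg (|z| - 1)]

lemma goodH_gaussE (m : ℕ) : ∃ B : ℝ, GoodH m gaussE (fun z => -z * gaussE z)
    (fun z => (z ^ 2 - 1) * gaussE z) (fun z => (3 * z - z ^ 3) * gaussE z) B ∧
    ∀ z, gaussE z ≤ B * chiP m z := by
  obtain ⟨B, hB, h⟩ := gaussE_decay m 2
  have key : ∀ z c : ℝ, |c| ≤ 8 * (1 + z ^ 2) ^ 2 → |c * gaussE z| ≤ (8 * B + 1) * chiP m z := by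
    intro z c hc
    rw [abs_mul, abs_of_pos (gaussE_pos z)]
    calc _ ≤ 8 * (1 + z ^ 2) ^ 2 * gaussE z := by gcongr; exact (gaussE_pos z).le
      _ ≤ 8 * (B * chiP m z) := by rw [mul_assoc]; exact mul_le_mul_of_nonneg_left (h z) (by norm_num)
      _ ≤ _ := by nlinarith [chiP_pos m z]
  refine ⟨8 * B + 1, ⟨hasDerivAt_gaussE, fun z => ?_, fun z => ?_, fun z => ?_, fun z => ?_, fun z => ?_, fun z => ?_⟩, fun z => ?_⟩
  · have := (hasDerivAt_id z).neg.mul (hasDerivAt_gaussE z)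
    exact HasDerivAt.congr_deriv (f := fun z => -z * gaussE z) this (by simp; ring)
  · have := (((hasDerivAt_id z).pow 2).sub_const 1).mul (hasDerivAt_gaussE z)
    exact HasDerivAt.congr_deriv (f := fun z => (z ^ 2 - 1) * gaussE z) this (by simp; ring)
  · rw [abs_of_pos (gaussE_pos z)]; linarith [gaussE_le_one z]
  · have : (1 + |z|) * |-z * gaussE z| = |((1 + |z|) * z) * gaussE z| := by
      rw [abs_mul, abs_mul, abs_mul, abs_neg, abs_of_nonneg (by positivity : 0 ≤ 1 + |z|)]; ring
    rw [this]; apply key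
    rw [abs_mul, abs_of_nonneg (by positivity : 0 ≤ 1 + |z|)]
    nlinarith [mul_le_mul (one_add_abs_le z) (abs_le_one_add_sq z) (abs_nonneg z) (by positivity)]
  · have : (1 + z ^ 2) * |(z ^ 2 - 1) * gaussE z| = |((1 + z ^ 2) * (z ^ 2 - 1)) * gaussE z| := by
      rw [abs_mul, abs_mul, abs_mul, abs_of_nonneg (by positivity : 0 ≤ 1 + z ^ 2)]; ring
    rw [this]; apply key
    rw [abs_le]; constructor <;> nlinarith [sq_nonneg z, sq_nonneg (z ^ 2)]
  · apply key
    have h3 : |z| ^ 3 ≤ (1 + z ^ 2) ^ 2 := by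
      calc |z| ^ 3 = |z| * z ^ 2 := by rw [← sq_abs z]; ring
        _ ≤ (1 + z ^ 2) * (1 + z ^ 2) := by gcongr; exact abs_le_one_add_sq z; linarith
        _ = _ := by ring
    calc _ ≤ |3 * z| + |z ^ 3| := abs_sub _ _
      _ = 3 * |z| + |z| ^ 3 := by rw [abs_mul, abs_pow]; norm_num
      _ ≤ _ := by nlinarith [abs_le_one_add_sq z, sq_nonneg z, sq_nonneg (z^2)]
  · have := key z 1 (by rw [abs_one]; nlinarith [sq_nonneg z, sq_nonneg (z^2)])
    rwa [one_mul, abs_of_pos (gaussE_pos z)] at this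

lemma goodH_Phi (m : ℕ) : ∃ B : ℝ, GoodH m stdNormalCDF (fun z => (√(2 * Real.pi))⁻¹ * gaussE z)
    (fun z => (√(2 * Real.pi))⁻¹ * (-z * gaussE z)) (fun z => (√(2 * Real.pi))⁻¹ * ((z ^ 2 - 1) * gaussE z)) B := by
  obtain ⟨B, hB, h⟩ := gaussE_decay m 2
  have key : ∀ z c : ℝ, |c| ≤ 8 * (1 + z ^ 2) ^ 2 → |c * gaussE z| ≤ (8 * B + 1) * chiP m z := by
    intro z c hc
    rw [abs_mul, abs_of_pos (gaussE_pos z)]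
    calc _ ≤ 8 * (1 + z ^ 2) ^ 2 * gaussE z := by gcongr; exact (gaussE_pos z).le
      _ ≤ 8 * (B * chiP m z) := by rw [mul_assoc]; exact mul_le_mul_of_nonneg_left (h z) (by norm_num)
      _ ≤ _ := by nlinarith [chiP_pos m z]
  have kc : ∀ a : ℝ, |(√(2 * Real.pi))⁻¹ * a| ≤ |a| := fun a => by
    rw [abs_mul, abs_of_pos c0_pos]; exact mul_le_of_le_one_left (abs_nonneg _) c0_le_one
  refine ⟨8 * B + 1, ⟨hasDerivAt_stdNormalCDF, fun z => ?_, fun z => ?_, fun z => ?_, fun z => ?_, fun z => ?_, fun z => ?_⟩⟩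
  · exact (hasDerivAt_gaussE z).const_mul _
  · have := (hasDerivAt_id z).neg.mul (hasDerivAt_gaussE z)
    exact (HasDerivAt.congr_deriv (f := fun z => -z * gaussE z) this (by simp; ring)).const_mul _
  · rw [abs_of_nonneg (stdNormalCDF_nonneg z)]; linarith [stdNormalCDF_le_one z]
  · refine (mul_le_mul_of_nonneg_left (kc _) (by positivity)).trans ?_
    have : (1 + |z|) * |gaussE z| = |(1 + |z|) * gaussE z| := by
      rw [abs_mul, abs_of_nonneg (by positivity : 0 ≤ 1 + |z|)]
    rw [this]; apply key
    rw [abs_of_nonneg (by positivity : 0 ≤ 1 + |z|)]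
    nlinarith [one_add_abs_le z, sq_nonneg z, sq_nonneg (z^2)]
  · refine (mul_le_mul_of_nonneg_left (kc _) (by positivity)).trans ?_
    have : (1 + z ^ 2) * |-z * gaussE z| = |((1 + z ^ 2) * z) * gaussE z| := by
      rw [abs_mul, abs_mul, abs_mul, abs_neg, abs_of_nonneg (by positivity : 0 ≤ 1 + z ^ 2)]; ring
    rw [this]; apply key
    rw [abs_mul, abs_of_nonneg (by positivity : 0 ≤ 1 + z ^ 2)]
    nlinarith [abs_le_one_add_sq z, sq_nonneg z]
  · refine (kc _).trans ?_
    apply key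
    rw [abs_le]; constructor <;> nlinarith [sq_nonneg z, sq_nonneg (z ^ 2)]

lemma goodH_chiP (m : ℕ) : ∃ B : ℝ, GoodH m (chiP m) (fun z => -2 * m * z * chiP (m + 1) z)
    (fun z => -2 * m * chiP (m + 1) z + 4 * m * (m + 1) * (z ^ 2 * chiP (m + 2) z))
    (fun z => 12 * m * (m + 1) * (z * chiP (m + 2) z) - 8 * m * (m + 1) * (m + 2) * (z ^ 3 * chiP (m + 3) z)) B
    ∧ ∀ z, chiP m z ≤ B * chiP m z := by
  set M : ℝ := (m : ℝ) with hM
  have M0 : 0 ≤ M := by positivity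
  have c1 : ∀ z, (1 + z ^ 2) * chiP (m + 1) z = chiP m z := chiP_succ m
  have c2 : ∀ z, (1 + z ^ 2) * chiP (m + 2) z = chiP (m + 1) z := chiP_succ (m + 1)
  have c3 : ∀ z, (1 + z ^ 2) * chiP (m + 3) z = chiP (m + 2) z := chiP_succ (m + 2)
  refine ⟨12 * (M + 1) * (M + 1) + 8 * (M + 1) * (M + 1) * (M + 2), ⟨hasDerivAt_chiP m, fun z => ?_, fun z => ?_, fun z => ?_, fun z => ?_, fun z => ?_, fun z => ?_⟩, fun z => ?_⟩
  · have := ((hasDerivAt_id z).const_mul (-2 * M)).mul (hasDerivAt_chiP (m + 1) z)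
    exact HasDerivAt.congr_deriv (f := fun z => -2 * M * z * chiP (m + 1) z) this (by simp; ring)
  · have := ((hasDerivAt_chiP (m + 1) z).const_mul (-2 * M)).add
      ((((hasDerivAt_id z).pow 2).mul (hasDerivAt_chiP (m + 2) z)).const_mul (4 * M * (M + 1)))
    exact HasDerivAt.congr_deriv (f := fun z => -2 * M * chiP (m + 1) z + 4 * M * (M + 1) * (z ^ 2 * chiP (m + 2) z)) this (by simp; ring)
  · rw [abs_of_pos (chiP_pos m z)]
    refine (chiP_le_one m z).trans ?_
    nlinarith [mul_nonneg M0 M0, mul_nonneg (mul_nonneg M0 M0) M0]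
  · have p1 := chiP_pos (m + 1) z
    rw [abs_mul, abs_mul, abs_mul, abs_of_pos p1, abs_of_nonneg M0]
    norm_num
    have h2 : (1 + |z|) * |z| ≤ 2 * (1 + z ^ 2) := by
      have := sq_abs z
      nlinarith [sq_nonneg (|z| - 1)]
    calc (1 + |z|) * (2 * M * |z| * chiP (m + 1) z) = 2 * M * chiP (m + 1) z * ((1 + |z|) * |z|) := by ring
      _ ≤ 2 * M * chiP (m + 1) z * (2 * (1 + z ^ 2)) := by gcongr
      _ = 4 * M * chiP m z := by rw [← c1 z]; ring
      _ ≤ _ := by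
        gcongr
        · exact (chiP_pos m z).le
        · nlinarith [mul_nonneg M0 M0, mul_nonneg (mul_nonneg M0 M0) M0]
  · have p1 := chiP_pos (m + 1) z
    have p2 := chiP_pos (m + 2) z
    have h1 : |-2 * M * chiP (m + 1) z + 4 * M * (M + 1) * (z ^ 2 * chiP (m + 2) z)|
        ≤ (2 * M + 4 * M * (M + 1)) * chiP (m + 1) z := by
      have a : z ^ 2 * chiP (m + 2) z ≤ chiP (m + 1) z := by rw [← c2 z]; nlinarith
      have b : 4 * M * (M + 1) * (z ^ 2 * chiP (m + 2) z) ≤ 4 * M * (M + 1) * chiP (m + 1) z := by gcongr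
      have b0 : 0 ≤ 4 * M * (M + 1) * (z ^ 2 * chiP (m + 2) z) := by positivity
      have b1 : 0 ≤ M * chiP (m + 1) z := by positivity
      have b2 : 0 ≤ M * M * chiP (m + 1) z := by positivity
      rw [abs_le]; constructor <;> nlinarith
    calc _ ≤ (1 + z ^ 2) * ((2 * M + 4 * M * (M + 1)) * chiP (m + 1) z) := by gcongr
      _ = (2 * M + 4 * M * (M + 1)) * chiP m z := by rw [← c1 z]; ring
      _ ≤ _ := by
        refine mul_le_mul_of_nonneg_right ?_ (chiP_pos m z).le
        · nlinarith [mul_nonneg M0 M0, mul_nonneg (mul_nonneg M0 M0) M0]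
  · have p2 := chiP_pos (m + 2) z
    have p3 := chiP_pos (m + 3) z
    have p0 := chiP_pos m z
    have e0 : chiP m z = (1 + z ^ 2) ^ 2 * chiP (m + 2) z := by rw [← c1 z, ← c2 z]; ring
    have e3 : chiP m z = (1 + z ^ 2) ^ 3 * chiP (m + 3) z := by rw [e0, ← c3 z]; ring
    have a1 : |z| * chiP (m + 2) z ≤ chiP m z := by
      rw [e0]; gcongr
      nlinarith [abs_le_one_add_sq z, sq_nonneg z]
    have a2 : |z| ^ 3 * chiP (m + 3) z ≤ chiP m z := by
      rw [e3]; gcongr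
      exact abs_le_one_add_sq z
    calc _ ≤ |12 * M * (M + 1) * (z * chiP (m + 2) z)| + |8 * M * (M + 1) * (M + 2) * (z ^ 3 * chiP (m + 3) z)| := abs_sub _ _
      _ = 12 * M * (M + 1) * (|z| * chiP (m + 2) z) + 8 * M * (M + 1) * (M + 2) * (|z| ^ 3 * chiP (m + 3) z) := by
        rw [abs_mul (12 * M * (M + 1)), abs_mul (8 * M * (M + 1) * (M + 2)), abs_of_nonneg (by positivity : 0 ≤ 12 * M * (M + 1)),
          abs_of_nonneg (by positivity : 0 ≤ 8 * M * (M + 1) * (M + 2)), abs_mul, abs_mul, abs_pow,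
          abs_of_pos p2, abs_of_pos p3]
      _ ≤ 12 * M * (M + 1) * chiP m z + 8 * M * (M + 1) * (M + 2) * chiP m z := by gcongr
      _ = (12 * M * (M + 1) + 8 * M * (M + 1) * (M + 2)) * chiP m z := by ring
      _ ≤ _ := by
        gcongr <;> linarith
  · have : 1 ≤ 12 * (M + 1) * (M + 1) + 8 * (M + 1) * (M + 1) * (M + 2) := by
      nlinarith [mul_nonneg M0 M0, mul_nonneg (mul_nonneg M0 M0) M0]
    nlinarith [chiP_pos m z]

lemma term_lemma {m : ℕ} {h h1 h2 h3 : ℝ → ℝ} {B p α : ℝ} (hp : 1 < p) (hα : 0 ≤ α)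
    (H : GoodH m h h1 h2 h3 B) (hc : ∀ z, α * |h z| ≤ B * chiP m z) :
    ∃ C : ℝ, 0 < C ∧ ∀ v r s X z : ℝ, 1 ≤ v → 0 ≤ r → z = s / √v →
      |v ^ (-α) * h ((s + X) / √v) - (v + r) ^ (-α) * h (s / √(v + r))
        - v ^ (-α) * (h1 z * (X / √v) + h2 z / 2 * (X ^ 2 / v - r / v)
          + (r / v) * (α * h z + z / 2 * h1 z + h2 z / 2))|
      ≤ v ^ (-α) * (C * (v ^ (-(p / (p - 1)) / 2) * chiP m z * (X ^ 2 / v + r / v) + (|X| ^ (2 * p) + r ^ p))) := by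
  obtain ⟨C1, hC1, hs⟩ := space_lemma hp H
  obtain ⟨C2, hC2, ht⟩ := time_lemma hp hα H hc
  refine ⟨C1 + C2, by positivity, ?_⟩
  intro v r s X z hv hr hz
  have v0 : 0 < v := by linarith
  have sv : 0 < √v := Real.sqrt_pos.2 v0
  have sv2 : √v ^ 2 = v := Real.sq_sqrt v0.le
  set μ := v ^ (-(p / (p - 1)) / 2) with hμ
  have q0 : 0 < p / (p - 1) := div_pos (by linarith) (by linarith)
  have μ0 : 0 < μ := Real.rpow_pos_of_pos v0 _
  have μ1 : μ ≤ 1 := Real.rpow_le_one_of_one_le_of_nonpos hv (by linarith)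
  have a1 := hs z (X / √v) μ μ0 μ1
  have a2 := ht z (r / v) μ (by positivity) μ0 μ1
  have p1 : p - 1 ≠ 0 := by linarith
  have e1 : μ ^ (-(2 * p - 2)) * |X / √v| ^ (2 * p) = |X| ^ (2 * p) := by
    rw [abs_div, abs_of_pos sv, Real.div_rpow (abs_nonneg _) sv.le, hμ, ← Real.rpow_mul v0.le,
      Real.sqrt_eq_rpow, ← Real.rpow_mul v0.le]
    rw [show -(p / (p - 1)) / 2 * -(2 * p - 2) = p by field_simp; try ring, show 1 / 2 * (2 * p) = p by ring]
    have : v ^ p ≠ 0 := (Real.rpow_pos_of_pos v0 _).ne'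
    field_simp
  have e2 : μ ^ (-(p - 1)) * (r / v) ^ p ≤ r ^ p := by
    rw [Real.div_rpow hr v0.le, hμ, ← Real.rpow_mul v0.le]
    rw [show -(p / (p - 1)) / 2 * -(p - 1) = p / 2 by field_simp; try ring]
    have : v ^ (p / 2) ≤ v ^ p := Real.rpow_le_rpow_of_exponent_le hv (by linarith)
    rw [← mul_div_assoc, div_le_iff₀ (Real.rpow_pos_of_pos v0 _), mul_comm]
    gcongr
  rw [e1] at a1
  have esX : (s + X) / √v = z + X / √v := by rw [hz]; ring
  have eX2 : (X / √v) ^ 2 = X ^ 2 / v := by rw [div_pow, sv2]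
  have evr : v + r = v * (1 + r / v) := by field_simp
  have r1 : 0 ≤ 1 + r / v := by positivity
  have e3 : (v + r) ^ (-α) * h (s / √(v + r)) = v ^ (-α) * ((1 + r / v) ^ (-α) * h (z / √(1 + r / v))) := by
    rw [evr, Real.mul_rpow v0.le r1, Real.sqrt_mul v0.le, hz, div_div]; ring
  rw [esX, e3, ← mul_sub, ← mul_sub, abs_mul, abs_of_pos (Real.rpow_pos_of_pos v0 _)]
  gcongr
  have cp := chiP_pos m z
  rw [eX2] at a1
  have hX : 0 ≤ |X| ^ (2 * p) := by positivity
  have hrp : 0 ≤ r ^ p := by positivity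
  have q1 : 0 ≤ μ * (X ^ 2 / v) * chiP m z := by positivity
  have q2 : 0 ≤ μ * (r / v) * chiP m z := by positivity
  calc _ = |(h (z + X / √v) - h z - h1 z * (X / √v) - h2 z / 2 * (X ^ 2 / v)) +
        (h z - (1 + r / v) ^ (-α) * h (z / √(1 + r / v)) - r / v * (α * h z + z / 2 * h1 z))| := by
        congr 1; ring
    _ ≤ C1 * (μ * (X ^ 2 / v) * chiP m z + |X| ^ (2 * p)) +
        C2 * (μ * (r / v) * chiP m z + r ^ p) := by
        refine (abs_add_le _ _).trans (add_le_add a1 (a2.trans ?_))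
        gcongr
    _ ≤ (C1 + C2) * (μ * (X ^ 2 / v) * chiP m z + |X| ^ (2 * p)) +
        (C1 + C2) * (μ * (r / v) * chiP m z + r ^ p) := by gcongr <;> linarith
    _ = _ := by ring


lemma diss_lemma {m : ℕ} {q : ℝ} (hq : 1 < q) (hm : q / 2 + 2 ≤ m) :
    ∃ A : ℝ, 0 < A ∧ ∀ z : ℝ, chiP m z ≤ A * ((q - 1) / 2) * gaussE z
      - (q / 2 * chiP m z + z / 2 * (-2 * m * z * chiP (m + 1) z)
        + (-2 * m * chiP (m + 1) z + 4 * m * (m + 1) * (z ^ 2 * chiP (m + 2) z)) / 2) := by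
  set M : ℝ := (m : ℝ) with hM
  have M0 : 0 ≤ M := by positivity
  set R := 2 * M * (M + 1) with hR
  have R0 : 0 ≤ R := by positivity
  refine ⟨(R + 1) * Real.exp (R / 2) / ((q - 1) / 2), by
    have : 0 < q - 1 := by linarith
    positivity, fun z => ?_⟩
  rw [div_mul_cancel₀ _ (by linarith : (q - 1) / 2 ≠ 0)]
  have c1 : (1 + z ^ 2) * chiP (m + 1) z = chiP m z := chiP_succ m z
  have c2 : (1 + z ^ 2) * chiP (m + 2) z = chiP (m + 1) z := chiP_succ (m + 1) z
  have p0 := chiP_pos m z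
  have p1 := chiP_pos (m + 1) z
  have p2 := chiP_pos (m + 2) z
  have e : (q / 2 * chiP m z + z / 2 * (-2 * M * z * chiP (m + 1) z)
        + (-2 * M * chiP (m + 1) z + 4 * M * (M + 1) * (z ^ 2 * chiP (m + 2) z)) / 2)
      = q / 2 * chiP m z - M * ((1 + z ^ 2) * chiP (m + 1) z) + R * (z ^ 2 * chiP (m + 2) z) := by
    rw [hR]; ring
  rw [e, c1]
  have k1 : z ^ 2 * chiP (m + 2) z ≤ chiP (m + 1) z := by rw [← c2]; nlinarith
  have k2 : R * (z ^ 2 * chiP (m + 2) z) ≤ R * chiP (m + 1) z := by gcongr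
  have k3 : 2 * chiP m z ≤ (M - q / 2) * chiP m z := by gcongr; linarith
  have E0 := gaussE_pos z
  rcases le_total R (1 + z ^ 2) with h | h
  · have : R * chiP (m + 1) z ≤ chiP m z := by rw [← c1]; gcongr
    have : 0 ≤ (R + 1) * Real.exp (R / 2) * gaussE z := by positivity
    linarith
  · have : 1 ≤ Real.exp (R / 2) * gaussE z := by
      unfold gaussE; rw [← Real.exp_add]; apply Real.one_le_exp; linarith
    have h3 : R + 1 ≤ (R + 1) * Real.exp (R / 2) * gaussE z := by
      rw [mul_assoc]; exact le_mul_of_one_le_right (by linarith) this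
    have := mul_le_of_le_one_right R0 (chiP_le_one (m + 1) z)
    linarith

lemma continuous_chiP (m : ℕ) : Continuous (chiP m) :=
  continuous_iff_continuousAt.2 fun z => (hasDerivAt_chiP m z).continuousAt

lemma continuous_stdNormalCDF : Continuous stdNormalCDF :=
  continuous_iff_continuousAt.2 fun z => (hasDerivAt_stdNormalCDF z).continuousAt

set_option maxHeartbeats 4000000 in
theorem lyapunov (p : ℝ) (hp : 1 < p) :
    ∃ (m : ℕ) (v0 C H : ℝ) (F a b : ℝ → ℝ → ℝ), p + 1 ≤ m ∧ 1 ≤ v0 ∧ 0 < C ∧ 0 < H ∧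
      Measurable (fun x : ℝ × ℝ => F x.1 x.2) ∧ Measurable (fun x : ℝ × ℝ => a x.1 x.2) ∧
      Measurable (fun x : ℝ × ℝ => b x.1 x.2) ∧
      (∀ v s, v0 ≤ v → |F v s| ≤ C ∧ |a v s| ≤ C ∧ |b v s| ≤ C) ∧
      (∀ v r s X, v0 ≤ v → 0 ≤ r →
        F (v + r) s + a v s * X + b v s * (X ^ 2 - r) - C * (|X| ^ (2 * p) + r ^ p) ≤ F v (s + X)) ∧
      (∀ v s, v0 ≤ v → F v s ≤ 1) ∧
      (∀ v s, v0 ≤ v → v ≤ v0 + 2 → s ≤ -H → F v s ≤ 0) ∧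
      (∀ v s, v0 ≤ v → stdNormalCDF (s / √v) - C / √v * chiP m (s / √v) ≤ F v s) := by
  set q := p / (p - 1) with hq
  have p1 : 0 < p - 1 := by linarith
  have q1 : 1 < q := by rw [hq, one_lt_div p1]; linarith
  obtain ⟨m, hm⟩ := exists_nat_ge (q / 2 + 2 + (p + 1))
  have hm1 : q / 2 + 2 ≤ m := by linarith
  have hm2 : p + 1 ≤ m := by linarith
  obtain ⟨A, hA, hdiss⟩ := diss_lemma q1 hm1
  obtain ⟨B0, G0⟩ := goodH_Phi m
  obtain ⟨B1, G1, G1'⟩ := goodH_gaussE m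
  obtain ⟨B3, G3, G3'⟩ := goodH_chiP m
  have B0n := G0.Bnn
  have B1n := G1.Bnn
  have B3n := G3.Bnn
  obtain ⟨C0, hC0, t0⟩ := term_lemma hp (le_refl (0:ℝ)) G0 (fun z => by
    rw [zero_mul]; exact mul_nonneg B0n (chiP_pos m z).le)
  obtain ⟨C1, hC1, t1⟩ := term_lemma (α := 1 / 2) hp (by norm_num) G1 (fun z => by
    rw [abs_of_pos (gaussE_pos z)]; linarith [G1' z, gaussE_pos z])
  have G1q : GoodH m gaussE (fun z => -z * gaussE z)
    (fun z => (z ^ 2 - 1) * gaussE z) (fun z => (3 * z - z ^ 3) * gaussE z) (B1 + q / 2 * B1) := by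
    have hh : B1 ≤ B1 + q / 2 * B1 := by nlinarith
    exact ⟨G1.d0, G1.d1, G1.d2, fun z => (G1.b0 z).trans hh,
      fun z => (G1.b1 z).trans (mul_le_mul_of_nonneg_right hh (chiP_pos m z).le),
      fun z => (G1.b2 z).trans (mul_le_mul_of_nonneg_right hh (chiP_pos m z).le),
      fun z => (G1.b3 z).trans (mul_le_mul_of_nonneg_right hh (chiP_pos m z).le)⟩
  obtain ⟨C2, hC2, t2⟩ := term_lemma (α := q / 2) hp (by linarith) G1q (fun z => by
    rw [abs_of_pos (gaussE_pos z)]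
    have := mul_nonneg B1n (chiP_pos m z).le
    have := mul_le_mul_of_nonneg_left (G1' z) (by linarith : 0 ≤ q / 2)
    linarith)
  have G3q : GoodH m (chiP m) (fun z => -2 * m * z * chiP (m + 1) z)
    (fun z => -2 * m * chiP (m + 1) z + 4 * m * (m + 1) * (z ^ 2 * chiP (m + 2) z))
    (fun z => 12 * m * (m + 1) * (z * chiP (m + 2) z) - 8 * m * (m + 1) * (m + 2) * (z ^ 3 * chiP (m + 3) z))
    (B3 + q / 2 * B3) := by
    have hh : B3 ≤ B3 + q / 2 * B3 := by nlinarith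
    exact ⟨G3.d0, G3.d1, G3.d2, fun z => (G3.b0 z).trans hh,
      fun z => (G3.b1 z).trans (mul_le_mul_of_nonneg_right hh (chiP_pos m z).le),
      fun z => (G3.b2 z).trans (mul_le_mul_of_nonneg_right hh (chiP_pos m z).le),
      fun z => (G3.b3 z).trans (mul_le_mul_of_nonneg_right hh (chiP_pos m z).le)⟩
  obtain ⟨C3, hC3, t3⟩ := term_lemma (α := q / 2) hp (by linarith) G3q (fun z => by
    rw [abs_of_pos (chiP_pos m z)]
    have := mul_nonneg B3n (chiP_pos m z).le
    have := mul_le_mul_of_nonneg_left (G3' z) (by linarith : 0 ≤ q / 2)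
    linarith)
  set Ct := C0 + A * C1 + A * C2 + C3 with hCt
  have Ct0 : 0 < Ct := by positivity
  set Λ := 2 * Ct + 1 with hΛ
  have Λ1 : 1 ≤ Λ := by linarith
  have Λ0 : 0 < Λ := by linarith
  -- facts about powers
  have hpow : ∀ v, Λ ^ 2 ≤ v → 1 ≤ v ∧ 0 < v ^ (-(1 / 2) : ℝ) ∧ 0 < v ^ (-(q / 2)) ∧
      v ^ (-(q / 2)) ≤ v ^ (-(1 / 2) : ℝ) ∧ Λ * v ^ (-(1 / 2) : ℝ) ≤ 1 ∧ v ^ (-(1 / 2) : ℝ) = 1 / √v ∧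
      v ^ (-(1 / 2) : ℝ) ≤ 1 := by
    intro v hv
    have v1 : 1 ≤ v := le_trans (by nlinarith) hv
    have v0 : 0 < v := by linarith
    have e : v ^ (-(1 / 2) : ℝ) = 1 / √v := by
      rw [Real.rpow_neg v0.le, Real.sqrt_eq_rpow]; exact (one_div _).symm
    refine ⟨v1, Real.rpow_pos_of_pos v0 _, Real.rpow_pos_of_pos v0 _,
      Real.rpow_le_rpow_of_exponent_le v1 (by linarith), ?_, e,
      Real.rpow_le_one_of_one_le_of_nonpos v1 (by norm_num)⟩
    rw [e, mul_one_div, div_le_one (Real.sqrt_pos.2 v0)]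
    exact Real.le_sqrt_of_sq_le hv
  obtain ⟨BΦ, hBΦ, hΦ⟩ := stdNormalCDF_decay (m + 1)
  -- the terminal constant
  set κ := Λ * (Λ ^ 2 + 2) ^ (-(q / 2)) with hκ
  have κ0 : 0 < κ := by positivity
  set H := √(Λ ^ 2 + 2) * √(BΦ / κ) + 1 with hH
  set c0 := (√(2 * Real.pi))⁻¹ with hc0
  let F : ℝ → ℝ → ℝ := fun v s => stdNormalCDF (s / √v) - Λ * A * (v ^ (-(1 / 2) : ℝ) * gaussE (s / √v))
    + Λ * A * (v ^ (-(q / 2)) * gaussE (s / √v)) - Λ * (v ^ (-(q / 2)) * chiP m (s / √v))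
  let h1s : ℝ → ℝ → ℝ := fun v z => c0 * gaussE z - Λ * A * (v ^ (-(1 / 2) : ℝ) * (-z * gaussE z))
    + Λ * A * (v ^ (-(q / 2)) * (-z * gaussE z)) - Λ * (v ^ (-(q / 2)) * (-2 * m * z * chiP (m + 1) z))
  let h2s : ℝ → ℝ → ℝ := fun v z => c0 * (-z * gaussE z) - Λ * A * (v ^ (-(1 / 2) : ℝ) * ((z ^ 2 - 1) * gaussE z))
    + Λ * A * (v ^ (-(q / 2)) * ((z ^ 2 - 1) * gaussE z)) - Λ * (v ^ (-(q / 2)) *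
      (-2 * m * chiP (m + 1) z + 4 * m * (m + 1) * (z ^ 2 * chiP (m + 2) z)))
  let a : ℝ → ℝ → ℝ := fun v s => h1s v (s / √v) / √v
  let b : ℝ → ℝ → ℝ := fun v s => (h2s v (s / √v) / 2 - Ct * (v ^ (-(q / 2)) * chiP m (s / √v))) / v
  have mE : Measurable gaussE := continuous_gaussE.measurable
  have mC : ∀ k, Measurable (chiP k) := fun k => (continuous_chiP k).measurable
  have mP : Measurable stdNormalCDF := continuous_stdNormalCDF.measurable
  -- generic combination bound
  have comb : ∀ v, Λ ^ 2 ≤ v → ∀ x0 x1 x3 : ℝ, ∀ D0 D1 D3 : ℝ, |x0| ≤ D0 → |x1| ≤ D1 → |x3| ≤ D3 →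
      |x0 - Λ * A * (v ^ (-(1 / 2) : ℝ) * x1) + Λ * A * (v ^ (-(q / 2)) * x1) - Λ * (v ^ (-(q / 2)) * x3)|
        ≤ D0 + A * D1 + A * D1 + D3 := by
    intro v hv x0 x1 x3 D0 D1 D3 h0 h1 h3
    obtain ⟨v1, g0, g1, g2, g3, g4, g5⟩ := hpow v hv
    have g6 : Λ * v ^ (-(q / 2)) ≤ 1 := le_trans (by gcongr) g3
    have D1n : 0 ≤ D1 := (abs_nonneg _).trans h1
    have D3n : 0 ≤ D3 := (abs_nonneg _).trans h3
    refine (abs_sub _ _).trans (add_le_add ((abs_add_le _ _).trans (add_le_add ((abs_sub _ _).trans (add_le_add h0 ?_)) ?_)) ?_)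
    · rw [show Λ * A * (v ^ (-(1 / 2) : ℝ) * x1) = (Λ * v ^ (-(1 / 2) : ℝ)) * (A * x1) by ring,
        abs_mul (Λ * v ^ (-(1 / 2) : ℝ)) (A * x1), abs_mul A x1,
        abs_of_pos hA, abs_of_pos (by positivity : 0 < Λ * v ^ (-(1 / 2) : ℝ))]
      exact (mul_le_of_le_one_left (by positivity) g3).trans (by gcongr)
    · rw [show Λ * A * (v ^ (-(q / 2)) * x1) = (Λ * v ^ (-(q / 2))) * (A * x1) by ring,
        abs_mul (Λ * v ^ (-(q / 2))) (A * x1), abs_mul A x1,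
        abs_of_pos hA, abs_of_pos (by positivity : 0 < Λ * v ^ (-(q / 2)))]
      exact (mul_le_of_le_one_left (by positivity) g6).trans (by gcongr)
    · rw [← mul_assoc, abs_mul (Λ * v ^ (-(q / 2))) x3, abs_of_pos (by positivity : 0 < Λ * v ^ (-(q / 2)))]
      exact (mul_le_of_le_one_left (by positivity) g6).trans h3
  set Cb := B0 + A * B1 + A * B1 + B3 with hCb
  have Cb0 : 0 ≤ Cb := by positivity
  have hFb : ∀ v s, Λ ^ 2 ≤ v → |F v s| ≤ Cb := fun v s hv =>
    comb v hv _ _ _ _ _ _ (G0.b0 _) (G1.b0 _) (G3.b0 _)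
  have h1b : ∀ v z, Λ ^ 2 ≤ v → |h1s v z| ≤ Cb := fun v z hv =>
    comb v hv _ _ _ _ _ _ (G0.e1 z) (G1.e1 z) (G3.e1 z)
  have h2b : ∀ v z, Λ ^ 2 ≤ v → |h2s v z| ≤ Cb := fun v z hv =>
    comb v hv _ _ _ _ _ _ (G0.e2 z) (G1.e2 z) (G3.e2 z)
  have ΛAB : 0 ≤ Λ * A * B1 := by positivity
  have pL : 0 < Λ * A * B1 + Λ + Ct + Cb := by positivity
  refine ⟨m, Λ ^ 2, Λ * A * B1 + Λ + Ct + Cb, H, F, a, b, hm2, by nlinarith, pL, by positivity, ?_, ?_, ?_, ?_, ?_, ?_, ?_, ?_⟩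
  · simp only [F]; fun_prop
  · simp only [a, h1s]; fun_prop
  · simp only [b, h2s]; fun_prop
  · intro v s hv
    obtain ⟨v1, g0, g1, g2, g3, g4, g5⟩ := hpow v hv
    have v0 : 0 < v := by linarith
    have sv : 1 ≤ √v := Real.one_le_sqrt.2 v1
    refine ⟨(hFb v s hv).trans (by linarith), ?_, ?_⟩
    · simp only [a]
      rw [abs_div, abs_of_pos (by linarith : 0 < √v)]
      refine (div_le_self (abs_nonneg _) sv).trans ((h1b v _ hv).trans (by linarith))
    · simp only [b]
      rw [abs_div, abs_of_pos v0]
      refine (div_le_self (abs_nonneg _) v1).trans ((abs_sub _ _).trans ?_)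
      have k1 := h2b v (s / √v) hv
      have k2 : |Ct * (v ^ (-(q / 2)) * chiP m (s / √v))| ≤ Ct := by
        have := chiP_pos m (s / √v)
        rw [abs_of_pos (by positivity)]
        apply mul_le_of_le_one_right Ct0.le
        exact mul_le_one₀ (g2.trans g5) this.le (chiP_le_one _ _)
      rw [abs_div, abs_two]
      linarith
  · intro v r s X hv hr
    obtain ⟨v1, g0, g1, g2, g3, g4, g5⟩ := hpow v hv
    have v0 : 0 < v := by linarith
    set z := s / √v with hz
    have T0 := (abs_le.1 (t0 v r s X z v1 hr hz)).1
    have T1 := (abs_le.1 (t1 v r s X z v1 hr hz)).2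
    have T2 := (abs_le.1 (t2 v r s X z v1 hr hz)).1
    have T3 := (abs_le.1 (t3 v r s X z v1 hr hz)).2
    rw [← hq] at T0 T1 T2 T3
    rw [neg_div] at T0 T1 T2 T3
    simp only [neg_zero, Real.rpow_zero, one_mul] at T0
    set μ := v ^ (-(q / 2)) with hμ
    set ν := v ^ (-(1 / 2) : ℝ) with hν
    have cp := chiP_pos m z
    set W := μ * chiP m z * (X ^ 2 / v + r / v) with hW
    set P := |X| ^ (2 * p) + r ^ p with hP
    have W0 : 0 ≤ W := by positivity
    have P0 : 0 ≤ P := by positivity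
    have g6 : Λ * μ ≤ 1 := le_trans (by gcongr) g3
    have D := hdiss z
    have key : F v (s + X) - F (v + r) s ≥ h1s v z * (X / √v) + h2s v z / 2 * (X ^ 2 / v - r / v)
        + r / v * (Λ * μ * chiP m z) - Ct * (W + P) := by
      have ΛA : 0 ≤ Λ * A := by positivity
      have U1 := mul_le_mul_of_nonneg_left T1 ΛA
      have U2 := mul_le_mul_of_nonneg_left T2 ΛA
      have U3 := mul_le_mul_of_nonneg_left T3 Λ0.le
      have D' : r / v * (Λ * μ * chiP m z) ≤ r / v * (Λ * μ * (A * ((q - 1) / 2) * gaussE z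
      - (q / 2 * chiP m z + z / 2 * (-2 * m * z * chiP (m + 1) z)
        + (-2 * m * chiP (m + 1) z + 4 * m * (m + 1) * (z ^ 2 * chiP (m + 2) z)) / 2))) := by
        gcongr
      have w1 : Λ * A * (ν * (C1 * (W + P))) ≤ A * C1 * (W + P) := by
        rw [show Λ * A * (ν * (C1 * (W + P))) = (Λ * ν) * (A * C1 * (W + P)) by ring]
        exact mul_le_of_le_one_left (by positivity) g3
      have w2 : Λ * A * (μ * (C2 * (W + P))) ≤ A * C2 * (W + P) := by
        rw [show Λ * A * (μ * (C2 * (W + P))) = (Λ * μ) * (A * C2 * (W + P)) by ring]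
        exact mul_le_of_le_one_left (by positivity) g6
      have w3 : Λ * (μ * (C3 * (W + P))) ≤ C3 * (W + P) := by
        rw [← mul_assoc]
        exact mul_le_of_le_one_left (by positivity) g6
      simp only [F, h1s, h2s, ← hμ, ← hν]
      rw [hCt]
      linarith
    have fin : F (v + r) s + a v s * X + b v s * (X ^ 2 - r) - Ct * P ≤ F v (s + X) := by
      have e1 : a v s * X = h1s v z * (X / √v) := by simp only [a]; ring
      have e2 : b v s * (X ^ 2 - r) = (h2s v z / 2 - Ct * (μ * chiP m z)) * (X ^ 2 / v - r / v) := by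
        simp only [b, ← hz, ← hμ]; ring
      rw [e1, e2]
      have e3 : Ct * W = Ct * (μ * chiP m z) * (X ^ 2 / v - r / v) + r / v * (2 * Ct * (μ * chiP m z)) := by
        rw [hW]; ring
      have e4 : r / v * (2 * Ct * (μ * chiP m z)) ≤ r / v * (Λ * μ * chiP m z) := by
        rw [mul_assoc Λ]; gcongr; linarith
      linarith
    refine le_trans ?_ fin
    have : Ct * P ≤ (Λ * A * B1 + Λ + Ct + Cb) * P := by
      gcongr
      have : 0 ≤ Λ * A * B1 := by positivity
      linarith
    linarith
  · intro v s hv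
    obtain ⟨v1, g0, g1, g2, g3, g4, g5⟩ := hpow v hv
    have := stdNormalCDF_le_one (s / √v)
    have k1 : Λ * A * (v ^ (-(q / 2)) * gaussE (s / √v)) ≤ Λ * A * (v ^ (-(1 / 2) : ℝ) * gaussE (s / √v)) := by
      have := gaussE_pos (s / √v)
      gcongr
    have k2 : 0 ≤ Λ * (v ^ (-(q / 2)) * chiP m (s / √v)) := by
      have := chiP_pos m (s / √v)
      positivity
    simp only [F]
    linarith
  · intro v s hv hv2 hs
    obtain ⟨v1, g0, g1, g2, g3, g4, g5⟩ := hpow v hv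
    have v0 : 0 < v := by linarith
    have k1 : Λ * A * (v ^ (-(q / 2)) * gaussE (s / √v)) ≤ Λ * A * (v ^ (-(1 / 2) : ℝ) * gaussE (s / √v)) := by
      have := gaussE_pos (s / √v)
      gcongr
    have H0 : 0 < H := by positivity
    have sv : 0 < √v := Real.sqrt_pos.2 v0
    set z := s / √v with hz
    have z0 : z ≤ 0 := by rw [hz]; exact div_nonpos_of_nonpos_of_nonneg (by linarith) sv.le
    have zz : BΦ / κ ≤ 1 + z ^ 2 := by
      have h1 : √(BΦ / κ) ≤ -z := by
        rw [hz, ← neg_div, le_div_iff₀ sv]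
        calc √(BΦ / κ) * √v ≤ √(BΦ / κ) * √(Λ ^ 2 + 2) := by gcongr
          _ ≤ H := by rw [hH]; nlinarith
          _ ≤ -s := by linarith
      have h2 := Real.sqrt_nonneg (BΦ / κ)
      have h3 : √(BΦ / κ) ^ 2 = BΦ / κ := Real.sq_sqrt (by positivity)
      nlinarith
    have cs := chiP_succ m z
    have cp := chiP_pos (m + 1) z
    have k3 : stdNormalCDF z ≤ κ * chiP m z := by
      refine (hΦ z z0).trans ?_
      rw [← cs, ← mul_assoc]
      gcongr
      rw [div_le_iff₀ κ0] at zz; linarith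
    have k4 : κ * chiP m z ≤ Λ * (v ^ (-(q / 2)) * chiP m z) := by
      rw [hκ, mul_assoc]
      have := chiP_pos m z
      gcongr Λ * (?_ * _)
      exact Real.rpow_le_rpow_of_nonpos v0 hv2 (by linarith)
    simp only [F]
    linarith
  · intro v s hv
    obtain ⟨v1, g0, g1, g2, g3, g4, g5⟩ := hpow v hv
    set z := s / √v with hz
    have cp := chiP_pos m z
    have k1 : 0 ≤ Λ * A * (v ^ (-(q / 2)) * gaussE z) := by
      have := gaussE_pos z
      positivity
    have k2 : Λ * A * (v ^ (-(1 / 2) : ℝ) * gaussE z) ≤ Λ * A * (v ^ (-(1 / 2) : ℝ) * (B1 * chiP m z)) := by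
      gcongr; exact G1' z
    have k3 : Λ * (v ^ (-(q / 2)) * chiP m z) ≤ Λ * (v ^ (-(1 / 2) : ℝ) * chiP m z) :=
      mul_le_mul_of_nonneg_left (mul_le_mul_of_nonneg_right g2 cp.le) Λ0.le
    have k4 : (Λ * A * B1 + Λ + Ct + Cb) / √v * chiP m z =
        (Λ * A * B1 + Λ + Ct + Cb) * (v ^ (-(1 / 2) : ℝ) * chiP m z) := by rw [g4]; ring
    have k5 : (Λ * A * B1 + Λ) * (v ^ (-(1 / 2) : ℝ) * chiP m z) ≤ (Λ * A * B1 + Λ + Ct + Cb) * (v ^ (-(1 / 2) : ℝ) * chiP m z) :=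
      mul_le_mul_of_nonneg_right (by linarith) (mul_pos g0 cp).le
    simp only [F, ← hz]
    rw [k4]
    linarith


/-- Abstract data of a martingale difference sequence `Y` with conditional variances `c`. -/
structure Setup {Ω : Type} {mΩ : MeasurableSpace Ω} (μ : Measure Ω) (ℱ : Filtration ℕ mΩ) (n : ℕ)
    (p : ℝ) (Y c : ℕ → Ω → ℝ) : Prop where
  mY : ∀ i < n, Measurable[ℱ (i + 1)] (Y i)
  mc : ∀ i < n, Measurable[ℱ i] (c i)
  cn : ∀ i ω, 0 ≤ c i ω
  z1 : ∀ i < n, ∀ g : Ω → ℝ, Measurable[ℱ i] g → (∃ K, ∀ ω, |g ω| ≤ K) → ∫ ω, g ω * Y i ω ∂μ = 0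
  z2 : ∀ i < n, ∀ g : Ω → ℝ, Measurable[ℱ i] g → (∃ K, ∀ ω, |g ω| ≤ K) →
    ∫ ω, g ω * Y i ω ^ 2 ∂μ = ∫ ω, g ω * c i ω ∂μ
  iY : ∀ i < n, Integrable (Y i) μ
  iY2 : ∀ i < n, Integrable (fun ω => Y i ω ^ 2) μ
  ic : ∀ i < n, Integrable (c i) μ
  ip : ∀ i < n, Integrable (fun ω => |Y i ω| ^ (2 * p)) μ
  icp : ∀ i < n, Integrable (fun ω => c i ω ^ p) μ
  lcp : ∀ i < n, ∫ ω, c i ω ^ p ∂μ ≤ ∫ ω, |Y i ω| ^ (2 * p) ∂μ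

/-- partial sums -/
def psum {Ω : Type} (c : ℕ → Ω → ℝ) (k : ℕ) (ω : Ω) : ℝ := ∑ i ∈ range k, c i ω

open Classical in
/-- predictable stopping indicator -/
noncomputable def stopB {Ω : Type} (c : ℕ → Ω → ℝ) (M : ℝ) (k : ℕ) (ω : Ω) : ℝ :=
  if psum c (k + 1) ω ≤ M then 1 else 0

/-- stopped sums -/
noncomputable def ssum {Ω : Type} (c : ℕ → Ω → ℝ) (M : ℝ) (y : ℕ → Ω → ℝ) (k : ℕ) (ω : Ω) : ℝ :=
  ∑ i ∈ range k, stopB c M i ω * y i ω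

section stopped_time
variable {Ω : Type} {c : ℕ → Ω → ℝ} {M : ℝ}

lemma stopB_cases (k : ℕ) (ω : Ω) :
    (stopB c M k ω = 1 ∧ psum c (k + 1) ω ≤ M) ∨ (stopB c M k ω = 0 ∧ M < psum c (k + 1) ω) := by
  unfold stopB; split_ifs with h
  · exact Or.inl ⟨rfl, h⟩
  · exact Or.inr ⟨rfl, not_le.1 h⟩

lemma stopB_nonneg (k : ℕ) (ω : Ω) : 0 ≤ stopB c M k ω := by
  rcases stopB_cases (c := c) (M := M) k ω with h | h <;> rw [h.1] <;> norm_num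

lemma stopB_le_one (k : ℕ) (ω : Ω) : stopB c M k ω ≤ 1 := by
  rcases stopB_cases (c := c) (M := M) k ω with h | h <;> rw [h.1] <;> norm_num

lemma ssum_le (hc : ∀ i ω, 0 ≤ c i ω) (hM : 0 ≤ M) (k : ℕ) (ω : Ω) :
    ssum c M c k ω ≤ M ∧ ssum c M c k ω ≤ psum c k ω := by
  induction k with
  | zero => simp [ssum, psum, hM]
  | succ k ih =>
    have e1 : ssum c M c (k + 1) ω = ssum c M c k ω + stopB c M k ω * c k ω := sum_range_succ _ _
    have e2 : psum c (k + 1) ω = psum c k ω + c k ω := sum_range_succ _ _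
    have := hc k ω
    rcases stopB_cases (c := c) (M := M) k ω with h | h <;> rw [h.1] at e1 <;> constructor <;> linarith [h.2]

lemma psum_mono (hc : ∀ i ω, 0 ≤ c i ω) {j k : ℕ} (h : j ≤ k) (ω : Ω) : psum c j ω ≤ psum c k ω :=
  sum_le_sum_of_subset_of_nonneg (range_subset_range.2 h) fun i _ _ => hc i ω

lemma ssum_eq (hc : ∀ i ω, 0 ≤ c i ω) (y : ℕ → Ω → ℝ) (k : ℕ) (ω : Ω) (h : psum c k ω ≤ M) :
    ssum c M y k ω = psum y k ω := by
  refine sum_congr rfl fun i hi => ?_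
  have h1 := psum_mono hc (Nat.succ_le_of_lt (mem_range.1 hi)) ω
  rcases stopB_cases (c := c) (M := M) i ω with h' | h'
  · rw [h'.1, one_mul]
  · exact absurd h'.2 (not_lt.2 (h1.trans h))

end stopped_time

section core
variable {Ω : Type} {mΩ : MeasurableSpace Ω} {μ : Measure Ω} {ℱ : Filtration ℕ mΩ} {n : ℕ}
    {p : ℝ} {Y c : ℕ → Ω → ℝ}

lemma Setup.m_stopB (h : Setup μ ℱ n p Y c) (M : ℝ) {k : ℕ} (hk : k < n) : Measurable[ℱ k] (stopB c M k) := by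
  unfold stopB
  refine Measurable.ite ?_ measurable_const measurable_const
  have : Measurable[ℱ k] (psum c (k + 1)) := by
    unfold psum
    refine Finset.measurable_sum _ fun i hi => ?_
    have hi := mem_range.1 hi
    exact (h.mc i (by omega)).mono (ℱ.mono (by omega)) le_rfl
  exact measurableSet_le this measurable_const

lemma Setup.m_ssumc (h : Setup μ ℱ n p Y c) (M : ℝ) {k : ℕ} (hk : k < n) :
    Measurable[ℱ k] (ssum c M c (k + 1)) := by
  unfold ssum
  refine Finset.measurable_sum _ fun i hi => ?_
  have hi := mem_range.1 hi
  exact ((h.m_stopB M (by omega)).mul (h.mc i (by omega))).mono (ℱ.mono (by omega)) le_rfl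

lemma Setup.m_ssumy (h : Setup μ ℱ n p Y c) (M : ℝ) {k : ℕ} (hk : k ≤ n) {y : ℕ → Ω → ℝ}
    (hy : ∀ i < n, Measurable[ℱ (i + 1)] (y i)) :
    Measurable[ℱ k] (ssum c M y k) := by
  unfold ssum
  refine Finset.measurable_sum _ fun i hi => ?_
  have hi := mem_range.1 hi
  exact ((h.m_stopB M (by omega)).mono (ℱ.mono (by omega)) le_rfl).mul
    ((hy i (by omega)).mono (ℱ.mono (by omega)) le_rfl)

lemma Setup.m_ssumc_le (h : Setup μ ℱ n p Y c) (M : ℝ) {k : ℕ} (hk : k ≤ n) :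
    Measurable[ℱ k] (ssum c M c k) :=
  h.m_ssumy M hk fun i hi => (h.mc i hi).mono (ℱ.mono (by omega)) le_rfl

end core


/-- Lyapunov data, as produced by `lyapunov`. -/
structure Lyap (p : ℝ) (m : ℕ) (v0 C H : ℝ) (F a b : ℝ → ℝ → ℝ) : Prop where
  hm : p + 1 ≤ m
  hv0 : 1 ≤ v0
  hC : 0 < C
  hH : 0 < H
  mF : Measurable (fun x : ℝ × ℝ => F x.1 x.2)
  ma : Measurable (fun x : ℝ × ℝ => a x.1 x.2)
  mb : Measurable (fun x : ℝ × ℝ => b x.1 x.2)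
  bd : ∀ v s, v0 ≤ v → |F v s| ≤ C ∧ |a v s| ≤ C ∧ |b v s| ≤ C
  step : ∀ v r s X, v0 ≤ v → 0 ≤ r →
        F (v + r) s + a v s * X + b v s * (X ^ 2 - r) - C * (|X| ^ (2 * p) + r ^ p) ≤ F v (s + X)
  le1 : ∀ v s, v0 ≤ v → F v s ≤ 1
  le0 : ∀ v s, v0 ≤ v → v ≤ v0 + 2 → s ≤ -H → F v s ≤ 0
  lower : ∀ v s, v0 ≤ v → stdNormalCDF (s / √v) - C / √v * chiP m (s / √v) ≤ F v s

theorem exists_lyap (p : ℝ) (hp : 1 < p) : ∃ m v0 C H F a b, Lyap p m v0 C H F a b := by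
  obtain ⟨m, v0, C, H, F, a, b, h1, h2, h3, h4, h5, h6, h7, h8, h9, h10, h11, h12⟩ := lyapunov p hp
  exact ⟨m, v0, C, H, F, a, b, h1, h2, h3, h4, h5, h6, h7, h8, h9, h10, h11, h12⟩

section core2
variable {Ω : Type} {mΩ : MeasurableSpace Ω} {μ : Measure Ω} {ℱ : Filtration ℕ mΩ} {n : ℕ}
    {p : ℝ} {Y c : ℕ → Ω → ℝ}

lemma meas_comp2 {m' : MeasurableSpace Ω} {G : ℝ → ℝ → ℝ} (hG : Measurable (fun x : ℝ × ℝ => G x.1 x.2))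
    {v s : Ω → ℝ} (hv : Measurable[m'] v) (hs : Measurable[m'] s) : Measurable[m'] (fun ω => G (v ω) (s ω)) :=
  hG.comp (hv.prodMk hs)

lemma integrable_bdd [IsProbabilityMeasure μ] {f : Ω → ℝ} (hf : Measurable f) {K : ℝ} (hK : ∀ ω, |f ω| ≤ K) :
    Integrable f μ :=
  Integrable.of_bound hf.aestronglyMeasurable K (Eventually.of_forall hK)

lemma integrable_bdd_mul [IsProbabilityMeasure μ] {f g : Ω → ℝ} (hf : Measurable f) {K : ℝ} (hK : ∀ ω, |f ω| ≤ K)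
    (hg : Integrable g μ) : Integrable (fun ω => f ω * g ω) μ :=
  hg.bdd_mul hf.aestronglyMeasurable (Eventually.of_forall hK)

lemma int6 {f0 f1 f2 f3 f4 f5 : Ω → ℝ} (h0 : Integrable f0 μ) (h1 : Integrable f1 μ) (h2 : Integrable f2 μ)
    (h3 : Integrable f3 μ) (h4 : Integrable f4 μ) (h5 : Integrable f5 μ) :
    ∫ ω, (f0 ω - f1 ω + f2 ω - f3 ω - f4 ω - f5 ω) ∂μ = ∫ ω, f0 ω ∂μ - ∫ ω, f1 ω ∂μ + ∫ ω, f2 ω ∂μ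
      - ∫ ω, f3 ω ∂μ - ∫ ω, f4 ω ∂μ - ∫ ω, f5 ω ∂μ := by
  have a1 : Integrable (fun ω => f0 ω - f1 ω) μ := h0.sub h1
  have a2 : Integrable (fun ω => f0 ω - f1 ω + f2 ω) μ := a1.add h2
  have a3 : Integrable (fun ω => f0 ω - f1 ω + f2 ω - f3 ω) μ := a2.sub h3
  have a4 : Integrable (fun ω => f0 ω - f1 ω + f2 ω - f3 ω - f4 ω) μ := a3.sub h4
  rw [integral_sub a4 h5, integral_sub a3 h4, integral_sub a2 h3, integral_add a1 h2, integral_sub h0 h1]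

theorem core_step [IsProbabilityMeasure μ] (hp : 1 < p) {m : ℕ} {v0 C H : ℝ} {F a b : ℝ → ℝ → ℝ}
    (L : Lyap p m v0 C H F a b) (h : Setup μ ℱ n p Y c) {M : ℝ} (hM : 0 ≤ M) (x : ℝ) {k : ℕ} (hk : k < n) :
    ∫ ω, F (v0 + M - ssum c M c k ω) (x - ssum c M Y k ω) ∂μ - 2 * C * ∫ ω, |Y k ω| ^ (2 * p) ∂μ
     ≤ ∫ ω, F (v0 + M - ssum c M c (k + 1) ω) (x - ssum c M Y (k + 1) ω) ∂μ := by
  have hv : ∀ k ω, v0 ≤ v0 + M - ssum c M c k ω := fun k ω => by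
    linarith [(ssum_le h.cn hM k ω).1]
  have mB := h.m_stopB M hk
  have mv1 : Measurable[ℱ k] fun ω => v0 + M - ssum c M c (k + 1) ω :=
    measurable_const.sub (h.m_ssumc M hk)
  have mv0 : Measurable[ℱ k] fun ω => v0 + M - ssum c M c k ω :=
    measurable_const.sub (h.m_ssumc_le M hk.le)
  have ms0 : Measurable[ℱ k] fun ω => x - ssum c M Y k ω :=
    measurable_const.sub (h.m_ssumy M hk.le h.mY)
  have ms1 : Measurable[ℱ (k + 1)] fun ω => x - ssum c M Y (k + 1) ω :=
    measurable_const.sub (h.m_ssumy M hk h.mY)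
  have mF0 := meas_comp2 L.mF mv0 ms0
  have mF1 := meas_comp2 L.mF (mv1.mono (ℱ.mono (Nat.le_succ k)) le_rfl) ms1
  have ma := meas_comp2 L.ma mv1 ms0
  have mb := meas_comp2 L.mb mv1 ms0
  have i0 := integrable_bdd (μ := μ) (mF0.mono (ℱ.le k) le_rfl) (fun ω => (L.bd _ _ (hv k ω)).1)
  have i1 := integrable_bdd (μ := μ) (mF1.mono (ℱ.le _) le_rfl) (fun ω => (L.bd _ _ (hv (k + 1) ω)).1)
  set A : Ω → ℝ := fun ω => a (v0 + M - ssum c M c (k + 1) ω) (x - ssum c M Y k ω) * stopB c M k ω with hA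
  set B : Ω → ℝ := fun ω => b (v0 + M - ssum c M c (k + 1) ω) (x - ssum c M Y k ω) * stopB c M k ω with hB
  have mA : Measurable[ℱ k] A := ma.mul mB
  have mB' : Measurable[ℱ k] B := mb.mul mB
  have bA : ∀ ω, |A ω| ≤ C := fun ω => by
    rw [hA]; simp only [abs_mul]
    rw [abs_of_nonneg (stopB_nonneg k ω)]
    exact (mul_le_of_le_one_right (abs_nonneg _) (stopB_le_one k ω)).trans (L.bd _ _ (hv (k + 1) ω)).2.1
  have bB : ∀ ω, |B ω| ≤ C := fun ω => by
    rw [hB]; simp only [abs_mul]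
    rw [abs_of_nonneg (stopB_nonneg k ω)]
    exact (mul_le_of_le_one_right (abs_nonneg _) (stopB_le_one k ω)).trans (L.bd _ _ (hv (k + 1) ω)).2.2
  have ia := integrable_bdd_mul (mA.mono (ℱ.le _) le_rfl) bA (h.iY k hk)
  have ib := integrable_bdd_mul (mB'.mono (ℱ.le _) le_rfl) bB (h.iY2 k hk)
  have ib' := integrable_bdd_mul (mB'.mono (ℱ.le _) le_rfl) bB (h.ic k hk)
  have e1 := h.z1 k hk A mA ⟨C, bA⟩
  have e2 := h.z2 k hk B mB' ⟨C, bB⟩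
  have pt : ∀ ω, F (v0 + M - ssum c M c k ω) (x - ssum c M Y k ω) - A ω * Y k ω
      + B ω * Y k ω ^ 2 - B ω * c k ω - C * |Y k ω| ^ (2 * p) - C * c k ω ^ p
      ≤ F (v0 + M - ssum c M c (k + 1) ω) (x - ssum c M Y (k + 1) ω) := by
    intro ω
    have s1 : ssum c M c (k + 1) ω = ssum c M c k ω + stopB c M k ω * c k ω := sum_range_succ _ _
    have s2 : ssum c M Y (k + 1) ω = ssum c M Y k ω + stopB c M k ω * Y k ω := sum_range_succ _ _
    have hc := h.cn k ω
    have hb := stopB_nonneg (c := c) (M := M) k ω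
    have st := L.step (v0 + M - ssum c M c (k + 1) ω) (stopB c M k ω * c k ω) (x - ssum c M Y k ω)
      (-(stopB c M k ω * Y k ω)) (hv _ ω) (by positivity)
    have t1 : v0 + M - ssum c M c (k + 1) ω + stopB c M k ω * c k ω = v0 + M - ssum c M c k ω := by
      rw [s1]; ring
    have t2 : x - ssum c M Y k ω + -(stopB c M k ω * Y k ω) = x - ssum c M Y (k + 1) ω := by
      rw [s2]; ring
    rw [t1, t2] at st
    refine le_trans ?_ st
    have P1 : 0 ≤ |Y k ω| ^ (2 * p) := by positivity
    have P2 : 0 ≤ c k ω ^ p := by positivity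
    have C0 := L.hC.le
    have w := mul_nonneg C0 P1
    have w' := mul_nonneg C0 P2
    simp only [hA, hB]
    rcases stopB_cases (c := c) (M := M) k ω with h' | h' <;> rw [h'.1]
    · simp only [one_mul, mul_one, abs_neg]
      linarith
    · simp only [zero_mul, mul_zero, neg_zero, abs_zero]
      rw [Real.zero_rpow (by linarith : p ≠ 0), Real.zero_rpow (by linarith : 2 * p ≠ 0)]
      linarith
  have ip := (h.ip k hk).const_mul C
  have icp := (h.icp k hk).const_mul C
  have key := integral_mono (((((i0.sub ia).add ib).sub ib').sub ip).sub icp) i1 pt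
  have ee : ∫ ω, (F (v0 + M - ssum c M c k ω) (x - ssum c M Y k ω) - A ω * Y k ω
      + B ω * Y k ω ^ 2 - B ω * c k ω - C * |Y k ω| ^ (2 * p) - C * c k ω ^ p) ∂μ
      = ∫ ω, F (v0 + M - ssum c M c k ω) (x - ssum c M Y k ω) ∂μ - ∫ ω, A ω * Y k ω ∂μ
        + ∫ ω, B ω * Y k ω ^ 2 ∂μ - ∫ ω, B ω * c k ω ∂μ - C * ∫ ω, |Y k ω| ^ (2 * p) ∂μ - C * ∫ ω, c k ω ^ p ∂μ := by
    rw [int6 i0 ia ib ib' ip icp, integral_const_mul, integral_const_mul]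
  have key' := ee ▸ key
  rw [e1, e2] at key'
  have := mul_le_mul_of_nonneg_left (h.lcp k hk) L.hC.le
  linarith

theorem core_main [IsProbabilityMeasure μ] (hp : 1 < p) {m : ℕ} {v0 C H : ℝ} {F a b : ℝ → ℝ → ℝ}
    (L : Lyap p m v0 C H F a b) (h : Setup μ ℱ n p Y c) {T : ℝ} (hT : 0 ≤ T) (x : ℝ) :
    F (v0 + (T + 1)) x - 2 * C * ∑ i ∈ range n, ∫ ω, |Y i ω| ^ (2 * p) ∂μ
      - μ.real {ω | 1 < |psum c n ω - T|} ≤ μ.real {ω | psum Y n ω ≤ x + H} := by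
  have hM : 0 ≤ T + 1 := by linarith
  set M := T + 1 with hMd
  have hv : ∀ k ω, v0 ≤ v0 + M - ssum c M c k ω := fun k ω => by
    linarith [(ssum_le h.cn hM k ω).1]
  have ind : ∀ k, k ≤ n → F (v0 + M) x - 2 * C * ∑ i ∈ range k, ∫ ω, |Y i ω| ^ (2 * p) ∂μ
      ≤ ∫ ω, F (v0 + M - ssum c M c k ω) (x - ssum c M Y k ω) ∂μ := by
    intro k
    induction k with
    | zero => intro _; simp [ssum]
    | succ k ih =>
      intro hk
      have := core_step hp L h hM x (Nat.lt_of_succ_le hk)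
      have := ih (by omega)
      rw [sum_range_succ]; linarith
  have h1 := ind n le_rfl
  have mc : Measurable (psum c n) := Finset.measurable_sum _ fun i hi =>
    (h.mc i (mem_range.1 hi)).mono (ℱ.le _) le_rfl
  have mY : Measurable (psum Y n) := Finset.measurable_sum _ fun i hi =>
    (h.mY i (mem_range.1 hi)).mono (ℱ.le _) le_rfl
  have S1 : MeasurableSet {ω | 1 < |psum c n ω - T|} :=
    measurableSet_lt measurable_const (mc.sub_const T).abs
  have S2 : MeasurableSet {ω | psum Y n ω ≤ x + H} := measurableSet_le mY measurable_const
  have mF := (meas_comp2 L.mF (measurable_const.sub (h.m_ssumc_le M le_rfl) : Measurable[ℱ n] fun ω => v0 + M - ssum c M c n ω)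
    (measurable_const.sub (h.m_ssumy M le_rfl h.mY) : Measurable[ℱ n] fun ω => x - ssum c M Y n ω)).mono (ℱ.le _) le_rfl
  have iF := integrable_bdd (μ := μ) mF (fun ω => (L.bd _ _ (hv n ω)).1)
  have I1 : Integrable ({ω | 1 < |psum c n ω - T|}.indicator (fun _ => (1:ℝ))) μ := (integrable_const _).indicator S1
  have I2 : Integrable ({ω | psum Y n ω ≤ x + H}.indicator (fun _ => (1:ℝ))) μ := (integrable_const _).indicator S2
  have key := integral_mono iF (I1.add I2) (fun ω => by
    show F (v0 + M - ssum c M c n ω) (x - ssum c M Y n ω) ≤ Set.indicator _ _ ω + Set.indicator _ _ ω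
    have le1 := L.le1 _ (x - ssum c M Y n ω) (hv n ω)
    have n2 : 0 ≤ Set.indicator {ω | psum Y n ω ≤ x + H} (fun _ => (1:ℝ)) ω :=
      Set.indicator_nonneg (fun _ _ => zero_le_one) _
    by_cases hbad : 1 < |psum c n ω - T|
    · rw [Set.indicator_of_mem (show ω ∈ {ω | 1 < |psum c n ω - T|} from hbad)]; linarith
    · rw [Set.indicator_of_notMem (show ω ∉ {ω | 1 < |psum c n ω - T|} from hbad)]
      rw [not_lt, abs_le] at hbad
      by_cases hS : psum Y n ω ≤ x + H
      · rw [Set.indicator_of_mem (show ω ∈ {ω | psum Y n ω ≤ x + H} from hS)]; linarith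
      · have q1 : psum c n ω ≤ M := by linarith
        have q2 := ssum_eq h.cn c n ω q1
        have q3 := ssum_eq h.cn Y n ω q1
        have := L.le0 _ (x - ssum c M Y n ω) (hv n ω) (by rw [q2]; linarith) (by rw [q3]; linarith)
        linarith)
  have key2 : ∫ ω, ({ω | 1 < |psum c n ω - T|}.indicator (fun _ => (1:ℝ)) + {ω | psum Y n ω ≤ x + H}.indicator (fun _ => (1:ℝ))) ω ∂μ
     = μ.real {ω | 1 < |psum c n ω - T|} + μ.real {ω | psum Y n ω ≤ x + H} := by
    simp only [Pi.add_apply]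
    rw [integral_add I1 I2, integral_indicator_const _ S1, integral_indicator_const _ S2]
    simp
  have key3 := h1.trans (key.trans_eq key2)
  linarith

end core2


section qv
variable {Ω : Type} {mΩ : MeasurableSpace Ω} {μ : Measure Ω} {ℱ : Filtration ℕ mΩ} {n : ℕ}
    {p : ℝ} {Y c : ℕ → Ω → ℝ}

/-- truncated squares -/
noncomputable def truncSq (Y : ℕ → Ω → ℝ) (l : ℝ) (i : ℕ) (ω : Ω) : ℝ :=
  Set.indicator {y : ℝ | |y| ≤ l} (fun y => y ^ 2) (Y i ω)

lemma truncSq_nonneg (l : ℝ) (i : ℕ) (ω : Ω) : 0 ≤ truncSq Y l i ω :=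
  Set.indicator_nonneg (fun y _ => sq_nonneg y) _

lemma truncSq_le (l : ℝ) (i : ℕ) (ω : Ω) : truncSq Y l i ω ≤ Y i ω ^ 2 :=
  Set.indicator_le_self' (fun y _ => sq_nonneg y) _

lemma truncSq_le' {l : ℝ} (hl : 0 ≤ l) (i : ℕ) (ω : Ω) : truncSq Y l i ω ≤ l ^ 2 := by
  unfold truncSq
  by_cases h : |Y i ω| ≤ l
  · rw [Set.indicator_of_mem (show Y i ω ∈ {y : ℝ | |y| ≤ l} from h), ← sq_abs]
    gcongr
  · rw [Set.indicator_of_notMem (show Y i ω ∉ {y : ℝ | |y| ≤ l} from h)]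
    positivity

lemma Setup.m_trunc (h : Setup μ ℱ n p Y c) (l : ℝ) (i : ℕ) (hi : i < n) : Measurable[ℱ (i + 1)] (truncSq Y l i) :=
  ((measurable_id.pow_const 2).indicator (measurableSet_le measurable_id.abs measurable_const)).comp (h.mY i hi)

lemma exp_quad {t : ℝ} (h1 : t ≤ 1) (h0 : 0 ≤ t) : Real.exp t ≤ 1 + t + t ^ 2 := by
  have := Real.abs_exp_sub_one_sub_id_le (x := t) (by rw [abs_of_nonneg h0]; exact h1)
  linarith [(abs_le.1 this).2]

/-- exponential supermartingale -/
noncomputable def expS (Y c : ℕ → Ω → ℝ) (M l : ℝ) (k : ℕ) (ω : Ω) : ℝ :=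
  Real.exp (ssum c M (truncSq Y l) k ω / l - (1 / l + 1) * ssum c M c k ω)

lemma ssum_nonneg {M : ℝ} {y : ℕ → Ω → ℝ} (hy : ∀ i ω, 0 ≤ y i ω) (k : ℕ) (ω : Ω) : 0 ≤ ssum c M y k ω :=
  sum_nonneg fun i _ => mul_nonneg (stopB_nonneg i ω) (hy i ω)

lemma expS_le (hc : ∀ i ω, 0 ≤ c i ω) {M l : ℝ} (hl : 0 < l) (k : ℕ) (ω : Ω) :
    expS Y c M l k ω ≤ Real.exp (k * l) := by
  unfold expS
  apply Real.exp_le_exp.2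
  have h1 : ssum c M (truncSq Y l) k ω ≤ k * l ^ 2 := by
    unfold ssum
    calc _ ≤ ∑ i ∈ range k, l ^ 2 := sum_le_sum fun i _ =>
          (mul_le_of_le_one_left (truncSq_nonneg l i ω) (stopB_le_one i ω)).trans (truncSq_le' hl.le i ω)
      _ = _ := by simp
  have h2 : 0 ≤ (1 / l + 1) * ssum c M c k ω := mul_nonneg (by positivity) (ssum_nonneg hc k ω)
  have h3 : ssum c M (truncSq Y l) k ω / l ≤ k * l := by
    rw [div_le_iff₀ hl]; linarith
  linarith

lemma Setup.m_expS (h : Setup μ ℱ n p Y c) (M l : ℝ) {k : ℕ} (hk : k ≤ n) : Measurable[ℱ k] (expS Y c M l k) :=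
  Real.measurable_exp.comp (((h.m_ssumy M hk (h.m_trunc l)).div_const l).sub
    ((h.m_ssumc_le M hk).const_mul (1 / l + 1)))

lemma expS_step [IsProbabilityMeasure μ] (h : Setup μ ℱ n p Y c) {M l : ℝ} (hl : 0 < l) (hl1 : l ≤ 1)
    {k : ℕ} (hk : k < n) : ∫ ω, expS Y c M l (k + 1) ω ∂μ ≤ ∫ ω, expS Y c M l k ω ∂μ := by
  set κ := 1 / l + 1 with hκ
  have κ0 : 0 < κ := by positivity
  set g : Ω → ℝ := fun ω => expS Y c M l k ω * Real.exp (-(κ * (stopB c M k ω * c k ω))) with hg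
  have mB := h.m_stopB M hk
  have mg : Measurable[ℱ k] g := (h.m_expS M l hk.le).mul
    (Real.measurable_exp.comp (((mB.mul (h.mc k hk)).const_mul κ).neg))
  have E0 : ∀ k ω, 0 < expS Y c M l k ω := fun k ω => Real.exp_pos _
  have g0 : ∀ ω, 0 < g ω := fun ω => mul_pos (E0 k ω) (Real.exp_pos _)
  have gb : ∀ ω, |g ω| ≤ Real.exp (k * l) := fun ω => by
    rw [abs_of_pos (g0 ω)]
    refine (mul_le_of_le_one_right (E0 k ω).le ?_).trans (expS_le h.cn hl k ω)
    apply Real.exp_le_one_iff.2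
    have := mul_nonneg κ0.le (mul_nonneg (stopB_nonneg (c := c) (M := M) k ω) (h.cn k ω))
    linarith
  set B : Ω → ℝ := fun ω => κ * (g ω * stopB c M k ω) with hB
  have mBB : Measurable[ℱ k] B := (mg.mul mB).const_mul κ
  have bB : ∀ ω, |B ω| ≤ κ * Real.exp (k * l) := fun ω => by
    rw [hB]; simp only [abs_mul, abs_of_pos κ0, abs_of_nonneg (stopB_nonneg (c := c) (M := M) k ω)]
    gcongr
    exact (mul_le_of_le_one_right (abs_nonneg _) (stopB_le_one k ω)).trans (gb ω)
  have B0 : ∀ ω, 0 ≤ B ω := fun ω => mul_nonneg κ0.le (mul_nonneg (g0 ω).le (stopB_nonneg k ω))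
  have ig := integrable_bdd (μ := μ) (mg.mono (ℱ.le _) le_rfl) gb
  have i2 := integrable_bdd_mul (mBB.mono (ℱ.le _) le_rfl) bB (h.iY2 k hk)
  have ic := integrable_bdd_mul (mBB.mono (ℱ.le _) le_rfl) bB (h.ic k hk)
  have iE : ∀ k ≤ n, Integrable (expS Y c M l k) μ := fun k hk =>
    integrable_bdd ((h.m_expS M l hk).mono (ℱ.le _) le_rfl) (K := Real.exp (k * l))
      (fun ω => by rw [abs_of_pos (E0 k ω)]; exact expS_le h.cn hl k ω)
  have s1 : ∀ ω, expS Y c M l (k + 1) ω ≤ g ω + B ω * Y k ω ^ 2 := by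
    intro ω
    have e : expS Y c M l (k + 1) ω = g ω * Real.exp (stopB c M k ω * truncSq Y l k ω / l) := by
      simp only [expS, hg, ssum, sum_range_succ]
      rw [← Real.exp_add, ← Real.exp_add]
      congr 1; ring
    have t0 := truncSq_nonneg (Y := Y) l k ω
    have t1 := truncSq_le' (Y := Y) hl.le k ω
    have t2 := truncSq_le (Y := Y) l k ω
    have tt : Real.exp (stopB c M k ω * truncSq Y l k ω / l) ≤ 1 + κ * stopB c M k ω * truncSq Y l k ω := by
      rcases stopB_cases (c := c) (M := M) k ω with h' | h' <;> rw [h'.1]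
      · rw [one_mul]
        refine (exp_quad ?_ (by positivity)).trans ?_
        · rw [div_le_one hl]; nlinarith
        · have : (truncSq Y l k ω / l) ^ 2 ≤ truncSq Y l k ω := by
            rw [div_pow, div_le_iff₀ (by positivity), sq]
            gcongr
          rw [hκ]
          have e : (1 / l + 1) * 1 * truncSq Y l k ω = truncSq Y l k ω / l + truncSq Y l k ω := by ring
          linarith
      · simp
    rw [e]
    calc _ ≤ g ω * (1 + κ * stopB c M k ω * truncSq Y l k ω) := mul_le_mul_of_nonneg_left tt (g0 ω).le
      _ = g ω + B ω * truncSq Y l k ω := by simp only [hB]; ring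
      _ ≤ _ := by linarith [mul_le_mul_of_nonneg_left t2 (B0 ω)]
  have s2 : ∀ ω, g ω + B ω * c k ω ≤ expS Y c M l k ω := by
    intro ω
    have : 1 + κ * (stopB c M k ω * c k ω) ≤ Real.exp (κ * (stopB c M k ω * c k ω)) := by
      have := Real.add_one_le_exp (κ * (stopB c M k ω * c k ω)); linarith
    calc _ = g ω * (1 + κ * (stopB c M k ω * c k ω)) := by simp only [hB]; ring
      _ ≤ g ω * Real.exp (κ * (stopB c M k ω * c k ω)) := mul_le_mul_of_nonneg_left this (g0 ω).le
      _ = _ := by simp only [hg]; rw [mul_assoc, ← Real.exp_add]; simp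
  have j1 := integral_mono (iE _ hk) (ig.add i2) s1
  have j2 := integral_mono (ig.add ic) (iE _ hk.le) s2
  have q1 : ∫ ω, (g + fun ω => B ω * Y k ω ^ 2) ω ∂μ = ∫ ω, g ω ∂μ + ∫ ω, B ω * Y k ω ^ 2 ∂μ := integral_add ig i2
  have q2 : ∫ ω, (g + fun ω => B ω * c k ω) ω ∂μ = ∫ ω, g ω ∂μ + ∫ ω, B ω * c k ω ∂μ := integral_add ig ic
  rw [h.z2 k hk B mBB ⟨_, bB⟩] at q1
  exact j1.trans ((q1.trans q2.symm).le.trans j2)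

lemma expS_int [IsProbabilityMeasure μ] (h : Setup μ ℱ n p Y c) {M l : ℝ} (hl : 0 < l) (hl1 : l ≤ 1) :
    ∫ ω, expS Y c M l n ω ∂μ ≤ 1 := by
  have : ∀ k, k ≤ n → ∫ ω, expS Y c M l k ω ∂μ ≤ 1 := by
    intro k
    induction k with
    | zero => intro _; simp [expS, ssum]
    | succ k ih => intro hk; exact (expS_step h hl hl1 hk).trans (ih (by omega))
  exact this n le_rfl

theorem qv_bound [IsProbabilityMeasure μ] (hp : 1 < p) (h : Setup μ ℱ n p Y c) {M l r : ℝ} (hl : 0 < l) (hl1 : l ≤ 1)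
    (hr : 0 < r) :
    μ.real {ω | M + 2 * r < psum (fun i ω => Y i ω ^ 2) n ω ∧ psum c n ω ≤ M} ≤
      Real.exp (M - r / l) + (∑ i ∈ range n, ∫ ω, |Y i ω| ^ (2 * p) ∂μ) / (l ^ (2 * p - 2) * r) := by
  set Q : Ω → ℝ := fun ω => ∑ i ∈ range n, |Y i ω| ^ (2 * p) with hQ
  have iQ : Integrable Q μ := integrable_finsetSum _ fun i hi => h.ip i (mem_range.1 hi)
  have E0 : ∀ ω, 0 < expS Y c M l n ω := fun ω => Real.exp_pos _
  have iE : Integrable (expS Y c M l n) μ :=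
    integrable_bdd ((h.m_expS M l le_rfl).mono (ℱ.le _) le_rfl) (K := Real.exp (n * l))
      (fun ω => by rw [abs_of_pos (E0 ω)]; exact expS_le h.cn hl n ω)
  have sub : {ω | M + 2 * r < psum (fun i ω => Y i ω ^ 2) n ω ∧ psum c n ω ≤ M} ⊆
      {ω | Real.exp (r / l - M) ≤ expS Y c M l n ω} ∪ {ω | l ^ (2 * p - 2) * r ≤ Q ω} := by
    rintro ω ⟨h1, h2⟩
    by_contra hcon
    simp only [Set.mem_union, Set.mem_setOf_eq, not_or, not_le] at hcon
    obtain ⟨k1, k2⟩ := hcon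
    unfold expS at k1
    rw [Real.exp_lt_exp, ssum_eq h.cn _ n ω h2, ssum_eq h.cn _ n ω h2] at k1
    have k3 : psum (fun i ω => Y i ω ^ 2) n ω ≤ psum (truncSq Y l) n ω + Q ω / l ^ (2 * p - 2) := by
      simp only [psum, hQ, sum_div]
      rw [← sum_add_distrib]
      refine sum_le_sum fun i _ => ?_
      by_cases hy : |Y i ω| ≤ l
      · have : truncSq Y l i ω = Y i ω ^ 2 := Set.indicator_of_mem (show Y i ω ∈ {y : ℝ | |y| ≤ l} from hy) _
        rw [this]
        have : 0 ≤ |Y i ω| ^ (2 * p) / l ^ (2 * p - 2) := by positivity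
        linarith
      · have t0 := truncSq_nonneg (Y := Y) l i ω
        have hy := not_le.1 hy
        have y0 : 0 < |Y i ω| := hl.trans hy
        have : Y i ω ^ 2 ≤ |Y i ω| ^ (2 * p) / l ^ (2 * p - 2) := by
          rw [le_div_iff₀ (by positivity), ← sq_abs]
          have e : |Y i ω| ^ (2 * p) = |Y i ω| ^ 2 * |Y i ω| ^ (2 * p - 2) := by
            rw [← Real.rpow_natCast, ← Real.rpow_add y0]; congr 1; push_cast; ring
          rw [e]
          gcongr
          linarith
        linarith
    have k4 : Q ω / l ^ (2 * p - 2) < r := by rw [div_lt_iff₀ (by positivity)]; linarith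
    have k5 : (M + r) / l ≤ psum (truncSq Y l) n ω / l := by gcongr; linarith
    have k6 : (1 / l + 1) * psum c n ω ≤ (1 / l + 1) * M := by gcongr
    have e : (1 / l + 1) * M = M / l + M := by ring
    have e' : (M + r) / l = M / l + r / l := by ring
    linarith
  have m1 := mul_meas_ge_le_integral_of_nonneg (Eventually.of_forall fun ω => (E0 ω).le) iE (Real.exp (r / l - M))
  have m2 := mul_meas_ge_le_integral_of_nonneg (Eventually.of_forall fun ω => (by positivity : 0 ≤ Q ω)) iQ (l ^ (2 * p - 2) * r)
  have i1 := m1.trans (expS_int h hl hl1)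
  have iQe : ∫ ω, Q ω ∂μ = ∑ i ∈ range n, ∫ ω, |Y i ω| ^ (2 * p) ∂μ :=
    integral_finsetSum _ fun i hi => h.ip i (mem_range.1 hi)
  rw [iQe] at m2
  refine (measureReal_mono sub).trans ((measureReal_union_le _ _).trans (add_le_add ?_ ?_))
  · rw [show M - r / l = -(r / l - M) by ring, Real.exp_neg, ← one_div, le_div_iff₀ (Real.exp_pos _), mul_comm]
    exact i1
  · rw [le_div_iff₀ (by positivity), mul_comm]
    exact m2

end qv


section mk
variable {Ω : Type} {mΩ : MeasurableSpace Ω} {μ : Measure Ω} {ℱ : Filtration ℕ mΩ} {n : ℕ}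
    {p : ℝ} {Y c : ℕ → Ω → ℝ}

lemma sq_le_one_add {p y : ℝ} (hp : 1 < p) : y ^ 2 ≤ 1 + |y| ^ (2 * p) := by
  rw [← sq_abs]
  have h0 := abs_nonneg y
  rcases le_total |y| 1 with h | h
  · have : 0 ≤ |y| ^ (2 * p) := by positivity
    nlinarith
  · have : |y| ^ 2 ≤ |y| ^ (2 * p) := by
      rw [← Real.rpow_natCast]
      exact Real.rpow_le_rpow_of_exponent_le h (by push_cast; linarith)
    linarith

theorem mkSetup [IsProbabilityMeasure μ] (hp : 1 < p) {X : ℕ → Ω → ℝ} (mX : ∀ i, StronglyMeasurable[ℱ i] (X i))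
    (iX : ∀ i, Integrable (X i) μ)
    (z : ∀ i ∈ Finset.Icc 1 n, μ[X i | ℱ (i - 1)] =ᵐ[μ] (0 : Ω → ℝ))
    (ip : ∀ i ∈ Finset.Icc 1 n, Integrable (fun ω => |X i ω| ^ (2 * p)) μ) :
    Setup μ ℱ n p (fun i => X (i + 1))
      (fun i ω => max ((μ[fun ω' => X (i + 1) ω' ^ 2 | ℱ i]) ω) 0) ∧
    ∀ i < n, ∀ᵐ ω ∂μ, max ((μ[fun ω' => X (i + 1) ω' ^ 2 | ℱ i]) ω) 0 = (μ[fun ω' => X (i + 1) ω' ^ 2 | ℱ i]) ω := by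
  have ip' : ∀ i < n, Integrable (fun ω => |X (i + 1) ω| ^ (2 * p)) μ := fun i hi =>
    ip (i + 1) (by simp; omega)
  have z' : ∀ i < n, μ[X (i + 1) | ℱ i] =ᵐ[μ] (0 : Ω → ℝ) := fun i hi => by
    have := z (i + 1) (by simp; omega)
    simpa using this
  have mX' : ∀ i, Measurable (X i) := fun i => ((mX i).mono (ℱ.le i)).measurable
  have i2 : ∀ i < n, Integrable (fun ω => X (i + 1) ω ^ 2) μ := fun i hi => by
    refine Integrable.mono' ((integrable_const (1:ℝ)).add (ip' i hi)) ((mX' _).pow_const 2).aestronglyMeasurable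
      (Eventually.of_forall fun ω => ?_)
    rw [Real.norm_of_nonneg (sq_nonneg _)]
    exact sq_le_one_add hp
  have nn : ∀ i, ∀ᵐ ω ∂μ, max ((μ[fun ω' => X (i + 1) ω' ^ 2 | ℱ i]) ω) 0 = (μ[fun ω' => X (i + 1) ω' ^ 2 | ℱ i]) ω := by
    intro i
    have := condExp_nonneg (μ := μ) (m := ℱ i) (f := fun ω' => X (i + 1) ω' ^ 2)
      (Eventually.of_forall fun ω => sq_nonneg _)
    filter_upwards [this] with ω hω
    exact max_eq_left hω
  have mC : ∀ i, StronglyMeasurable[ℱ i] (μ[fun ω' => X (i + 1) ω' ^ 2 | ℱ i]) := fun i => stronglyMeasurable_condExp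
  have e2p : ∀ i ω, ‖X (i + 1) ω ^ 2‖ ^ p = |X (i + 1) ω| ^ (2 * p) := fun i ω => by
    rw [Real.norm_of_nonneg (sq_nonneg _), ← sq_abs, ← Real.rpow_natCast, ← Real.rpow_mul (abs_nonneg _)]
    norm_num
  have jen : ∀ i < n, ∀ᵐ ω ∂μ, (max ((μ[fun ω' => X (i + 1) ω' ^ 2 | ℱ i]) ω) 0) ^ p ≤
      (μ[fun ω' => |X (i + 1) ω'| ^ (2 * p) | ℱ i]) ω := by
    intro i hi
    have hh : Integrable (fun ω => ‖X (i + 1) ω ^ 2‖ ^ p) μ := by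
      simp only [e2p]; exact ip' i hi
    have := Integrable.norm_condExp_rpow_le (m := ℱ i) hp.le hh
    simp only [e2p] at this
    filter_upwards [this, nn i] with ω h1 h2
    rw [h2]
    refine le_trans ?_ h1
    have : 0 ≤ (μ[fun ω' => X (i + 1) ω' ^ 2 | ℱ i]) ω := by rw [← h2]; exact le_max_right _ _
    rw [Real.norm_of_nonneg this]
  have icp : ∀ i < n, Integrable (fun ω => (max ((μ[fun ω' => X (i + 1) ω' ^ 2 | ℱ i]) ω) 0) ^ p) μ := fun i hi => by
    refine Integrable.mono' (g := μ[fun ω' => |X (i + 1) ω'| ^ (2 * p) | ℱ i]) integrable_condExp ?_ ?_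
    · exact ((((mC i).mono (ℱ.le i)).measurable.max measurable_const).pow_const p).aestronglyMeasurable
    · filter_upwards [jen i hi] with ω hω
      rwa [Real.norm_of_nonneg (by positivity)]
  refine ⟨⟨fun i _ => (mX (i + 1)).measurable, fun i _ => (mC i).measurable.max measurable_const,
    fun i ω => le_max_right _ _, ?_, ?_, fun i _ => iX _, i2, ?_, ip', icp, ?_⟩, fun i _ => nn i⟩
  · rintro i hi g mg ⟨K, hK⟩
    have ig := integrable_bdd_mul (mg.mono (ℱ.le i) le_rfl) hK (iX (i + 1))
    have := condExp_mul_of_stronglyMeasurable_left (μ := μ) mg.stronglyMeasurable ig (iX (i + 1))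
    rw [← integral_condExp (ℱ.le i)]
    have h0 : μ[fun ω => g ω * X (i + 1) ω | ℱ i] =ᵐ[μ] 0 := by
      filter_upwards [this, z' i hi] with ω h1 h2
      refine h1.trans ?_
      simp [h2]
    rw [integral_congr_ae h0]; simp
  · rintro i hi g mg ⟨K, hK⟩
    have ig := integrable_bdd_mul (mg.mono (ℱ.le i) le_rfl) hK (i2 i hi)
    have := condExp_mul_of_stronglyMeasurable_left (μ := μ) mg.stronglyMeasurable ig (i2 i hi)
    rw [← integral_condExp (ℱ.le i)]
    apply integral_congr_ae
    filter_upwards [this, nn i] with ω h1 h2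
    refine h1.trans ?_
    rw [h2]; rfl
  · intro i hi
    exact (integrable_condExp (μ := μ) (m := ℱ i) (f := fun ω' => X (i + 1) ω' ^ 2)).congr
      ((nn i).mono fun ω h => h.symm)
  · intro i hi
    have h1 := integral_mono_ae (icp i hi) integrable_condExp (jen i hi)
    rwa [integral_condExp (ℱ.le i)] at h1

theorem Setup.scale (hp : 1 < p) (h : Setup μ ℱ n p Y c) {d : ℝ} (hd : 0 < d) :
    Setup μ ℱ n p (fun i ω => Y i ω / d) (fun i ω => c i ω / d ^ 2) := by
  have ea : ∀ i ω, |Y i ω / d| ^ (2 * p) = |Y i ω| ^ (2 * p) / d ^ (2 * p) := fun i ω => by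
    rw [abs_div, abs_of_pos hd, Real.div_rpow (abs_nonneg _) hd.le]
  have ec : ∀ i ω, (c i ω / d ^ 2) ^ p = c i ω ^ p / d ^ (2 * p) := fun i ω => by
    rw [Real.div_rpow (h.cn i ω) (by positivity), ← Real.rpow_natCast, ← Real.rpow_mul hd.le]; norm_num
  refine ⟨fun i hi => (h.mY i hi).div_const d, fun i hi => (h.mc i hi).div_const _,
    fun i ω => div_nonneg (h.cn i ω) (by positivity), ?_, ?_, fun i hi => (h.iY i hi).div_const _, ?_,
    fun i hi => (h.ic i hi).div_const _, ?_, ?_, ?_⟩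
  · intro i hi g mg hK
    simp only [← mul_div_assoc]
    rw [integral_div, h.z1 i hi g mg hK, zero_div]
  · intro i hi g mg hK
    simp only [← mul_div_assoc, div_pow]
    rw [integral_div, integral_div, h.z2 i hi g mg hK]
  · intro i hi; simp only [div_pow]; exact (h.iY2 i hi).div_const _
  · intro i hi; simp only [ea]; exact (h.ip i hi).div_const _
  · intro i hi; simp only [ec]; exact (h.icp i hi).div_const _
  · intro i hi; simp only [ec, ea]
    rw [integral_div, integral_div]
    exact div_le_div_of_nonneg_right (h.lcp i hi) (by positivity)

theorem Setup.int_dev [IsProbabilityMeasure μ] (hp : 1 < p) (h : Setup μ ℱ n p Y c) :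
    Integrable (fun ω => |psum c n ω - 1| ^ p) μ := by
  have hp0 : ENNReal.ofReal p ≠ 0 := by simp; linarith
  have tr : (ENNReal.ofReal p).toReal = p := ENNReal.toReal_ofReal (by linarith)
  have mc : ∀ i < n, Measurable (c i) := fun i hi => (h.mc i hi).mono (ℱ.le i) le_rfl
  have h1 : ∀ i ∈ range n, MemLp (c i) (ENNReal.ofReal p) μ := fun i hi => by
    have hi := mem_range.1 hi
    rw [← integrable_norm_rpow_iff (mc i hi).aestronglyMeasurable hp0 ENNReal.ofReal_ne_top, tr]
    simp only [Real.norm_of_nonneg (h.cn i _)]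
    exact h.icp i hi
  have h2 : MemLp (fun ω => psum c n ω - 1) (ENNReal.ofReal p) μ := by
    have := (memLp_finsetSum _ h1).sub (memLp_const (1:ℝ))
    exact this
  have := h2.integrable_norm_rpow hp0 ENNReal.ofReal_ne_top
  rw [tr] at this
  exact this

end mk


section numeric

lemma chi_w {p : ℝ} {m : ℕ} (hm : p + 1 ≤ m) (x : ℝ) :
    chiP m x ≤ 2 ^ m * (1 + |x|) ^ (-(2 * p + 2)) := by
  unfold chiP
  have w1 : 1 ≤ 1 + |x| := by linarith [abs_nonneg x]
  have h1 : (1 + |x|) ^ 2 ≤ 2 * (1 + x ^ 2) := by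
    rw [← sq_abs x]; nlinarith [sq_nonneg (1 - |x|)]
  have h2 : ((1 + |x|) ^ 2) ^ m ≤ 2 ^ m * (1 + x ^ 2) ^ m := by
    rw [← mul_pow]; exact pow_le_pow_left₀ (by positivity) h1 m
  have h3 : (1 + |x|) ^ (2 * p + 2) ≤ ((1 + |x|) ^ 2) ^ m := by
    rw [← pow_mul, ← Real.rpow_natCast]
    exact Real.rpow_le_rpow_of_exponent_le w1 (by push_cast; linarith)
  rw [Real.rpow_neg (by linarith), ← div_eq_mul_inv, inv_eq_one_div, div_le_div_iff₀ (by positivity) (by positivity)]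
  linarith

lemma Phi_diff {x y : ℝ} (hx : x ≤ 0) (hyx : y ≤ x) :
    stdNormalCDF x - stdNormalCDF y ≤ gaussE x * (x - y) := by
  have := (convex_Icc y x).norm_image_sub_le_of_norm_hasDerivWithin_le
    (f := stdNormalCDF) (f' := fun t => (√(2 * Real.pi))⁻¹ * gaussE t) (C := gaussE x)
    (fun t _ => (hasDerivAt_stdNormalCDF t).hasDerivWithinAt) (fun t ht => by
      rw [Real.norm_of_nonneg (mul_nonneg c0_pos.le (gaussE_pos t).le)]
      refine (mul_le_of_le_one_left (gaussE_pos t).le c0_le_one).trans ?_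
      unfold gaussE
      apply Real.exp_le_exp.2
      nlinarith [ht.1, ht.2]) (Set.left_mem_Icc.2 hyx) (Set.right_mem_Icc.2 hyx)
  rw [Real.norm_eq_abs, Real.norm_eq_abs, abs_of_nonneg (by linarith : 0 ≤ x - y)] at this
  exact (le_abs_self _).trans this

lemma exp_small {p : ℝ} (hp : 1 < p) : ∃ K : ℝ, 0 < K ∧ ∀ d : ℝ, 0 < d → d ≤ 1 →
    Real.exp (1 + d ^ 2 - d / d ^ ((2 * p - 1) / (2 * p - 2))) ≤ K * d ^ (2 * p + 2) := by
  set η := 1 / (2 * p - 2) with hη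
  have η0 : 0 < η := by rw [hη]; apply one_div_pos.2; linarith
  obtain ⟨k, hk⟩ := exists_nat_ge ((2 * p + 2) / η)
  rw [div_le_iff₀ η0] at hk
  refine ⟨Real.exp 2 * k.factorial, by positivity, fun d hd hd1 => ?_⟩
  have e1 : d / d ^ ((2 * p - 1) / (2 * p - 2)) = d ^ (-η) := by
    nth_rewrite 1 [← Real.rpow_one d]
    rw [← Real.rpow_sub hd]
    congr 1
    rw [hη]
    have hne : 2 * p - 2 ≠ 0 := by linarith
    rw [show (2 * p - 1) / (2 * p - 2) = 1 + 1 / (2 * p - 2) by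
      rw [eq_comm, ← div_self hne, div_self hne, show (2 * p - 1) = (2 * p - 2) + 1 by ring, add_div, div_self hne]]
    ring
  rw [e1, Real.exp_sub, mul_assoc]
  have h1 : Real.exp (1 + d ^ 2) ≤ Real.exp 2 := Real.exp_le_exp.2 (by nlinarith)
  have h2 := Real.pow_div_factorial_le_exp (d ^ (-η)) (by positivity) k
  rw [← Real.rpow_natCast, ← Real.rpow_mul hd.le] at h2
  have h3 : d ^ (-(2 * p + 2)) ≤ d ^ (-η * k) :=
    Real.rpow_le_rpow_of_exponent_ge hd hd1 (by linarith)
  have h4 : d ^ (-(2 * p + 2)) / k.factorial ≤ Real.exp (d ^ (-η)) := le_trans (by gcongr) h2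
  rw [div_le_iff₀ (Real.exp_pos _)]
  have h5 : 1 ≤ k.factorial * d ^ (2 * p + 2) * Real.exp (d ^ (-η)) := by
    calc (1:ℝ) = k.factorial * d ^ (2 * p + 2) * (d ^ (-(2 * p + 2)) / k.factorial) := by
          rw [Real.rpow_neg hd.le]
          have : (k.factorial : ℝ) ≠ 0 := by positivity
          have : d ^ (2 * p + 2) ≠ 0 := by positivity
          field_simp
      _ ≤ _ := by gcongr
  calc Real.exp (1 + d ^ 2) ≤ Real.exp 2 * 1 := by linarith
    _ ≤ Real.exp 2 * (k.factorial * d ^ (2 * p + 2) * Real.exp (d ^ (-η))) := by gcongr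
    _ = _ := by ring

end numeric

section final
variable {Ω : Type} {mΩ : MeasurableSpace Ω} {μ : Measure Ω} {ℱ : Filtration ℕ mΩ} {n : ℕ}
    {p : ℝ} {Y c : ℕ → Ω → ℝ}

set_option maxHeartbeats 1000000 in
/-- lower bound for the Lyapunov function at the starting point -/
lemma start_bound {m : ℕ} {v0 C H : ℝ} {F a b : ℝ → ℝ → ℝ}
    (L : Lyap p m v0 C H F a b) {B : ℝ} (hB : ∀ z, gaussE z ≤ B * chiP m z) {x d δ : ℝ} (hx : x ≤ 0)
    (hδ : 0 < δ) (hd : d = δ * (1 + |x|)) (hd1 : d ≤ 1) (hB0 : 0 < B) (hp : 1 < p) :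
    stdNormalCDF x - ((2 + H) * B * 2 ^ m + C * (v0 + 2) ^ m * 2 ^ m) * (δ * (1 + |x|) ^ (-(2 * p)))
      ≤ F (v0 + (1 / d ^ 2 + 1)) ((x * (1 + 2 * d) - H * d) / d) := by
  have H0 := L.hH
  have C0 := L.hC
  have v1 := L.hv0
  have w1 : 1 ≤ 1 + |x| := by linarith [abs_nonneg x]
  set w := 1 + |x| with hw
  have w0 : 0 < w := by linarith
  have d0 : 0 < d := by rw [hd]; positivity
  set v := v0 + (1 / d ^ 2 + 1) with hv
  have T0 : 0 < 1 / d ^ 2 := by positivity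
  have vv : v0 ≤ v := by rw [hv]; linarith
  have sv : 0 < √v := Real.sqrt_pos.2 (by linarith)
  set y := x * (1 + 2 * d) - H * d with hy
  have y0 : y ≤ 0 := by nlinarith [mul_pos H0 d0, mul_nonneg_of_nonpos_of_nonpos hx (by linarith : -(1 + 2 * d) ≤ 0)]
  set ρ := d * √v with hρ
  have ρ2 : ρ ^ 2 = d ^ 2 * (v0 + 1) + 1 := by
    rw [hρ, mul_pow, Real.sq_sqrt (by linarith), hv]; field_simp; ring
  have ρ0 : 0 < ρ := by positivity
  have d2 : d ^ 2 ≤ 1 := by nlinarith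
  have ρ1 : 1 ≤ ρ := by nlinarith [mul_pos (pow_pos d0 2) (by linarith : 0 < v0 + 1)]
  have ρ3 : ρ ^ 2 ≤ v0 + 2 := by rw [ρ2]; nlinarith
  have eu : y / d / √v = y / ρ := by rw [div_div]
  have lo := L.lower v (y / d) vv
  rw [eu] at lo
  refine le_trans ?_ lo
  have k1 : stdNormalCDF y ≤ stdNormalCDF (y / ρ) := by
    apply stdNormalCDF_mono
    rw [le_div_iff₀ ρ0]; nlinarith
  have yx : y ≤ x := by nlinarith [mul_pos H0 d0, mul_nonneg_of_nonpos_of_nonpos hx (by linarith : -(2 * d) ≤ 0)]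
  have k2 := Phi_diff hx yx
  have cw := chi_w L.hm x
  have wp : w * w * w ^ (-(2 * p + 2)) = w ^ (-(2 * p)) := by
    rw [← sq, ← Real.rpow_natCast, ← Real.rpow_add w0]; congr 1; push_cast; ring
  have wq0 : 0 < w ^ (-(2 * p + 2)) := by positivity
  have k3 : gaussE x * (x - y) ≤ (2 + H) * B * 2 ^ m * (δ * w ^ (-(2 * p))) := by
    have i1 : x - y ≤ (2 + H) * (δ * w * w) := by
      have : x - y = d * (2 * |x| + H) := by rw [hy, abs_of_nonpos hx]; ring
      rw [this, hd, hw]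
      have : 2 * |x| + H ≤ (2 + H) * (1 + |x|) := by nlinarith [abs_nonneg x]
      calc _ ≤ δ * (1 + |x|) * ((2 + H) * (1 + |x|)) := by gcongr
        _ = _ := by ring
    have i2 : gaussE x ≤ B * (2 ^ m * w ^ (-(2 * p + 2))) := (hB x).trans (by gcongr)
    calc gaussE x * (x - y) ≤ B * (2 ^ m * w ^ (-(2 * p + 2))) * ((2 + H) * (δ * w * w)) :=
          mul_le_mul i2 i1 (by linarith) (by positivity)
      _ = (2 + H) * B * 2 ^ m * (δ * (w * w * w ^ (-(2 * p + 2)))) := by ring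
      _ = _ := by rw [wp]
  have k4 : C / √v * chiP m (y / ρ) ≤ C * (v0 + 2) ^ m * 2 ^ m * (δ * w ^ (-(2 * p))) := by
    have i1 : chiP m (y / ρ) ≤ (v0 + 2) ^ m * chiP m x := by
      apply chiP_comp (by linarith)
      have xy : x ^ 2 ≤ y ^ 2 := by
        rw [← neg_sq x, ← neg_sq y]
        exact pow_le_pow_left₀ (by linarith) (by linarith) 2
      have : x ^ 2 ≤ (v0 + 2) * (y / ρ) ^ 2 := by
        rw [div_pow, ← mul_div_assoc, le_div_iff₀ (by positivity)]
        calc x ^ 2 * ρ ^ 2 ≤ y ^ 2 * (v0 + 2) := mul_le_mul xy ρ3 (sq_nonneg _) (sq_nonneg _)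
          _ = _ := by ring
      rw [mul_add, mul_one]; linarith
    have i2 : C / √v ≤ C * (δ * w) := by
      rw [← hd, div_le_iff₀ sv, mul_assoc]
      exact le_mul_of_one_le_right C0.le ρ1
    have i3 : (δ * w) * w ^ (-(2 * p + 2)) ≤ δ * w ^ (-(2 * p)) := by
      rw [← wp, mul_assoc δ]
      have : w * w ^ (-(2 * p + 2)) ≤ w * w * w ^ (-(2 * p + 2)) := by
        gcongr; nlinarith
      gcongr
    calc C / √v * chiP m (y / ρ) ≤ C * (δ * w) * ((v0 + 2) ^ m * (2 ^ m * w ^ (-(2 * p + 2)))) := by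
          apply mul_le_mul i2 (i1.trans (by gcongr)) (chiP_pos _ _).le (by positivity)
      _ = C * (v0 + 2) ^ m * 2 ^ m * ((δ * w) * w ^ (-(2 * p + 2))) := by ring
      _ ≤ _ := by gcongr
  linarith

set_option maxHeartbeats 1000000 in
theorem main_abs (p : ℝ) (hp : 1 < p) : ∃ K : ℝ, 0 < K ∧
    ∀ (Ω : Type) (mΩ : MeasurableSpace Ω) (μ : Measure Ω) (ℱ : Filtration ℕ mΩ) (n : ℕ) (Y c : ℕ → Ω → ℝ),
      IsProbabilityMeasure μ → Setup μ ℱ n p Y c → ∀ N δ : ℝ, 0 < δ → δ ≤ 1 → N = δ ^ (2 * p + 1) →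
      (∑ i ∈ range n, ∫ ω, |Y i ω| ^ (2 * p) ∂μ) ≤ N → (∫ ω, |psum c n ω - 1| ^ p ∂μ) ≤ N →
      ∀ t1 t2 : ℝ, 0 ≤ t1 → 0 ≤ t2 → t1 + t2 ≤ 1 → ∀ x : ℝ, x ≤ 0 →
        stdNormalCDF x - K * (δ * (1 + |x|) ^ (-(2 * p))) ≤
          μ.real {ω | psum Y n ω ≤ x * √(t1 * psum c n ω + t2 * psum (fun i ω => Y i ω ^ 2) n ω + (1 - t1 - t2))} := by
  obtain ⟨m, v0, C, H, F, a, b, L⟩ := exists_lyap p hp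
  obtain ⟨B, B0, hB⟩ := gaussE_decay m 0
  simp only [pow_zero, one_mul] at hB
  obtain ⟨BΦ, BΦ0, hBΦ⟩ := stdNormalCDF_decay m
  obtain ⟨K1, K10, hK1⟩ := exp_small hp
  have H0 := L.hH
  have C0 := L.hC
  have v1 := L.hv0
  set K0 := (2 + H) * B * 2 ^ m + C * (v0 + 2) ^ m * 2 ^ m with hK0
  have K00 : 0 < K0 := by positivity
  refine ⟨BΦ * 2 ^ m + K0 + 2 * C + 3 + K1, by positivity, ?_⟩
  intro Ω mΩ μ ℱ n Y c hμ h N δ δ0 δ1 hN hN1 hN2 t1 t2 ht1 ht2 ht x hx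
  have w1 : 1 ≤ 1 + |x| := by linarith [abs_nonneg x]
  set w := 1 + |x| with hw
  have w0 : 0 < w := by linarith
  set E := δ * w ^ (-(2 * p)) with hE
  have E0 : 0 < E := by positivity
  by_cases hcase : 1 < δ * w ^ 2
  · have h1 : stdNormalCDF x ≤ BΦ * 2 ^ m * E := by
      have i1 : w ^ (-(2 * p + 2)) ≤ E := by
        have wp : w ^ 2 * w ^ (-(2 * p + 2)) = w ^ (-(2 * p)) := by
          rw [← Real.rpow_natCast, ← Real.rpow_add w0]; congr 1; push_cast; ring
        rw [hE, ← wp, ← mul_assoc]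
        exact le_mul_of_one_le_left (by positivity) hcase.le
      calc _ ≤ BΦ * chiP m x := hBΦ x hx
        _ ≤ BΦ * (2 ^ m * w ^ (-(2 * p + 2))) := by gcongr; exact chi_w L.hm x
        _ ≤ BΦ * (2 ^ m * E) := by gcongr
        _ = _ := by ring
    have h2 : 0 ≤ (K0 + 2 * C + 3 + K1) * E := by positivity
    have h3 : 0 ≤ μ.real {ω | psum Y n ω ≤ x * √(t1 * psum c n ω + t2 * psum (fun i ω => Y i ω ^ 2) n ω + (1 - t1 - t2))} :=
      measureReal_nonneg
    linarith
  rw [not_lt] at hcase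
  set d := δ * w with hd
  have d0 : 0 < d := by positivity
  have d2 : d ^ 2 ≤ 1 := by
    have : d ^ 2 = δ * (δ * w ^ 2) := by rw [hd]; ring
    rw [this]; exact mul_le_one₀ δ1 (by positivity) hcase
  have d1 : d ≤ 1 := by nlinarith
  have eN : N / d ^ (2 * p) = E := by
    rw [hN, hd, Real.mul_rpow δ0.le w0.le, hE, Real.rpow_neg w0.le, Real.rpow_add δ0, Real.rpow_one]
    field_simp
  have dE : d ^ (2 * p + 2) ≤ E := by
    have : d ^ (2 * p + 2) = E * (δ * w ^ 2) ^ (2 * p + 1) := by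
      rw [hd, hE, Real.mul_rpow δ0.le w0.le, Real.mul_rpow δ0.le (by positivity), ← Real.rpow_natCast w 2,
        ← Real.rpow_mul w0.le]
      rw [show 2 * p + 2 = 1 + (2 * p + 1) by ring, Real.rpow_add δ0, Real.rpow_one,
        show w ^ (1 + (2 * p + 1)) = w ^ (-(2 * p)) * w ^ (((2 : ℕ) : ℝ) * (2 * p + 1)) by
          rw [← Real.rpow_add w0]; congr 1; push_cast; ring]
      ring
    rw [this]
    exact mul_le_of_le_one_right E0.le (Real.rpow_le_one (by positivity) hcase (by linarith))
  have dp0 : 0 < d ^ (2 * p) := by positivity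
  -- the three bad probabilities
  set Bad1 : Set Ω := {ω | d ^ 2 < |psum c n ω - 1|} with hBad1
  set Bad2 : Set Ω := {ω | (1 + d ^ 2) + 2 * d < psum (fun i ω => Y i ω ^ 2) n ω ∧ psum c n ω ≤ 1 + d ^ 2} with hBad2
  have P1 : μ.real Bad1 ≤ E := by
    have m1 := mul_meas_ge_le_integral_of_nonneg
      (Eventually.of_forall fun ω => (by positivity : 0 ≤ |psum c n ω - 1| ^ p)) (h.int_dev hp) (d ^ (2 * p))
    have sub : Bad1 ⊆ {ω | d ^ (2 * p) ≤ |psum c n ω - 1| ^ p} := by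
      intro ω hω
      have hω : d ^ 2 < |psum c n ω - 1| := hω
      show d ^ (2 * p) ≤ |psum c n ω - 1| ^ p
      rw [Real.rpow_mul d0.le]
      have : d ^ (2:ℝ) = d ^ 2 := by exact_mod_cast Real.rpow_natCast d 2
      rw [this]
      exact Real.rpow_le_rpow (by positivity) hω.le (by linarith)
    refine (measureReal_mono sub).trans ?_
    rw [← eN, le_div_iff₀ dp0, mul_comm]
    exact m1.trans hN2
  have P2 : μ.real Bad2 ≤ K1 * E + E := by
    set l := d ^ ((2 * p - 1) / (2 * p - 2)) with hl
    have l0 : 0 < l := by positivity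
    have l1 : l ≤ 1 := Real.rpow_le_one d0.le d1 (div_nonneg (by linarith) (by linarith))
    have q := qv_bound (M := 1 + d ^ 2) hp h l0 l1 d0
    have el : l ^ (2 * p - 2) * d = d ^ (2 * p) := by
      rw [hl, ← Real.rpow_mul d0.le, div_mul_cancel₀ _ (by linarith : 2 * p - 2 ≠ 0)]
      nth_rewrite 2 [← Real.rpow_one d]
      rw [← Real.rpow_add d0]; congr 1; ring
    rw [el] at q
    refine q.trans (add_le_add ?_ ?_)
    · exact (hK1 d d0 d1).trans (by gcongr)
    · rw [← eN]; gcongr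
  -- the core bound
  have core := core_main hp L (h.scale hp d0) (T := 1 / d ^ 2) (by positivity) ((x * (1 + 2 * d) - H * d) / d)
  have st := start_bound (p := p) L hB hx δ0 hd d1 B0 hp
  have c1 : ∑ i ∈ range n, ∫ ω, |Y i ω / d| ^ (2 * p) ∂μ ≤ E := by
    have : ∀ i, ∫ ω, |Y i ω / d| ^ (2 * p) ∂μ = (∫ ω, |Y i ω| ^ (2 * p) ∂μ) / d ^ (2 * p) := fun i => by
      rw [← integral_div]; congr 1; ext ω
      rw [abs_div, abs_of_pos d0, Real.div_rpow (abs_nonneg _) d0.le]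
    simp only [this]
    rw [← sum_div, ← eN]
    gcongr
  have c2 : {ω | 1 < |psum (fun i ω => c i ω / d ^ 2) n ω - 1 / d ^ 2|} = Bad1 := by
    ext ω
    show 1 < |psum (fun i ω => c i ω / d ^ 2) n ω - 1 / d ^ 2| ↔ d ^ 2 < |psum c n ω - 1|
    have : psum (fun i ω => c i ω / d ^ 2) n ω - 1 / d ^ 2 = (psum c n ω - 1) / d ^ 2 := by
      simp only [psum]; rw [← sum_div]; ring
    rw [this, abs_div, abs_of_pos (by positivity : 0 < d ^ 2), one_lt_div (by positivity)]
  have c3 : {ω | psum (fun i ω => Y i ω / d) n ω ≤ (x * (1 + 2 * d) - H * d) / d + H}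
      = {ω | psum Y n ω ≤ x * (1 + 2 * d)} := by
    ext ω
    show psum (fun i ω => Y i ω / d) n ω ≤ (x * (1 + 2 * d) - H * d) / d + H ↔ psum Y n ω ≤ x * (1 + 2 * d)
    have e1 : psum (fun i ω => Y i ω / d) n ω = psum Y n ω / d := by simp only [psum]; rw [← sum_div]
    have e2 : (x * (1 + 2 * d) - H * d) / d + H = x * (1 + 2 * d) / d := by field_simp; ring
    rw [e1, e2, div_le_div_iff_of_pos_right d0]
  rw [c2, c3] at core
  have c4 : 2 * C * ∑ i ∈ range n, ∫ ω, |Y i ω / d| ^ (2 * p) ∂μ ≤ 2 * C * E := by gcongr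
  -- inclusion
  set Tgt : Set Ω := {ω | psum Y n ω ≤ x * √(t1 * psum c n ω + t2 * psum (fun i ω => Y i ω ^ 2) n ω + (1 - t1 - t2))} with hT
  have inc : {ω | psum Y n ω ≤ x * (1 + 2 * d)} ⊆ Tgt ∪ (Bad1 ∪ Bad2) := by
    intro ω hω
    by_contra hcon
    simp only [Set.mem_union, not_or] at hcon
    obtain ⟨n1, n2, n3⟩ := hcon
    apply n1
    have n2 : |psum c n ω - 1| ≤ d ^ 2 := not_lt.1 n2
    have n2' : psum c n ω ≤ 1 + d ^ 2 := by linarith [(abs_le.1 n2).2]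
    have n3 : psum (fun i ω => Y i ω ^ 2) n ω ≤ (1 + d ^ 2) + 2 * d := by
      by_contra hq
      exact n3 ⟨not_le.1 hq, n2'⟩
    have hω : psum Y n ω ≤ x * (1 + 2 * d) := hω
    show psum Y n ω ≤ x * √(t1 * psum c n ω + t2 * psum (fun i ω => Y i ω ^ 2) n ω + (1 - t1 - t2))
    refine hω.trans (mul_le_mul_of_nonpos_left ?_ hx)
    apply Real.sqrt_le_iff.2
    refine ⟨by linarith, ?_⟩
    have a1 : t1 * psum c n ω ≤ t1 * (1 + d ^ 2 + 2 * d) := by gcongr; linarith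
    have a2 : t2 * psum (fun i ω => Y i ω ^ 2) n ω ≤ t2 * (1 + d ^ 2 + 2 * d) := by gcongr
    have a3 : (t1 + t2) * (d ^ 2 + 2 * d) ≤ 1 * (d ^ 2 + 2 * d) := by gcongr
    nlinarith
  have fin := (measureReal_mono (μ := μ) inc).trans ((measureReal_union_le _ _).trans
    (add_le_add le_rfl (measureReal_union_le _ _)))
  have pos : 0 ≤ BΦ * 2 ^ m * E := by positivity
  rw [← hw, ← hE, ← hK0] at st
  linarith

end final

theorem stmt7 (p : ℝ) (hp : 1 < p) (t1 : ℝ) (ht1 : 0 ≤ t1) (ht1' : t1 ≤ 1) :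
    ∃ C : ℝ, 0 < C ∧
      ∀ (Ω : Type) (mΩ : MeasurableSpace Ω) (μ : Measure Ω),
        IsProbabilityMeasure μ →
        ∀ (ℱ : Filtration ℕ mΩ), ℱ 0 = ⊥ →
        ∀ (n : ℕ) (X : ℕ → Ω → ℝ), X 0 = 0 →
        (∀ i, StronglyMeasurable[ℱ i] (X i)) →
        (∀ i, Integrable (X i) μ) →
        (∀ i ∈ Finset.Icc 1 n, μ[X i | ℱ (i - 1)] =ᵐ[μ] (0 : Ω → ℝ)) →
        ∀ (S : ℕ → Ω → ℝ), (∀ k ω, S k ω = ∑ i ∈ Finset.Icc 1 k, X i ω) →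
        ∀ (QV CV : Ω → ℝ),
          (∀ ω, QV ω = ∑ i ∈ Finset.Icc 1 n, (X i ω) ^ 2) →
          (∀ ω, CV ω = ∑ i ∈ Finset.Icc 1 n, (μ[fun ω' => (X i ω') ^ 2 | ℱ (i - 1)]) ω) →
        (∫ ω, (S n ω) ^ 2 ∂μ) = 1 →
        (∀ i ∈ Finset.Icc 1 n, Integrable (fun ω => |X i ω| ^ (2 * p)) μ) →
        ∀ (N : ℝ),
          N = (∑ i ∈ Finset.Icc 1 n, ∫ ω, |X i ω| ^ (2 * p) ∂μ) + (∫ ω, |CV ω - 1| ^ p ∂μ) →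
      N ≤ 1 →
      ∀ t2 : ℝ, 0 ≤ t2 → t2 ≤ 1 → t1 + t2 ≤ 1 →
      ∀ x : ℝ, x ≤ 0 →
        (μ {ω | S n ω ≤ x * Real.sqrt (t1 * CV ω + t2 * QV ω + (1 - t1 - t2))}).toReal
          - stdNormalCDF x ≥ -(C * N ^ (1 / (2 * p + 1)) / (1 + |x| ^ (2 * p))) := by
  obtain ⟨K, K0, hK⟩ := main_abs p hp
  refine ⟨2 * K, by positivity, ?_⟩
  intro Ω mΩ μ hμ ℱ _ n X _ mX iX z S hS QV CV hQV hCV hS1 ip N hN hN1 t2 ht2 _ ht x hx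
  obtain ⟨hset, hae⟩ := mkSetup (μ := μ) (ℱ := ℱ) (n := n) hp mX iX z ip
  have conv : ∀ f : ℕ → ℝ, ∑ i ∈ Finset.Icc 1 n, f i = ∑ i ∈ range n, f (i + 1) := fun f => by
    rw [Finset.range_eq_Ico, Finset.sum_Ico_add' f 0 n 1]
    rfl
  have eS : ∀ ω, S n ω = psum (fun i => X (i + 1)) n ω := fun ω => by
    rw [hS, conv]; rfl
  have eQ : ∀ ω, QV ω = psum (fun i ω => X (i + 1) ω ^ 2) n ω := fun ω => by
    rw [hQV, conv]; rfl
  have eC : ∀ᵐ ω ∂μ, CV ω = psum (fun i ω => max ((μ[fun ω' => X (i + 1) ω' ^ 2 | ℱ i]) ω) 0) n ω := by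
    have : ∀ᵐ ω ∂μ, ∀ i, i < n → max ((μ[fun ω' => X (i + 1) ω' ^ 2 | ℱ i]) ω) 0
        = (μ[fun ω' => X (i + 1) ω' ^ 2 | ℱ i]) ω := by
      rw [ae_all_iff]
      intro i
      by_cases hi : i < n
      · filter_upwards [hae i hi] with ω hω _ using hω
      · exact Eventually.of_forall fun ω h => absurd h hi
    filter_upwards [this] with ω hω
    rw [hCV, conv]
    unfold psum
    refine sum_congr rfl fun i hi => ?_
    exact (hω i (mem_range.1 hi)).symm
  have iC : ∫ ω, |CV ω - 1| ^ p ∂μ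
      = ∫ ω, |psum (fun i ω => max ((μ[fun ω' => X (i + 1) ω' ^ 2 | ℱ i]) ω) 0) n ω - 1| ^ p ∂μ := by
    apply integral_congr_ae
    filter_upwards [eC] with ω hω
    rw [hω]
  have A0 : ∀ i ∈ Finset.Icc 1 n, 0 ≤ ∫ ω, |X i ω| ^ (2 * p) ∂μ := fun i _ =>
    integral_nonneg fun ω => by positivity
  have A1 : 0 ≤ ∑ i ∈ Finset.Icc 1 n, ∫ ω, |X i ω| ^ (2 * p) ∂μ := sum_nonneg A0
  have A2 : 0 ≤ ∫ ω, |CV ω - 1| ^ p ∂μ := integral_nonneg fun ω => by positivity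
  have N0 : 0 < N := by
    rcases (by rw [hN]; positivity : 0 ≤ N).lt_or_eq with h | h
    · exact h
    exfalso
    have s0 : ∑ i ∈ Finset.Icc 1 n, ∫ ω, |X i ω| ^ (2 * p) ∂μ = 0 := by linarith
    rw [sum_eq_zero_iff_of_nonneg A0] at s0
    have : ∀ᵐ ω ∂μ, ∀ i, i ∈ Finset.Icc 1 n → X i ω = 0 := by
      rw [ae_all_iff]
      intro i
      by_cases hi : i ∈ Finset.Icc 1 n
      · have := (integral_eq_zero_iff_of_nonneg (fun ω => by positivity) (ip i hi)).1 (s0 i hi)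
        filter_upwards [this] with ω hω _
        have hω : |X i ω| ^ (2 * p) = 0 := hω
        rw [Real.rpow_eq_zero (abs_nonneg _) (by linarith)] at hω
        exact abs_eq_zero.1 hω
      · exact Eventually.of_forall fun ω h => absurd h hi
    have : ∫ ω, (S n ω) ^ 2 ∂μ = 0 := by
      apply integral_eq_zero_of_ae
      filter_upwards [this] with ω hω
      rw [hS, sum_eq_zero hω]
      simp
    linarith
  set δ := N ^ (1 / (2 * p + 1)) with hδ
  have δ0 : 0 < δ := by positivity
  have δ1 : δ ≤ 1 := Real.rpow_le_one N0.le hN1 (by apply one_div_nonneg.2; linarith)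
  have eN : N = δ ^ (2 * p + 1) := by
    rw [hδ, ← Real.rpow_mul N0.le, one_div_mul_cancel (by linarith), Real.rpow_one]
  have main := hK Ω mΩ μ ℱ n _ _ hμ hset N δ δ0 δ1 eN (by rw [← conv (fun i => ∫ ω, |X i ω| ^ (2 * p) ∂μ)]; linarith)
    (by rw [← iC]; linarith) t1 t2 ht1 ht2 ht x hx
  have eM : (μ {ω | S n ω ≤ x * Real.sqrt (t1 * CV ω + t2 * QV ω + (1 - t1 - t2))}).toReal
      = μ.real {ω | psum (fun i => X (i + 1)) n ω ≤ x * √(t1 * psum (fun i ω => max ((μ[fun ω' => X (i + 1) ω' ^ 2 | ℱ i]) ω) 0) n ω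
        + t2 * psum (fun i ω => X (i + 1) ω ^ 2) n ω + (1 - t1 - t2))} := by
    unfold Measure.real
    congr 1
    apply measure_congr
    filter_upwards [eC] with ω hω
    apply propext
    show S n ω ≤ x * Real.sqrt (t1 * CV ω + t2 * QV ω + (1 - t1 - t2)) ↔ psum (fun i => X (i + 1)) n ω ≤ _
    rw [eS, eQ, hω]
  rw [eM]
  have w1 : 1 ≤ 1 + |x| := by linarith [abs_nonneg x]
  have b1 : 1 + |x| ^ (2 * p) ≤ 2 * (1 + |x|) ^ (2 * p) := by
    have h1 : 1 ≤ (1 + |x|) ^ (2 * p) := Real.one_le_rpow w1 (by linarith)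
    have h2 : |x| ^ (2 * p) ≤ (1 + |x|) ^ (2 * p) :=
      Real.rpow_le_rpow (abs_nonneg _) (by linarith) (by linarith)
    linarith
  have b2 : K * (δ * (1 + |x|) ^ (-(2 * p))) ≤ 2 * K * δ / (1 + |x| ^ (2 * p)) := by
    have q0 : 0 < (1 + |x|) ^ (2 * p) := by positivity
    rw [le_div_iff₀ (by positivity), Real.rpow_neg (by linarith)]
    calc K * (δ * ((1 + |x|) ^ (2 * p))⁻¹) * (1 + |x| ^ (2 * p))
        ≤ K * (δ * ((1 + |x|) ^ (2 * p))⁻¹) * (2 * (1 + |x|) ^ (2 * p)) := by gcongr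
      _ = 2 * K * δ := by field_simp
  linarith
end

section
/- For every p > 1 and every t3 ∈ (0,1] there exists a constant C_{t3,p} > 0 such that for every N ∈ (0,1] and every x ≤ 0 with x² ≥ N^{−1/(2p+1)} − 1, one has Φ( x · √t3 ) − Φ(x) ≤ C_{t3,p} · N^{1/(2p+1)} / (1 + |x|^{2p}), where Φ denotes the standard normal distribution function. -/
open MeasureTheory Filter Finset

lemma cdf_diff_le (t x : ℝ) (ht : 0 < t) (ht' : t ≤ 1) (hx : x ≤ 0) :
    stdNormalCDF (x * Real.sqrt t) - stdNormalCDF x ≤ |x| * Real.exp (-t * x ^ 2 / 2) := by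
  have hs0 : 0 ≤ Real.sqrt t := Real.sqrt_nonneg t
  have hs1 : Real.sqrt t ≤ 1 := Real.sqrt_le_one.mpr ht'
  have hss : Real.sqrt t ^ 2 = t := Real.sq_sqrt ht.le
  have hle : x ≤ x * Real.sqrt t := by nlinarith
  have hint : Integrable (fun u : ℝ => (Real.sqrt (2 * Real.pi))⁻¹ * Real.exp (-u ^ 2 / 2)) := by
    have h := (integrable_exp_neg_mul_sq (b := 1 / 2) (by norm_num)).const_mul
      (Real.sqrt (2 * Real.pi))⁻¹
    refine h.congr (Eventually.of_forall fun u => ?_)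
    simp only
    congr 2
    ring
  have hc : (Real.sqrt (2 * Real.pi))⁻¹ ≤ 1 := by
    apply inv_le_one_of_one_le₀
    rw [Real.one_le_sqrt]
    nlinarith [Real.pi_gt_three]
  unfold stdNormalCDF
  rw [intervalIntegral.integral_Iic_sub_Iic hint.integrableOn hint.integrableOn]
  have hb := intervalIntegral.norm_integral_le_of_norm_le_const (a := x) (b := x * Real.sqrt t)
    (C := Real.exp (-t * x ^ 2 / 2))
    (f := fun u : ℝ => (Real.sqrt (2 * Real.pi))⁻¹ * Real.exp (-u ^ 2 / 2)) (by
      intro u hu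
      rw [Set.uIoc_of_le hle] at hu
      rw [Real.norm_of_nonneg (by positivity)]
      calc _ ≤ 1 * Real.exp (-u ^ 2 / 2) := by gcongr
        _ ≤ _ := by
          rw [one_mul]
          apply Real.exp_le_exp.mpr
          have h2 := hu.2
          have : x * Real.sqrt t ≤ 0 := mul_nonpos_of_nonpos_of_nonneg hx hs0
          have h3 : (x * Real.sqrt t) ^ 2 ≤ u ^ 2 := by nlinarith
          rw [mul_pow, hss] at h3
          linarith)
  refine (le_abs_self _).trans (hb.trans ?_)
  rw [mul_comm]
  refine mul_le_mul_of_nonneg_right ?_ (Real.exp_pos _).le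
  rw [abs_of_nonneg (by linarith), abs_of_nonpos hx]
  nlinarith

lemma poly_bound (q t y : ℝ) (n : ℕ) (hq : 0 ≤ q) (hn : q ≤ n) (ht : 0 < t) (hy : 0 ≤ y) :
    y * Real.exp (-t * y ^ 2 / 2) * ((1 + y ^ 2) * (1 + y ^ q)) ≤
      2 * ((n + 3).factorial / t ^ (n + 3)) * Real.exp (3 * t / 2) := by
  have h1 : y ^ q ≤ (1 + y) ^ n := by
    calc y ^ q ≤ (1 + y) ^ q := Real.rpow_le_rpow hy (by linarith) hq
      _ ≤ (1 + y) ^ (n : ℝ) := Real.rpow_le_rpow_of_exponent_le (by linarith) hn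
      _ = _ := Real.rpow_natCast _ _
  have h2 : 1 ≤ (1 + y) ^ n := one_le_pow₀ (by linarith)
  have hyq : 0 ≤ y ^ q := Real.rpow_nonneg hy q
  have h3 := Real.pow_div_factorial_le_exp (t * (1 + y)) (by positivity) (n + 3)
  have hf : (0 : ℝ) < (n + 3).factorial := by positivity
  have h4 : (1 + y) ^ (n + 3) ≤ (n + 3).factorial / t ^ (n + 3) * Real.exp (t * (1 + y)) := by
    rw [div_le_iff₀ hf, mul_pow] at h3
    rw [div_mul_eq_mul_div, le_div_iff₀ (by positivity)]
    linarith
  have h5 : y * ((1 + y ^ 2) * (1 + y ^ q)) ≤ 2 * (1 + y) ^ (n + 3) := by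
    calc y * ((1 + y ^ 2) * (1 + y ^ q))
        ≤ (1 + y) * ((1 + y) ^ 2 * (2 * (1 + y) ^ n)) := by
          gcongr <;> nlinarith
      _ = _ := by ring
  calc _ = y * ((1 + y ^ 2) * (1 + y ^ q)) * Real.exp (-t * y ^ 2 / 2) := by ring
    _ ≤ 2 * ((n + 3).factorial / t ^ (n + 3) * Real.exp (t * (1 + y))) *
          Real.exp (-t * y ^ 2 / 2) := by
        exact mul_le_mul_of_nonneg_right (by linarith) (Real.exp_pos _).le
    _ = 2 * ((n + 3).factorial / t ^ (n + 3)) *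
          Real.exp (t * (1 + y) + -t * y ^ 2 / 2) := by rw [Real.exp_add]; ring
    _ ≤ _ := by
        gcongr
        nlinarith [mul_nonneg ht.le (sq_nonneg (y - 1))]

theorem stmt14 (p : ℝ) (hp : 1 < p) (t3 : ℝ) (ht3 : 0 < t3) (ht3' : t3 ≤ 1) :
    ∃ C : ℝ, 0 < C ∧
      ∀ N : ℝ, 0 < N → N ≤ 1 →
      ∀ x : ℝ, x ≤ 0 → N ^ (-(1 / (2 * p + 1))) - 1 ≤ x ^ 2 →
        stdNormalCDF (x * Real.sqrt t3) - stdNormalCDF x ≤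
          C * N ^ (1 / (2 * p + 1)) / (1 + |x| ^ (2 * p)) := by
  obtain ⟨n, hn⟩ := exists_nat_ge (2 * p)
  refine ⟨2 * ((n + 3).factorial / t3 ^ (n + 3)) * Real.exp (3 * t3 / 2), by positivity, ?_⟩
  intro N hN _ x hx h
  have hb := poly_bound (2 * p) t3 |x| n (by linarith) hn ht3 (abs_nonneg x)
  have hd := cdf_diff_le t3 x ht3 ht3' hx
  rw [sq_abs] at hb
  set C := 2 * ((n + 3).factorial / t3 ^ (n + 3)) * Real.exp (3 * t3 / 2)
  have hM : 0 < N ^ (1 / (2 * p + 1)) := Real.rpow_pos_of_pos hN _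
  rw [Real.rpow_neg hN.le] at h
  set M := N ^ (1 / (2 * p + 1))
  have hM1 : 1 ≤ M * (1 + x ^ 2) := by
    have : M⁻¹ ≤ 1 + x ^ 2 := by linarith
    calc 1 = M * M⁻¹ := (mul_inv_cancel₀ hM.ne').symm
      _ ≤ _ := by gcongr
  have hq : 0 ≤ |x| ^ (2 * p) := Real.rpow_nonneg (abs_nonneg x) _
  rw [le_div_iff₀ (by linarith)]
  set D := |x| * Real.exp (-t3 * x ^ 2 / 2)
  have hD : 0 ≤ D := by positivity
  calc _ ≤ D * (1 + |x| ^ (2 * p)) := by gcongr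
    _ ≤ D * (1 + |x| ^ (2 * p)) * (M * (1 + x ^ 2)) :=
        le_mul_of_one_le_right (by positivity) hM1
    _ = (D * ((1 + x ^ 2) * (1 + |x| ^ (2 * p)))) * M := by ring
    _ ≤ C * M := by gcongr
end

section
/- There exists a constant C_p > 0 depending only on p such that, whenever N_n ≤ 1, for every ε > 0, P( |[S]_n − 1| ≥ ε ) ≤ C_p · ε^{−p} · N_n^{(p+1)/(2p+1)}. -/
open MeasureTheory Filter Finset

/-- signed power -/
noncomputable def sgnPow (r u : ℝ) : ℝ := |u| ^ (r - 1) * u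

lemma sgnPow_of_nonneg {r u : ℝ} (hr : 0 < r) (hu : 0 ≤ u) : sgnPow r u = u ^ r := by
  unfold sgnPow
  rcases hu.eq_or_lt with h | h
  · subst h; simp [Real.zero_rpow hr.ne']
  · rw [abs_of_pos h, Real.rpow_sub_one h.ne']; field_simp

lemma sgnPow_of_nonpos {r u : ℝ} (hr : 0 < r) (hu : u ≤ 0) : sgnPow r u = -|u| ^ r := by
  have := sgnPow_of_nonneg (u := -u) hr (by linarith)
  rw [abs_of_nonpos hu, ← this]
  simp [sgnPow]

lemma abs_sgnPow {r : ℝ} (hr : 0 < r) (u : ℝ) : |sgnPow r u| = |u| ^ r := by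
  rcases le_total 0 u with h | h
  · rw [sgnPow_of_nonneg hr h, abs_of_nonneg h, abs_of_nonneg (by positivity)]
  · rw [sgnPow_of_nonpos hr h, abs_neg, abs_of_nonneg (by positivity)]

lemma sgnPow_diff {r : ℝ} (hr : 0 < r) (u v : ℝ) :
    (|sgnPow r u - sgnPow r v| = |(|u| ^ r - |v| ^ r)| ∧ |u - v| = |(|u| - |v|)|) ∨
    (|sgnPow r u - sgnPow r v| = |u| ^ r + |v| ^ r ∧ |u - v| = |u| + |v|) := by
  have pu : 0 ≤ |u| ^ r := by positivity
  have pv : 0 ≤ |v| ^ r := by positivity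
  rcases le_total 0 u with h | h <;> rcases le_total 0 v with h' | h'
  · left
    rw [sgnPow_of_nonneg hr h, sgnPow_of_nonneg hr h', abs_of_nonneg h, abs_of_nonneg h']
    simp
  · right
    rw [sgnPow_of_nonneg hr h, sgnPow_of_nonpos hr h', abs_of_nonneg h]
    rw [abs_of_nonneg h] at pu
    rw [sub_neg_eq_add, abs_of_nonneg (by positivity), abs_of_nonneg (a := u - v) (by linarith),
      abs_of_nonpos h']
    simp [sub_eq_add_neg]
  · right
    rw [sgnPow_of_nonpos hr h, sgnPow_of_nonneg hr h', abs_of_nonneg h']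
    rw [abs_of_nonneg h'] at pv
    rw [abs_of_nonpos (by linarith), abs_of_nonpos (a := u - v) (by linarith), abs_of_nonpos h]
    constructor <;> ring
  · left
    rw [sgnPow_of_nonpos hr h, sgnPow_of_nonpos hr h', abs_of_nonpos h, abs_of_nonpos h']
    constructor
    · rw [← abs_neg]; congr 1; ring
    · rw [← abs_neg]; congr 1; ring

lemma sgnPow_small {r : ℝ} (hr : 0 < r) (hr1 : r ≤ 1) (u v : ℝ) :
    |sgnPow r u - sgnPow r v| ≤ 2 * |u - v| ^ r := by
  have key : ∀ a b : ℝ, 0 ≤ a → 0 ≤ b → a ^ r - b ^ r ≤ |a - b| ^ r := by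
    intro a b ha hb
    have h1 : a ^ r ≤ (|a - b| + b) ^ r :=
      Real.rpow_le_rpow ha (by linarith [le_abs_self (a - b)]) hr.le
    have h2 := Real.rpow_add_le_add_rpow (abs_nonneg (a - b)) hb hr.le hr1
    linarith
  have p0 : 0 ≤ |u - v| ^ r := by positivity
  rcases sgnPow_diff hr u v with ⟨h1, h2⟩ | ⟨h1, h2⟩
  · rw [h1, h2]
    rw [h2] at p0
    have k1 := key |u| |v| (abs_nonneg _) (abs_nonneg _)
    have k2 := key |v| |u| (abs_nonneg _) (abs_nonneg _)
    rw [abs_sub_comm |v| |u|] at k2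
    have : |(|u| ^ r - |v| ^ r)| ≤ |(|u| - |v|)| ^ r := abs_le.2 ⟨by linarith, k1⟩
    linarith
  · rw [h1, h2]
    have k1 : |u| ^ r ≤ (|u| + |v|) ^ r :=
      Real.rpow_le_rpow (abs_nonneg _) (by linarith [abs_nonneg v]) hr.le
    have k2 : |v| ^ r ≤ (|u| + |v|) ^ r :=
      Real.rpow_le_rpow (abs_nonneg _) (by linarith [abs_nonneg u]) hr.le
    linarith

lemma rpow_tangent {r a b : ℝ} (hr : 1 ≤ r) (ha : 0 ≤ a) (hb : 0 ≤ b) :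
    a ^ r - b ^ r ≤ r * a ^ (r - 1) * (a - b) := by
  rcases ha.eq_or_lt with h | h
  · subst h
    rw [Real.zero_rpow (by linarith)]
    rcases hr.eq_or_lt with h | h
    · subst h; simp
    · rw [Real.zero_rpow (by linarith)]; simp; positivity
  · have h1 := one_add_mul_self_le_rpow_one_add (s := b / a - 1) (by
      have : 0 ≤ b / a := by positivity
      linarith) hr
    rw [add_sub_cancel, Real.div_rpow hb ha, le_div_iff₀ (by positivity)] at h1
    have e : a ^ r = a ^ (r - 1) * a := by rw [Real.rpow_sub_one h.ne']; field_simp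
    have : (1 + r * (b / a - 1)) * a ^ r = a ^ r + r * a ^ (r - 1) * (b - a) := by
      rw [e]; field_simp
    rw [this] at h1
    linarith

lemma sgnPow_big {r : ℝ} (hr : 1 ≤ r) (u v m : ℝ) (hu : |u| ≤ m) (hv : |v| ≤ m) :
    |sgnPow r u - sgnPow r v| ≤ r * m ^ (r - 1) * |u - v| := by
  have hr0 : 0 < r := by linarith
  have hm : 0 ≤ m := (abs_nonneg u).trans hu
  have key : ∀ a b : ℝ, 0 ≤ a → 0 ≤ b → a ≤ m → a ^ r - b ^ r ≤ r * m ^ (r - 1) * |a - b| := by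
    intro a b ha hb ham
    refine (rpow_tangent hr ha hb).trans ?_
    have h1 : a ^ (r - 1) ≤ m ^ (r - 1) := Real.rpow_le_rpow ha ham (by linarith)
    calc r * a ^ (r - 1) * (a - b) ≤ r * a ^ (r - 1) * |a - b| := by
          gcongr; exact le_abs_self _
      _ ≤ _ := by gcongr
  rcases sgnPow_diff hr0 u v with ⟨h1, h2⟩ | ⟨h1, h2⟩
  · rw [h1, h2]
    have k1 := key |u| |v| (abs_nonneg _) (abs_nonneg _) hu
    have k2 := key |v| |u| (abs_nonneg _) (abs_nonneg _) hv
    rw [abs_sub_comm |v| |u|] at k2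
    exact abs_le.2 ⟨by linarith, k1⟩
  · rw [h1, h2]
    have k1 := key |u| 0 (abs_nonneg _) le_rfl hu
    have k2 := key |v| 0 (abs_nonneg _) le_rfl hv
    rw [Real.zero_rpow hr0.ne', sub_zero, sub_zero, abs_abs] at k1 k2
    linarith

lemma abs_rpow_tangent {p : ℝ} (hp : 1 < p) (x y : ℝ) :
    |x + y| ^ p - |x| ^ p ≤ p * sgnPow (p - 1) (x + y) * y := by
  have e : |x + y| ^ p = sgnPow (p - 1) (x + y) * (x + y) := by
    unfold sgnPow
    rw [mul_assoc, ← abs_mul_abs_self (x + y), ← mul_assoc]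
    rcases (abs_nonneg (x + y)).eq_or_lt with h | h
    · rw [← h, Real.zero_rpow (by linarith)]; simp
    · rw [← Real.rpow_add_one h.ne', ← Real.rpow_add_one h.ne']; congr 1; ring
  -- Young style: |x|^p ≥ tangent at |x+y|
  have h1 := rpow_tangent hp.le (abs_nonneg (x + y)) (abs_nonneg x)
  have h2 : p * |x + y| ^ (p - 1) * (|x + y| - |x|) ≤ p * sgnPow (p - 1) (x + y) * y := by
    have e2 : |x + y| ^ (p - 1) * |x + y| = |x + y| ^ p := by
      rcases (abs_nonneg (x + y)).eq_or_lt with h | h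
      · rw [← h, Real.zero_rpow (by linarith : p ≠ 0)]; simp
      · rw [← Real.rpow_add_one h.ne']; congr 1; ring
    have h3 : sgnPow (p - 1) (x + y) * x ≤ |x + y| ^ (p - 1) * |x| := by
      rw [← abs_sgnPow (by linarith : 0 < p - 1), ← abs_mul]; exact le_abs_self _
    have : |x + y| ^ (p - 1) * (|x + y| - |x|) ≤ sgnPow (p - 1) (x + y) * y := by
      have : sgnPow (p - 1) (x + y) * y
        = sgnPow (p - 1) (x + y) * (x + y) - sgnPow (p - 1) (x + y) * x := by ring
      rw [this, ← e, mul_sub, e2]; linarith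
    rw [mul_assoc, mul_assoc]
    exact mul_le_mul_of_nonneg_left this (by linarith)
  linarith

/-- coefficient of the cross term -/
noncomputable def crossCoef (p l : ℝ) : ℝ := if 2 ≤ p then l else 0

lemma pointwise_ineq (p : ℝ) (hp : 1 < p) : ∃ K : ℝ, 0 < K ∧ ∀ l : ℝ, 0 < l → l ≤ 1 →
    ∀ x y : ℝ, |x + y| ^ p ≤ |x| ^ p + p * (sgnPow (p - 1) x * y)
      + K * (crossCoef p l * (|x| ^ (p - 1) * |y|) + l ^ (-(p - 1)) * |y| ^ p) := by
  -- it is enough to bound the increment of sgnPow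
  suffices H : ∃ K : ℝ, 0 < K ∧ ∀ l : ℝ, 0 < l → l ≤ 1 → ∀ x y : ℝ,
      |sgnPow (p - 1) (x + y) - sgnPow (p - 1) x| ≤
        K * (crossCoef p l * |x| ^ (p - 1) + l ^ (-(p - 1)) * |y| ^ (p - 1)) by
    obtain ⟨K, hK, H⟩ := H
    refine ⟨p * K, by positivity, fun l hl hl1 x y => ?_⟩
    have h1 := abs_rpow_tangent hp x y
    have h2 := H l hl hl1 x y
    have e2 : |y| ^ p = |y| ^ (p - 1) * |y| := by
      rcases (abs_nonneg y).eq_or_lt with h | h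
      · rw [← h, Real.zero_rpow (by linarith : p ≠ 0)]; simp
      · rw [← Real.rpow_add_one h.ne']; congr 1; ring
    have h3 : (sgnPow (p - 1) (x + y) - sgnPow (p - 1) x) * y ≤
        K * (crossCoef p l * |x| ^ (p - 1) + l ^ (-(p - 1)) * |y| ^ (p - 1)) * |y| := by
      refine (le_abs_self _).trans ?_
      rw [abs_mul]
      gcongr
    have h4 := mul_le_mul_of_nonneg_left h3 (by linarith : 0 ≤ p)
    rw [e2]
    calc |x + y| ^ p ≤ |x| ^ p + p * (sgnPow (p - 1) x * y)
          + p * ((sgnPow (p - 1) (x + y) - sgnPow (p - 1) x) * y) := by linarith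
      _ ≤ |x| ^ p + p * (sgnPow (p - 1) x * y) + p * (K * (crossCoef p l * |x| ^ (p - 1)
          + l ^ (-(p - 1)) * |y| ^ (p - 1)) * |y|) := by linarith
      _ = _ := by ring
  have hr : 0 < p - 1 := by linarith
  by_cases h2 : 2 ≤ p
  · have hr1 : 1 ≤ p - 1 := by linarith
    refine ⟨(p - 1) * 2 ^ (p - 1) + 2 * 2 ^ (p - 1), by positivity, fun l hl hl1 x y => ?_⟩
    simp only [crossCoef, h2, if_true]
    set r := p - 1
    have hlr : 1 ≤ l ^ (-r) := Real.one_le_rpow_of_pos_of_le_one_of_nonpos hl hl1 (by linarith)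
    have n1 : 0 ≤ l * |x| ^ r := by positivity
    have n2 : 0 ≤ l ^ (-r) * |y| ^ r := by positivity
    rcases le_total |y| (l * |x|) with h | h
    · have hy : |y| ≤ |x| := h.trans (by nlinarith [abs_nonneg x])
      have h3 := sgnPow_big hr1 (x + y) x (2 * |x|)
        ((abs_add_le _ _).trans (by linarith)) (by linarith [abs_nonneg x])
      rw [add_sub_cancel_left] at h3
      have e2 : |x| ^ (r - 1) * |x| = |x| ^ r := by
        rcases (abs_nonneg x).eq_or_lt with h | h
        · rw [← h, Real.zero_rpow (by linarith : r ≠ 0)]; simp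
        · rw [← Real.rpow_add_one h.ne']; congr 1; ring
      calc _ ≤ _ := h3
        _ ≤ r * (2 * |x|) ^ (r - 1) * (l * |x|) := by gcongr
        _ = r * 2 ^ (r - 1) * (l * (|x| ^ (r - 1) * |x|)) := by
            rw [Real.mul_rpow (by norm_num) (abs_nonneg _)]; ring
        _ = r * 2 ^ (r - 1) * (l * |x| ^ r) := by rw [e2]
        _ ≤ r * 2 ^ r * (l * |x| ^ r) := by
            gcongr
            · norm_num
            · linarith
        _ ≤ (r * 2 ^ r + 2 * 2 ^ r) * (l * |x| ^ r + l ^ (-r) * |y| ^ r) := by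
            gcongr
            · have : (0:ℝ) ≤ 2 * 2 ^ r := by positivity
              linarith
            · linarith
    · have hx : |x| ≤ |y| / l := by rw [le_div_iff₀ hl]; linarith
      have hy' : |y| ≤ |y| / l := by rw [le_div_iff₀ hl]; nlinarith [abs_nonneg y]
      have k1 : |x + y| ^ r ≤ (2 * (|y| / l)) ^ r :=
        Real.rpow_le_rpow (abs_nonneg _) ((abs_add_le _ _).trans (by linarith)) hr.le
      have k2 : |x| ^ r ≤ (2 * (|y| / l)) ^ r :=
        Real.rpow_le_rpow (abs_nonneg _) (by linarith [abs_nonneg x]) hr.le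
      have e : (2 * (|y| / l)) ^ r = 2 ^ r * (l ^ (-r) * |y| ^ r) := by
        rw [Real.mul_rpow (by norm_num) (by positivity), Real.div_rpow (abs_nonneg _) hl.le,
          Real.rpow_neg hl.le]
        ring
      have k3 := abs_sub (sgnPow r (x + y)) (sgnPow r x)
      rw [abs_sgnPow hr, abs_sgnPow hr] at k3
      rw [e] at k1 k2
      calc _ ≤ 2 * 2 ^ r * (l ^ (-r) * |y| ^ r) := by linarith
        _ ≤ (r * 2 ^ r + 2 * 2 ^ r) * (l * |x| ^ r + l ^ (-r) * |y| ^ r) := by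
            gcongr
            · have : (0:ℝ) ≤ r * 2 ^ r := by positivity
              linarith
            · linarith
  · refine ⟨2, by norm_num, fun l hl hl1 x y => ?_⟩
    simp only [crossCoef, h2, if_false, zero_mul, zero_add]
    have h3 := sgnPow_small hr (by linarith) (x + y) x
    rw [add_sub_cancel_left] at h3
    have hlr : 1 ≤ l ^ (-(p - 1)) :=
      Real.one_le_rpow_of_pos_of_le_one_of_nonpos hl hl1 (by linarith)
    have n2 : 0 ≤ |y| ^ (p - 1) := by positivity
    nlinarith

lemma rpow_pred_mul {p a : ℝ} (hp : 1 < p) (ha : 0 ≤ a) : a ^ (p - 1) * a = a ^ p := by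
  rcases ha.eq_or_lt with h | h
  · rw [← h, Real.zero_rpow (by linarith : p ≠ 0)]; simp
  · rw [← Real.rpow_add_one h.ne']; congr 1; ring

lemma cross_le {p a b : ℝ} (hp : 1 < p) (ha : 0 ≤ a) (hb : 0 ≤ b) :
    a ^ (p - 1) * b ≤ a ^ p + b ^ p := by
  have hp0 : 0 ≤ p - 1 := by linarith
  rcases le_total a b with h | h
  · have : a ^ (p - 1) * b ≤ b ^ (p - 1) * b := by gcongr
    rw [rpow_pred_mul hp hb] at this
    have : 0 ≤ a ^ p := by positivity
    linarith
  · have : a ^ (p - 1) * b ≤ a ^ (p - 1) * a := by gcongr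
    rw [rpow_pred_mul hp ha] at this
    have : 0 ≤ b ^ p := by positivity
    linarith

lemma add_rpow_le_two {p a b : ℝ} (hp : 1 < p) (ha : 0 ≤ a) (hb : 0 ≤ b) :
    (a + b) ^ p ≤ 2 ^ p * (a ^ p + b ^ p) := by
  have hp0 : 0 ≤ p := by linarith
  have pa : 0 ≤ a ^ p := by positivity
  have pb : 0 ≤ b ^ p := by positivity
  rcases le_total a b with h | h
  · calc (a + b) ^ p ≤ (2 * b) ^ p := by gcongr; linarith
      _ = 2 ^ p * b ^ p := Real.mul_rpow (by norm_num) hb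
      _ ≤ _ := by gcongr; linarith
  · calc (a + b) ^ p ≤ (2 * a) ^ p := by gcongr; linarith
      _ = 2 ^ p * a ^ p := Real.mul_rpow (by norm_num) ha
      _ ≤ _ := by gcongr; linarith

lemma young_half {p a v c : ℝ} (hp : 1 < p) (ha : 0 ≤ a) (hv : 0 ≤ v) (hc : 0 ≤ c) :
    c * (a ^ (p - 1) * v) ≤ (1 / 2) * a ^ p + (2 * c * v) ^ p := by
  have hp0 : 0 ≤ p - 1 := by linarith
  have pa : 0 ≤ a ^ p := by positivity
  have pb : 0 ≤ (2 * c * v) ^ p := by positivity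
  have e1 := rpow_pred_mul hp ha
  have e2 := rpow_pred_mul hp (by positivity : 0 ≤ 2 * c * v)
  rcases le_total (2 * c * v) a with h | h
  · have : a ^ (p - 1) * (2 * c * v) ≤ a ^ (p - 1) * a := by gcongr
    rw [e1] at this
    nlinarith
  · have : a ^ (p - 1) * (2 * c * v) ≤ (2 * c * v) ^ (p - 1) * (2 * c * v) := by gcongr
    rw [e2] at this
    nlinarith

set_option linter.unusedSectionVars false
section core

variable {Ω : Type} {mΩ : MeasurableSpace Ω} {μ : Measure Ω} [IsProbabilityMeasure μ]

lemma integral_pullout {m : MeasurableSpace Ω} (hm : m ≤ mΩ) {H f : Ω → ℝ}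
    (hH : StronglyMeasurable[m] H) (hHf : Integrable (fun ω => H ω * f ω) μ)
    (hf : Integrable f μ) :
    Integrable (fun ω => H ω * (μ[f | m]) ω) μ ∧
      ∫ ω, H ω * (μ[f | m]) ω ∂μ = ∫ ω, H ω * f ω ∂μ := by
  have h := condExp_mul_of_stronglyMeasurable_left (μ := μ) hH hHf hf
  refine ⟨(integrable_condExp (m := m) (μ := μ) (f := H * f)).congr h, ?_⟩
  rw [← integral_condExp hm (f := fun ω => H ω * f ω)]
  exact (integral_congr_ae h).symm

lemma memLp_int {p : ℝ} (hp : 1 < p) {f : Ω → ℝ} (hf : MemLp f (ENNReal.ofReal p) μ) :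
    Integrable (fun ω => |f ω| ^ p) μ := by
  have := hf.integrable_norm_rpow (by simp; linarith) (by simp)
  rwa [ENNReal.toReal_ofReal (by linarith)] at this

lemma one_le_ofReal {p : ℝ} (hp : 1 < p) : 1 ≤ ENNReal.ofReal p := by
  simp [hp.le]

lemma cross_int {p : ℝ} (hp : 1 < p) {f g h : Ω → ℝ} (hf : MemLp f (ENNReal.ofReal p) μ)
    (hg : MemLp g (ENNReal.ofReal p) μ) (hh : AEStronglyMeasurable h μ)
    (hhf : ∀ ω, |h ω| = |f ω| ^ (p - 1)) :
    Integrable (fun ω => h ω * g ω) μ := by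
  refine ((memLp_int hp hf).add (memLp_int hp hg)).mono' (hh.mul hg.1) (ae_of_all _ fun ω => ?_)
  rw [Real.norm_eq_abs, abs_mul, hhf]
  exact cross_le hp (abs_nonneg _) (abs_nonneg _)

lemma lin_int1 (c d e : ℝ) {f g h : Ω → ℝ} (hf : Integrable f μ) (hg : Integrable g μ)
    (hh : Integrable h μ) :
    ∫ ω, (c * f ω + d * (e * (g ω + h ω))) ∂μ
      = c * ∫ ω, f ω ∂μ + d * (e * (∫ ω, g ω ∂μ + ∫ ω, h ω ∂μ)) := by
  have h1 : Integrable (fun ω => c * f ω) μ := hf.const_mul c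
  have h2 : Integrable (fun ω => g ω + h ω) μ := hg.add hh
  have h3 : Integrable (fun ω => d * (e * (g ω + h ω))) μ := (h2.const_mul e).const_mul d
  rw [integral_add h1 h3, integral_const_mul, integral_const_mul, integral_const_mul,
    integral_add hg hh]

lemma lin_int2 {q K A D E : ℝ} {f a b c d g h : Ω → ℝ} (hf : Integrable f μ)
    (ha : Integrable a μ) (hb : Integrable b μ) (hc : Integrable c μ) (hd : Integrable d μ)
    (hg : Integrable g μ) (hh : Integrable h μ) :
    ∫ ω, (f ω + q * (a ω - b ω) + K * (A * (c ω + d ω) + D * (E * (g ω + h ω)))) ∂μ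
      = ∫ ω, f ω ∂μ + q * (∫ ω, a ω ∂μ - ∫ ω, b ω ∂μ)
        + K * (A * (∫ ω, c ω ∂μ + ∫ ω, d ω ∂μ) + D * (E * (∫ ω, g ω ∂μ + ∫ ω, h ω ∂μ))) := by
  have h1 : Integrable (fun ω => q * (a ω - b ω)) μ := (ha.sub hb).const_mul q
  have h2 : Integrable (fun ω => f ω + q * (a ω - b ω)) μ := hf.add h1
  have h3 : Integrable (fun ω => c ω + d ω) μ := hc.add hd
  have h4 : Integrable (fun ω => A * (c ω + d ω)  + D * (E * (g ω + h ω))) μ :=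
    (h3.const_mul A).add (((hg.add hh).const_mul E).const_mul D)
  rw [integral_add h2 (h4.const_mul K), integral_add hf h1, integral_const_mul,
    integral_sub ha hb, integral_const_mul, lin_int1 A D E h3 hg hh, integral_add hc hd]

/-- compensated sums -/
noncomputable def compSum (μ : Measure Ω) (ℱ : Filtration ℕ mΩ) (Z : ℕ → Ω → ℝ) (k : ℕ) (ω : Ω) : ℝ :=
  ∑ i ∈ Finset.range k, (Z i ω - (μ[Z i | ℱ i]) ω)

variable {ℱ : Filtration ℕ mΩ} {Z : ℕ → Ω → ℝ} {p : ℝ}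

lemma compSum_sm (hZm : ∀ i, StronglyMeasurable[ℱ (i + 1)] (Z i)) (k : ℕ) :
    StronglyMeasurable[ℱ k] (compSum μ ℱ Z k) := by
  unfold compSum
  refine Finset.stronglyMeasurable_fun_sum _ fun i hi => ?_
  have hi := Finset.mem_range.1 hi
  exact ((hZm i).mono (ℱ.mono (by omega))).sub
    (stronglyMeasurable_condExp.mono (ℱ.mono (by omega)))

lemma compSum_memLp (hp : 1 < p) (hZL : ∀ i, MemLp (Z i) (ENNReal.ofReal p) μ) (k : ℕ) :
    MemLp (compSum μ ℱ Z k) (ENNReal.ofReal p) μ := by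
  unfold compSum
  exact memLp_finsetSum _ fun i _ => (hZL i).sub ((hZL i).condExp (one_le_ofReal hp))

lemma compSum_mart (hp : 1 < p) (hZm : ∀ i, StronglyMeasurable[ℱ (i + 1)] (Z i))
    (hZL : ∀ i, MemLp (Z i) (ENNReal.ofReal p) μ) : Martingale (compSum μ ℱ Z) ℱ μ := by
  have hZint : ∀ i, Integrable (Z i) μ := fun i => (hZL i).integrable (one_le_ofReal hp)
  refine martingale_of_condExp_sub_eq_zero_nat (fun k => compSum_sm hZm k)
    (fun k => (compSum_memLp hp hZL k).integrable (one_le_ofReal hp)) fun i => ?_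
  have e : compSum μ ℱ Z (i + 1) - compSum μ ℱ Z i = Z i - μ[Z i | ℱ i] := by
    ext ω
    simp only [compSum, Finset.sum_range_succ, Pi.sub_apply]
    ring
  rw [e]
  refine (condExp_sub (hZint i) integrable_condExp _).trans ?_
  have := condExp_of_stronglyMeasurable (ℱ.le i)
    (stronglyMeasurable_condExp (f := Z i) (μ := μ) (m := ℱ i)) integrable_condExp
  rw [this]
  simp

set_option maxHeartbeats 2000000 in
lemma cross_mono (hp : 2 ≤ p) (hZm : ∀ i, StronglyMeasurable[ℱ (i + 1)] (Z i))
    (hZ0 : ∀ i ω, 0 ≤ Z i ω)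
    (hZL : ∀ i, MemLp (Z i) (ENNReal.ofReal p) μ) {i n : ℕ} (hin : i ≤ n) :
    ∫ ω, |compSum μ ℱ Z i ω| ^ (p - 1) * (μ[Z i | ℱ i]) ω ∂μ ≤
      ∫ ω, |compSum μ ℱ Z n ω| ^ (p - 1) * (μ[Z i | ℱ i]) ω ∂μ := by
  have hp1 : 1 < p := by linarith
  have hM := compSum_memLp (ℱ := ℱ) hp1 hZL n
  have hσ := (hZL i).condExp (m := ℱ i) (one_le_ofReal hp1)
  have hc : Continuous fun x : ℝ => |x| ^ (p - 1) :=
    continuous_abs.rpow_const fun x => Or.inr (by linarith)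
  have hI : Integrable (fun ω => |compSum μ ℱ Z n ω| ^ (p - 1)) μ := by
    have h1 : MemLp (fun _ : Ω => (1 : ℝ)) (ENNReal.ofReal p) μ := memLp_const 1
    have := cross_int hp1 hM h1 (h := fun ω => |compSum μ ℱ Z n ω| ^ (p - 1))
      (hc.comp_aestronglyMeasurable hM.1) (fun ω => abs_of_nonneg (by positivity))
    simpa using this
  have hI2 : Integrable (fun ω => |compSum μ ℱ Z n ω| ^ (p - 1) * (μ[Z i | ℱ i]) ω) μ :=
    cross_int hp1 hM hσ (hc.comp_aestronglyMeasurable hM.1) (fun ω => abs_of_nonneg (by positivity))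
  have hJ : ∀ᵐ ω ∂μ, ‖(μ[compSum μ ℱ Z n | ℱ i]) ω‖ ^ (p - 1) ≤
      (μ[fun ω => |compSum μ ℱ Z n ω| ^ (p - 1) | ℱ i]) ω :=
    Integrable.norm_condExp_rpow_le (m := ℱ i) (μ := μ) (f := compSum μ ℱ Z n)
      (by linarith : 1 ≤ p - 1) (by simpa only [Real.norm_eq_abs] using hI)
  have hmart := (compSum_mart hp1 hZm hZL).condExp_ae_eq hin
  have h0 : 0 ≤ᵐ[μ] μ[Z i | ℱ i] := condExp_nonneg (ae_of_all _ (hZ0 i))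
  have hpo := integral_pullout (μ := μ) (ℱ.le i) (H := μ[Z i | ℱ i])
    (f := fun ω => |compSum μ ℱ Z n ω| ^ (p - 1)) stronglyMeasurable_condExp
    (by simpa [mul_comm] using hI2) hI
  calc _ ≤ ∫ ω, (μ[Z i | ℱ i]) ω * (μ[fun ω => |compSum μ ℱ Z n ω| ^ (p - 1) | ℱ i]) ω ∂μ := by
        refine integral_mono_of_nonneg ?_ hpo.1 ?_
        · filter_upwards [h0] with ω h
          have h : 0 ≤ (μ[Z i | ℱ i]) ω := h
          simp only [Pi.zero_apply]
          positivity
        · filter_upwards [h0, hJ, hmart] with ω h h1 h2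
          have h : 0 ≤ (μ[Z i | ℱ i]) ω := h
          simp only [Real.norm_eq_abs] at h1
          rw [h2] at h1
          rw [mul_comm]
          gcongr
    _ = _ := by
        rw [hpo.2]; simp_rw [mul_comm]

set_option maxHeartbeats 2000000 in
lemma step_bound (hp : 1 < p) (hZm : ∀ i, StronglyMeasurable[ℱ (i + 1)] (Z i))
    (hZ0 : ∀ i ω, 0 ≤ Z i ω)
    (hZL : ∀ i, MemLp (Z i) (ENNReal.ofReal p) μ) {K A D : ℝ} (hK : 0 ≤ K) (hA : 0 ≤ A)
    (hD : 0 ≤ D)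
    (hpt : ∀ x y : ℝ, |x + y| ^ p ≤ |x| ^ p + p * (sgnPow (p - 1) x * y)
      + K * (A * (|x| ^ (p - 1) * |y|) + D * |y| ^ p)) (k : ℕ) :
    ∫ ω, |compSum μ ℱ Z (k + 1) ω| ^ p ∂μ ≤ ∫ ω, |compSum μ ℱ Z k ω| ^ p ∂μ
      + K * (A * (2 * ∫ ω, |compSum μ ℱ Z k ω| ^ (p - 1) * (μ[Z k | ℱ k]) ω ∂μ)
        + D * (2 ^ p * (2 * ∫ ω, |Z k ω| ^ p ∂μ))) := by
  have hr : 0 < p - 1 := by linarith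
  set M := compSum μ ℱ Z k with hMdef
  set σ := μ[Z k | ℱ k] with hσdef
  have hM : MemLp M (ENNReal.ofReal p) μ := compSum_memLp hp hZL k
  have hMs : StronglyMeasurable[ℱ k] M := compSum_sm hZm k
  have hσ : MemLp σ (ENNReal.ofReal p) μ := (hZL k).condExp (one_le_ofReal hp)
  have hZi : Integrable (Z k) μ := (hZL k).integrable (one_le_ofReal hp)
  have h0 : 0 ≤ᵐ[μ] σ := condExp_nonneg (ae_of_all _ (hZ0 k))
  have hc : Continuous fun x : ℝ => |x| ^ (p - 1) :=
    continuous_abs.rpow_const fun x => Or.inr hr.le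
  have hms : Measurable (sgnPow (p - 1)) := by unfold sgnPow; fun_prop
  -- strongly measurable wrt ℱ k
  have hA1 : StronglyMeasurable[ℱ k] (fun ω => |M ω| ^ (p - 1)) := hc.comp_stronglyMeasurable hMs
  have hA2 : StronglyMeasurable[ℱ k] (fun ω => sgnPow (p - 1) (M ω)) :=
    (hms.comp hMs.measurable).stronglyMeasurable
  have hA1' := (hA1.mono (ℱ.le k)).aestronglyMeasurable (μ := μ)
  have hA2' := (hA2.mono (ℱ.le k)).aestronglyMeasurable (μ := μ)
  have a1 : ∀ ω, |(|M ω| ^ (p - 1))| = |M ω| ^ (p - 1) := fun ω => abs_of_nonneg (by positivity)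
  have a2 : ∀ ω, |sgnPow (p - 1) (M ω)| = |M ω| ^ (p - 1) := fun ω => abs_sgnPow hr _
  have i1 := cross_int hp hM (hZL k) hA1' a1
  have i2 := cross_int hp hM (hZL k) hA2' a2
  have i3 := cross_int hp hM hσ hA1' a1
  have i4 := cross_int hp hM hσ hA2' a2
  have e1 := (integral_pullout (ℱ.le k) hA1 i1 hZi).2
  have e2 := (integral_pullout (ℱ.le k) hA2 i2 hZi).2
  have iM := memLp_int hp hM
  have iZ := memLp_int hp (hZL k)
  have iσ := memLp_int hp hσ
  have hσZ : ∫ ω, |σ ω| ^ p ∂μ ≤ ∫ ω, |Z k ω| ^ p ∂μ := by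
    have := integral_norm_condExp_rpow_le (m := ℱ k) hp.le (f := Z k) (μ := μ) iZ
    simpa using this
  have iR : Integrable (fun ω => |M ω| ^ p
      + p * (sgnPow (p - 1) (M ω) * Z k ω - sgnPow (p - 1) (M ω) * σ ω)
      + K * (A * (|M ω| ^ (p - 1) * Z k ω + |M ω| ^ (p - 1) * σ ω)
        + D * (2 ^ p * (|Z k ω| ^ p + |σ ω| ^ p)))) μ :=
    (iM.add ((i2.sub i4).const_mul p)).add
      ((((i1.add i3).const_mul A).add (((iZ.add iσ).const_mul _).const_mul D)).const_mul K)
  calc ∫ ω, |compSum μ ℱ Z (k + 1) ω| ^ p ∂μ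
      ≤ ∫ ω, (|M ω| ^ p
      + p * (sgnPow (p - 1) (M ω) * Z k ω - sgnPow (p - 1) (M ω) * σ ω)
      + K * (A * (|M ω| ^ (p - 1) * Z k ω + |M ω| ^ (p - 1) * σ ω)
        + D * (2 ^ p * (|Z k ω| ^ p + |σ ω| ^ p)))) ∂μ := by
        refine integral_mono_of_nonneg (ae_of_all _ fun ω => by positivity) iR ?_
        filter_upwards [h0] with ω h
        have h : 0 ≤ σ ω := h
        have e : compSum μ ℱ Z (k + 1) ω = M ω + (Z k ω - σ ω) := by
          simp only [hMdef, hσdef, compSum, Finset.sum_range_succ]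
        rw [e]
        refine (hpt _ _).trans ?_
        have hY : |Z k ω - σ ω| ≤ |Z k ω| + |σ ω| := abs_sub _ _
        have hY2 : |Z k ω - σ ω| ^ p ≤ 2 ^ p * (|Z k ω| ^ p + |σ ω| ^ p) :=
          (Real.rpow_le_rpow (abs_nonneg _) hY (by linarith)).trans
            (add_rpow_le_two hp (abs_nonneg _) (abs_nonneg _))
        have hY3 : |M ω| ^ (p - 1) * |Z k ω - σ ω| ≤
            |M ω| ^ (p - 1) * Z k ω + |M ω| ^ (p - 1) * σ ω := by
          rw [← mul_add]
          rw [abs_of_nonneg (hZ0 k ω), abs_of_nonneg h] at hY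
          gcongr
        rw [mul_sub]
        gcongr
    _ = ∫ ω, |M ω| ^ p ∂μ + K * (A * (2 * ∫ ω, |M ω| ^ (p - 1) * σ ω ∂μ)
        + D * (2 ^ p * (∫ ω, |Z k ω| ^ p ∂μ + ∫ ω, |σ ω| ^ p ∂μ))) := by
        rw [lin_int2 iM i2 i4 i1 i3 iZ iσ, ← e1, ← e2]
        ring
    _ ≤ _ := by
        gcongr
        linarith

set_option maxHeartbeats 2000000 in
lemma core_bound (hp : 1 < p) : ∃ C : ℝ, 0 < C ∧
    ∀ (Ω : Type) (mΩ : MeasurableSpace Ω) (μ : Measure Ω), IsProbabilityMeasure μ →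
    ∀ (ℱ : Filtration ℕ mΩ) (Z : ℕ → Ω → ℝ), (∀ i, StronglyMeasurable[ℱ (i + 1)] (Z i)) →
    (∀ i ω, 0 ≤ Z i ω) → (∀ i, MemLp (Z i) (ENNReal.ofReal p) μ) →
    ∀ (n : ℕ) (N : ℝ), N = ∑ i ∈ Finset.range n, ∫ ω, |Z i ω| ^ p ∂μ
      + ∫ ω, |∑ i ∈ Finset.range n, (μ[Z i | ℱ i]) ω - 1| ^ p ∂μ → N ≤ 1 →
    ∀ l : ℝ, 0 < l → l ≤ 1 →
    ∫ ω, |compSum μ ℱ Z n ω| ^ p ∂μ ≤ C * (l ^ p + l ^ (-(p - 1)) * N) := by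
  obtain ⟨K, hK, hpt⟩ := pointwise_ineq p hp
  refine ⟨2 * ((4 * K) ^ p * (2 ^ p * 2)) + 2 * (K * (2 ^ p * 2)), by positivity, ?_⟩
  intro Ω mΩ μ hμ ℱ Z hZm hZ0 hZL n N hN hN1 l hl hl1
  set A := crossCoef p l with hAdef
  have hA : 0 ≤ A := by rw [hAdef]; unfold crossCoef; split_ifs <;> linarith
  have hAl : A ≤ l := by rw [hAdef]; unfold crossCoef; split_ifs <;> linarith
  set D := l ^ (-(p - 1)) with hDdef
  have hD : 0 ≤ D := by positivity
  set M := compSum μ ℱ Z n with hMdef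
  have hM : MemLp M (ENNReal.ofReal p) μ := compSum_memLp hp hZL n
  have hσ : ∀ i, MemLp (μ[Z i | ℱ i]) (ENNReal.ofReal p) μ :=
    fun i => (hZL i).condExp (one_le_ofReal hp)
  have hc : Continuous fun x : ℝ => |x| ^ (p - 1) :=
    continuous_abs.rpow_const fun x => Or.inr (by linarith)
  have hI : ∀ i, Integrable (fun ω => |M ω| ^ (p - 1) * (μ[Z i | ℱ i]) ω) μ := fun i =>
    cross_int hp hM (hσ i) (hc.comp_aestronglyMeasurable hM.1)
      (fun ω => abs_of_nonneg (by positivity))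
  have ind : ∀ k ≤ n, ∫ ω, |compSum μ ℱ Z k ω| ^ p ∂μ ≤ ∑ i ∈ Finset.range k,
      K * (A * (2 * ∫ ω, |M ω| ^ (p - 1) * (μ[Z i | ℱ i]) ω ∂μ)
        + D * (2 ^ p * (2 * ∫ ω, |Z i ω| ^ p ∂μ))) := by
    intro k
    induction k with
    | zero => intro _; simp [compSum, Real.zero_rpow (by linarith : p ≠ 0)]
    | succ k ih =>
      intro hk
      rw [Finset.sum_range_succ]
      refine (step_bound hp hZm hZ0 hZL hK.le hA hD (hpt l hl hl1) k).trans ?_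
      have h1 := ih (by omega)
      have h2 : A * (2 * ∫ ω, |compSum μ ℱ Z k ω| ^ (p - 1) * (μ[Z k | ℱ k]) ω ∂μ) ≤
          A * (2 * ∫ ω, |M ω| ^ (p - 1) * (μ[Z k | ℱ k]) ω ∂μ) := by
        by_cases h2 : 2 ≤ p
        · have := cross_mono (μ := μ) (ℱ := ℱ) h2 hZm hZ0 hZL (by omega : k ≤ n)
          gcongr
        · have : A = 0 := by rw [hAdef]; simp [crossCoef, h2]
          simp [this]
      gcongr
  have h1 := ind n le_rfl
  set V : Ω → ℝ := fun ω => ∑ i ∈ Finset.range n, (μ[Z i | ℱ i]) ω with hVdef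
  have hV : MemLp V (ENNReal.ofReal p) μ := memLp_finsetSum _ fun i _ => hσ i
  have hV1 : MemLp (fun ω => V ω - 1) (ENNReal.ofReal p) μ := hV.sub (memLp_const 1)
  have hV0 : ∀ᵐ ω ∂μ, 0 ≤ V ω := by
    have : ∀ i, 0 ≤ᵐ[μ] μ[Z i | ℱ i] := fun i => condExp_nonneg (ae_of_all _ (hZ0 i))
    filter_upwards [ae_all_iff.2 this] with ω h
    exact Finset.sum_nonneg fun i _ => h i
  have hIV : Integrable (fun ω => |M ω| ^ (p - 1) * V ω) μ :=
    cross_int hp hM hV (hc.comp_aestronglyMeasurable hM.1) (fun ω => abs_of_nonneg (by positivity))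
  have iM := memLp_int hp hM
  have iV := memLp_int hp hV
  have iV1 := memLp_int hp hV1
  set Q := ∑ i ∈ Finset.range n, ∫ ω, |Z i ω| ^ p ∂μ with hQ
  have e1 : ∑ i ∈ Finset.range n,
      K * (A * (2 * ∫ ω, |M ω| ^ (p - 1) * (μ[Z i | ℱ i]) ω ∂μ)
        + D * (2 ^ p * (2 * ∫ ω, |Z i ω| ^ p ∂μ)))
      = (∫ ω, (2 * K * A) * (|M ω| ^ (p - 1) * V ω) ∂μ) + K * (D * (2 ^ p * (2 * Q))) := by
    have : ∫ ω, |M ω| ^ (p - 1) * V ω ∂μ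
        = ∑ i ∈ Finset.range n, ∫ ω, |M ω| ^ (p - 1) * (μ[Z i | ℱ i]) ω ∂μ := by
      rw [← integral_finsetSum _ fun i _ => hI i]
      simp [hVdef, Finset.mul_sum]
    rw [integral_const_mul, this, hQ]
    simp only [Finset.mul_sum, mul_add, Finset.sum_add_distrib]
    congr 1
    refine Finset.sum_congr rfl fun i _ => by ring
  rw [e1] at h1
  have h2 : ∫ ω, (2 * K * A) * (|M ω| ^ (p - 1) * V ω) ∂μ ≤
      ∫ ω, ((1 / 2) * |M ω| ^ p + (4 * K * l) ^ p * (2 ^ p * (|V ω - 1| ^ p + 1))) ∂μ := by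
    refine integral_mono_ae (hIV.const_mul _)
      ((iM.const_mul _).add (((iV1.add (integrable_const 1)).const_mul _).const_mul _)) ?_
    filter_upwards [hV0] with ω h
    refine (young_half hp (abs_nonneg _) h (by positivity)).trans ?_
    have t1 : (2 * (2 * K * A) * V ω) ^ p ≤ (4 * K * l * V ω) ^ p := by
      apply Real.rpow_le_rpow (by positivity) _ (by linarith)
      apply mul_le_mul_of_nonneg_right _ h
      nlinarith
    have t2 : (V ω) ^ p ≤ 2 ^ p * (|V ω - 1| ^ p + 1) := by
      have := add_rpow_le_two hp (abs_nonneg (V ω - 1)) zero_le_one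
      rw [Real.one_rpow] at this
      refine le_trans (Real.rpow_le_rpow h ?_ (by linarith)) this
      linarith [le_abs_self (V ω - 1)]
    rw [Real.mul_rpow (x := 4 * K * l) (by positivity) h] at t1
    have t3 := mul_le_mul_of_nonneg_left t2 (by positivity : 0 ≤ (4 * K * l) ^ p)
    linarith
  have e2 : ∫ ω, ((1 / 2) * |M ω| ^ p + (4 * K * l) ^ p * (2 ^ p * (|V ω - 1| ^ p + 1))) ∂μ
      = (1 / 2) * ∫ ω, |M ω| ^ p ∂μ
        + (4 * K * l) ^ p * (2 ^ p * (∫ ω, |V ω - 1| ^ p ∂μ + 1)) := by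
    have := lin_int1 (1 / 2) ((4 * K * l) ^ p) (2 ^ p) iM iV1 (integrable_const 1)
    simpa using this
  rw [e2] at h2
  have hQ0 : 0 ≤ Q := Finset.sum_nonneg fun i _ => integral_nonneg fun ω => by positivity
  have hW0 : 0 ≤ ∫ ω, |V ω - 1| ^ p ∂μ := integral_nonneg fun ω => by positivity
  have hN' : N = Q + ∫ ω, |V ω - 1| ^ p ∂μ := hN
  have hW1 : ∫ ω, |V ω - 1| ^ p ∂μ + 1 ≤ 2 := by linarith
  have hQN : Q ≤ N := by linarith
  have b1 : (4 * K * l) ^ p * (2 ^ p * (∫ ω, |V ω - 1| ^ p ∂μ + 1))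
      ≤ (4 * K) ^ p * (2 ^ p * 2) * l ^ p := by
    rw [Real.mul_rpow (by positivity) hl.le]
    calc _ ≤ (4 * K) ^ p * l ^ p * (2 ^ p * 2) := by gcongr
      _ = _ := by ring
  have b2 : K * (D * (2 ^ p * (2 * Q))) ≤ K * (2 ^ p * 2) * (D * N) := by
    calc _ ≤ K * (D * (2 ^ p * (2 * N))) := by gcongr
      _ = _ := by ring
  have hN0 : 0 ≤ N := by linarith
  set c1 := (4 * K) ^ p * (2 ^ p * 2)
  set c2 := K * (2 ^ p * 2)
  have c1p : 0 ≤ c1 := by positivity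
  have c2p : 0 ≤ c2 := by positivity
  have lp : 0 ≤ l ^ p := by positivity
  have x1 : 0 ≤ c1 * (D * N) := by positivity
  have x2 : 0 ≤ c2 * l ^ p := by positivity
  change ∫ ω, |M ω| ^ p ∂μ ≤ _
  have : (2 * c1 + 2 * c2) * (l ^ p + D * N)
    = 2 * (c1 * l ^ p) + 2 * (c2 * (D * N)) + 2 * (c1 * (D * N)) + 2 * (c2 * l ^ p) := by ring
  rw [this]
  linarith

end core

lemma optimise {p C N B : ℝ} (hp : 1 < p) (hC : 0 < C) (hN0 : 0 ≤ N) (hN1 : N ≤ 1)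
    (h : ∀ l : ℝ, 0 < l → l ≤ 1 → B ≤ C * (l ^ p + l ^ (-(p - 1)) * N)) :
    B ≤ 2 * C * N ^ ((p + 1) / (2 * p + 1)) := by
  rcases hN0.eq_or_lt with h0 | h0
  · subst h0
    rw [Real.zero_rpow (by positivity), mul_zero]
    by_contra hB
    push Not at hB
    set l := min 1 (B / (2 * C)) with hl
    have l0 : 0 < l := by rw [hl]; positivity
    have l1 : l ≤ 1 := min_le_left _ _
    have l2 : l ≤ B / (2 * C) := min_le_right _ _
    have h1 := h l l0 l1
    rw [mul_zero, add_zero] at h1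
    have h2 : l ^ p ≤ l ^ (1 : ℝ) := Real.rpow_le_rpow_of_exponent_ge l0 l1 hp.le
    rw [Real.rpow_one] at h2
    rw [le_div_iff₀ (by positivity)] at l2
    nlinarith
  · have hq : 0 < 2 * p - 1 := by linarith
    have h1 := h (N ^ (1 / (2 * p - 1))) (by positivity)
      (Real.rpow_le_one hN0 hN1 (by positivity))
    have e1 : (N ^ (1 / (2 * p - 1))) ^ p = N ^ (p / (2 * p - 1)) := by
      rw [← Real.rpow_mul hN0]; congr 1; ring
    have e2 : (N ^ (1 / (2 * p - 1))) ^ (-(p - 1)) * N = N ^ (p / (2 * p - 1)) := by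
      rw [← Real.rpow_mul hN0, ← Real.rpow_add_one h0.ne']
      congr 1
      field_simp
      ring
    rw [e1, e2] at h1
    have h2 : N ^ (p / (2 * p - 1)) ≤ N ^ ((p + 1) / (2 * p + 1)) := by
      apply Real.rpow_le_rpow_of_exponent_ge h0 hN1
      rw [div_le_div_iff₀ (by linarith) hq]
      nlinarith
    nlinarith

lemma sum_Icc_shift (n : ℕ) (f : ℕ → ℝ) :
    ∑ i ∈ Finset.Icc 1 n, f i = ∑ i ∈ Finset.range n, f (i + 1) := by
  induction n with
  | zero => simp
  | succ n ih => rw [Finset.sum_Icc_succ_top (by omega), ih, Finset.sum_range_succ]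

lemma abs_sq_rpow (x p : ℝ) : |x ^ 2| ^ p = |x| ^ (2 * p) := by
  rw [abs_pow, Real.rpow_mul (abs_nonneg x), Real.rpow_two]

set_option maxHeartbeats 2000000 in
theorem stmt15 (p : ℝ) (hp : 1 < p) :
    ∃ C : ℝ, 0 < C ∧
      ∀ (Ω : Type) (mΩ : MeasurableSpace Ω) (μ : Measure Ω),
        IsProbabilityMeasure μ →
        ∀ (ℱ : Filtration ℕ mΩ), ℱ 0 = ⊥ →
        ∀ (n : ℕ) (X : ℕ → Ω → ℝ), X 0 = 0 →
        (∀ i, StronglyMeasurable[ℱ i] (X i)) →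
        (∀ i, Integrable (X i) μ) →
        (∀ i ∈ Finset.Icc 1 n, μ[X i | ℱ (i - 1)] =ᵐ[μ] (0 : Ω → ℝ)) →
        ∀ (S : ℕ → Ω → ℝ), (∀ k ω, S k ω = ∑ i ∈ Finset.Icc 1 k, X i ω) →
        ∀ (QV CV : Ω → ℝ),
          (∀ ω, QV ω = ∑ i ∈ Finset.Icc 1 n, (X i ω) ^ 2) →
          (∀ ω, CV ω = ∑ i ∈ Finset.Icc 1 n, (μ[fun ω' => (X i ω') ^ 2 | ℱ (i - 1)]) ω) →
        (∫ ω, (S n ω) ^ 2 ∂μ) = 1 →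
        (∀ i ∈ Finset.Icc 1 n, Integrable (fun ω => |X i ω| ^ (2 * p)) μ) →
        ∀ (N : ℝ),
          N = (∑ i ∈ Finset.Icc 1 n, ∫ ω, |X i ω| ^ (2 * p) ∂μ) + (∫ ω, |CV ω - 1| ^ p ∂μ) →
      N ≤ 1 →
      ∀ ε : ℝ, 0 < ε →
        (μ {ω | ε ≤ |QV ω - 1|}).toReal ≤ C * ε ^ (-p) * N ^ ((p + 1) / (2 * p + 1)) := by
  obtain ⟨C, hC, hcore⟩ := core_bound hp
  refine ⟨2 ^ p * (2 * C + 1), by positivity, ?_⟩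
  intro Ω mΩ μ hμ ℱ _ n X _ hXm _ _ S _ QV CV hQV hCV _ hXp N hN hN1 ε hε
  set Z : ℕ → Ω → ℝ := fun i => if i < n then fun ω => X (i + 1) ω ^ 2 else 0 with hZ
  have hZlt : ∀ i, i < n → Z i = fun ω => X (i + 1) ω ^ 2 := fun i hi => by simp [hZ, hi]
  have hZge : ∀ i, ¬ i < n → Z i = 0 := fun i hi => by simp [hZ, hi]
  have hZm : ∀ i, StronglyMeasurable[ℱ (i + 1)] (Z i) := by
    intro i
    by_cases hi : i < n
    · rw [hZlt i hi]; exact (hXm (i + 1)).pow 2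
    · rw [hZge i hi]; exact stronglyMeasurable_zero
  have hZ0 : ∀ i ω, 0 ≤ Z i ω := by
    intro i ω
    by_cases hi : i < n
    · rw [hZlt i hi]; positivity
    · rw [hZge i hi]; simp
  have hZL : ∀ i, MemLp (Z i) (ENNReal.ofReal p) μ := by
    intro i
    by_cases hi : i < n
    · rw [← integrable_norm_rpow_iff ((hZm i).mono (ℱ.le _)).aestronglyMeasurable
        (by simp; linarith) (by simp), ENNReal.toReal_ofReal (by linarith), hZlt i hi]
      simp only [Real.norm_eq_abs, abs_sq_rpow]
      exact hXp (i + 1) (by simp; omega)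
    · rw [hZge i hi]; exact MemLp.zero
  have hCV' : ∀ ω, CV ω = ∑ i ∈ Finset.range n, (μ[Z i | ℱ i]) ω := by
    intro ω
    rw [hCV, sum_Icc_shift]
    refine Finset.sum_congr rfl fun i hi => ?_
    rw [hZlt i (Finset.mem_range.1 hi)]
    rfl
  have hQV' : ∀ ω, QV ω - 1 = compSum μ ℱ Z n ω + (CV ω - 1) := by
    intro ω
    have : QV ω = ∑ i ∈ Finset.range n, Z i ω := by
      rw [hQV, sum_Icc_shift]
      refine Finset.sum_congr rfl fun i hi => ?_
      rw [hZlt i (Finset.mem_range.1 hi)]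
    rw [this, hCV', compSum, Finset.sum_sub_distrib]
    ring
  have hN' : N = ∑ i ∈ Finset.range n, ∫ ω, |Z i ω| ^ p ∂μ
      + ∫ ω, |∑ i ∈ Finset.range n, (μ[Z i | ℱ i]) ω - 1| ^ p ∂μ := by
    rw [hN, sum_Icc_shift]
    simp only [hCV']
    congr 1
    refine Finset.sum_congr rfl fun i hi => ?_
    rw [hZlt i (Finset.mem_range.1 hi)]
    simp only [abs_sq_rpow]
  have hCVp : 0 ≤ ∫ ω, |CV ω - 1| ^ p ∂μ := integral_nonneg fun ω => by positivity
  have hsum : 0 ≤ ∑ i ∈ Finset.Icc 1 n, ∫ ω, |X i ω| ^ (2 * p) ∂μ :=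
    Finset.sum_nonneg fun i _ => integral_nonneg fun ω => by positivity
  have hN0 : 0 ≤ N := by linarith
  have hB := optimise hp hC hN0 hN1 (hcore Ω mΩ μ hμ ℱ Z hZm hZ0 hZL n N hN' hN1)
  have hMp : MemLp (compSum μ ℱ Z n) (ENNReal.ofReal p) μ := compSum_memLp hp hZL n
  have hCVm : MemLp (fun ω => CV ω - 1) (ENNReal.ofReal p) μ := by
    have e : CV = fun ω => ∑ i ∈ Finset.range n, (μ[Z i | ℱ i]) ω := funext hCV'
    have h1 : ∀ i ∈ Finset.range n, MemLp (fun ω => (μ[Z i | ℱ i]) ω) (ENNReal.ofReal p) μ :=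
      fun i _ => (hZL i).condExp (one_le_ofReal hp)
    have h2 : MemLp CV (ENNReal.ofReal p) μ := by
      rw [e]
      exact memLp_finsetSum _ h1
    have h3 : MemLp (fun _ : Ω => (1 : ℝ)) (ENNReal.ofReal p) μ := memLp_const 1
    exact h2.sub h3
  have iM := memLp_int hp hMp
  have iC := memLp_int hp hCVm
  have iQ : Integrable (fun ω => |QV ω - 1| ^ p) μ := by
    have : (fun ω => QV ω - 1) = compSum μ ℱ Z n + fun ω => CV ω - 1 := funext hQV'
    have h := memLp_int hp (hMp.add hCVm)
    rw [← this] at h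
    exact h
  have hE : ∫ ω, |QV ω - 1| ^ p ∂μ ≤ 2 ^ p * (2 * C + 1) * N ^ ((p + 1) / (2 * p + 1)) := by
    calc ∫ ω, |QV ω - 1| ^ p ∂μ
        ≤ ∫ ω, 2 ^ p * (|compSum μ ℱ Z n ω| ^ p + |CV ω - 1| ^ p) ∂μ := by
          refine integral_mono iQ ((iM.add iC).const_mul _) fun ω => ?_
          simp only [hQV']
          exact (Real.rpow_le_rpow (abs_nonneg _) (abs_add_le _ _) (by linarith)).trans
            (add_rpow_le_two hp (abs_nonneg _) (abs_nonneg _))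
      _ = 2 ^ p * (∫ ω, |compSum μ ℱ Z n ω| ^ p ∂μ + ∫ ω, |CV ω - 1| ^ p ∂μ) := by
          rw [integral_const_mul, integral_add iM iC]
      _ ≤ 2 ^ p * (2 * C * N ^ ((p + 1) / (2 * p + 1)) + N ^ ((p + 1) / (2 * p + 1))) := by
          have : N ≤ N ^ ((p + 1) / (2 * p + 1)) := by
            apply Real.self_le_rpow_of_le_one hN0 hN1
            rw [div_le_one (by linarith)]; linarith
          gcongr
          linarith
      _ = _ := by ring
  have hmk := mul_meas_ge_le_integral_of_nonneg (μ := μ) (f := fun ω => |QV ω - 1| ^ p) (ae_of_all _ fun ω => by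
    simp only [Pi.zero_apply]; positivity) iQ
    (ε ^ p)
  have hset : {ω | ε ≤ |QV ω - 1|} ⊆ {ω | ε ^ p ≤ |QV ω - 1| ^ p} := fun ω hω =>
    Real.rpow_le_rpow hε.le hω (by linarith)
  have hmono : (μ {ω | ε ≤ |QV ω - 1|}).toReal ≤ μ.real {ω | ε ^ p ≤ |QV ω - 1| ^ p} :=
    measureReal_mono hset
  have hεp : 0 < ε ^ p := by positivity
  refine hmono.trans ?_
  rw [Real.rpow_neg hε.le, mul_right_comm, ← div_eq_mul_inv, le_div_iff₀ hεp]
  linarith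
end
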